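/- arXiv:2404.09295 — 2 statements merged into one kernel-verified Lean document; each statement's English description precedes it below -/
import Mathlib

section
/- Fix a positive integer r, a real number c₀ with 0 < c₀ < 1, and a real number η > 0. Then there exist constants c > 0 and P, depending only on (r, c₀, η), such that: for every prime p ≥ P; for all real numbers M, N ≥ 1 satisfying M⁴·N² ≥ p^{1 + 1/r + η}; and for all sets ℳ, 𝒩 of integers with ℳ ⊆ [M, 2M] ∩ [1, p], 𝒩 ⊆ [N, 2N] ∩ [1, p], #ℳ ≥ c₀·M, and #𝒩 ≥ c₀·N; setting K = ⌊p^{1 + 1/r + η}·(M·N)^{−2} + p^η⌋, the number of triples (m, n, k) with m ∈ ℳ, n ∈ 𝒩, k a positive integer with k ≤ K, and m·n + k a quadratic residue modulo p, is at least c·K·M·N. -/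
open Finset

/-- An integer `x` is a quadratic residue modulo the prime `p`. -/
def IsQuadRes (p : ℕ) (x : ℤ) : Prop :=
  ¬ ((p : ℤ) ∣ x) ∧ ∃ y : ℤ, y ^ 2 ≡ x [ZMOD (p : ℤ)]

section Stepanov
open Polynomial

variable {p : ℕ} [Fact p.Prime]

/-- elementary operator -/
noncomputable def stepT (f : (ZMod p)[X]) (n : ℕ) : (ZMod p)[X] →ₗ[ZMod p] (ZMod p)[X] :=
  LinearMap.mulLeft (ZMod p) ((n : (ZMod p)[X]) * derivative f) +
    (LinearMap.mulLeft (ZMod p) f).comp derivative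

lemma stepT_apply (f r : (ZMod p)[X]) (n : ℕ) :
    stepT f n r = (n : (ZMod p)[X]) * derivative f * r + f * derivative r := by
  simp [stepT, mul_assoc]

/-- iterated operator -/
noncomputable def stepR (f : (ZMod p)[X]) (n : ℕ) : ℕ → ((ZMod p)[X] →ₗ[ZMod p] (ZMod p)[X])
  | 0 => LinearMap.id
  | (k+1) => (stepT f (n - k)).comp (stepR f n k)

lemma stepR_natDegree (f r : (ZMod p)[X]) (n m d k : ℕ) (hf : f.natDegree ≤ m)
    (hr : r.natDegree ≤ d) : (stepR f n k r).natDegree ≤ d + k * m := by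
  induction k with
  | zero => simpa [stepR] using hr
  | succ k ih =>
    simp only [stepR, LinearMap.comp_apply, stepT_apply]
    set q := stepR f n k r
    have h1 : (derivative f).natDegree ≤ m := (natDegree_derivative_le f).trans (by omega)
    have h2 : (derivative q).natDegree ≤ d + k * m := (natDegree_derivative_le q).trans (by omega)
    refine natDegree_add_le_of_degree_le ?_ ?_
    · refine natDegree_mul_le.trans ?_
      have := natDegree_mul_le (p := (n - k : ℕ)) (q := derivative f)
      rw [natDegree_natCast] at this
      rw [add_mul, one_mul]; omega
    · refine natDegree_mul_le.trans ?_
      rw [add_mul, one_mul]; omega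

lemma stepR_deriv (f r : (ZMod p)[X]) (n j k : ℕ) (hk : k ≤ n) :
    derivative^[k] (f ^ n * r * X ^ (j * p)) = f ^ (n - k) * stepR f n k r * X ^ (j * p) := by
  induction k with
  | zero => simp [stepR]
  | succ k ih =>
    rw [Function.iterate_succ_apply', ih (by omega)]
    simp only [stepR, LinearMap.comp_apply, stepT_apply]
    set q := stepR f n k r
    obtain ⟨e, he⟩ : ∃ e, n - k = e + 1 := ⟨n - k - 1, by omega⟩
    have he' : n - (k + 1) = e := by omega
    rw [he, he']
    have hX : derivative (X ^ (j * p) : (ZMod p)[X]) = 0 := by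
      rw [derivative_X_pow]; simp
    rw [derivative_mul, hX, derivative_mul, derivative_pow]
    simp only [map_natCast, Nat.add_sub_cancel]
    ring

lemma step_sq_false (f r s : (ZMod p)[X]) (c : ZMod p) (hc : c ≠ 0)
    (a : ZMod p) (ha : f.rootMultiplicity a = 1) (h : r ^ 2 * f = C c * s ^ 2) :
    r = 0 ∧ s = 0 := by
  have hf : f ≠ 0 := by rintro rfl; simp at ha
  have hC : (C c : (ZMod p)[X]) ≠ 0 := by simpa using hc
  by_cases hr : r = 0
  · subst hr
    have : C c * s ^ 2 = 0 := by rw [← h]; ring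
    have := (mul_eq_zero.1 this).resolve_left hC
    exact ⟨rfl, by simpa using this⟩
  by_cases hs : s = 0
  · subst hs
    have : r ^ 2 * f = 0 := by rw [h]; ring
    have := (mul_eq_zero.1 this).resolve_right hf
    exact ⟨by simpa using this, rfl⟩
  exfalso
  have h1 := congrArg (rootMultiplicity a) h
  rw [rootMultiplicity_mul (by positivity), rootMultiplicity_mul (by positivity), pow_two, pow_two,
    rootMultiplicity_mul (by positivity), rootMultiplicity_mul (by positivity), rootMultiplicity_C, ha] at h1
  omega

lemma step_nonvanish (hp2 : p ≠ 2) (f : (ZMod p)[X]) (m d J : ℕ) (hf : f.natDegree ≤ m) (h0 : f.eval 0 ≠ 0)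
    (a : ZMod p) (ha : f.rootMultiplicity a = 1) (hd : 2 * d + m < p)
    (r s : Fin J → (ZMod p)[X]) (hr : ∀ j, (r j).natDegree ≤ d) (hs : ∀ j, (s j).natDegree ≤ d)
    (h : ∑ j : Fin J, (r j + f ^ ((p - 1) / 2) * s j) * X ^ ((j : ℕ) * p) = 0) :
    ∀ j, r j = 0 ∧ s j = 0 := by
  have hp := (Fact.out : p.Prime)
  have hcop : 2 * ((p - 1) / 2) + 1 = p := by
    have := hp.odd_of_ne_two hp2
    obtain ⟨t, ht⟩ := this
    omega
  set g := f ^ ((p - 1) / 2) with hg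
  have key : ∀ n : ℕ, ∀ j : Fin J, (j : ℕ) = n → r j = 0 ∧ s j = 0 := by
    intro n
    induction n using Nat.strong_induction_on with
    | _ n ih =>
    intro j hj
    have h1 : (X ^ (n * p) * X ^ p : (ZMod p)[X]) ∣ X ^ (n * p) * (r j + g * s j) := by
      rw [← Finset.add_sum_erase _ _ (Finset.mem_univ j), hj] at h
      have h2 : (X ^ (n * p) * X ^ p : (ZMod p)[X]) ∣
          ∑ i ∈ Finset.univ.erase j, (r i + g * s i) * X ^ ((i : ℕ) * p) := by
        refine Finset.dvd_sum fun i hi => ?_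
        have hij : i ≠ j := Finset.ne_of_mem_erase hi
        rcases lt_trichotomy (i : ℕ) n with hlt | heq | hgt
        · obtain ⟨e1, e2⟩ := ih i hlt i rfl
          simp [e1, e2]
        · exact absurd (Fin.ext (heq.trans hj.symm)) hij
        · refine Dvd.dvd.mul_left ?_ _
          rw [← pow_add]
          refine pow_dvd_pow _ ?_
          nlinarith
      rw [mul_comm (X ^ (n * p)) (r j + g * s j), eq_neg_of_add_eq_zero_left h]
      exact (dvd_neg).2 h2
    have h3 : (X ^ p : (ZMod p)[X]) ∣ r j + g * s j :=
      (mul_dvd_mul_iff_left (pow_ne_zero _ X_ne_zero)).1 h1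
    have h4 : (X ^ p : (ZMod p)[X]) ∣ f ^ p - C (f.eval 0) := by
      have e : (C (f.eval 0) : (ZMod p)[X]) = (C (f.eval 0)) ^ p := by
        rw [← C_pow, ZMod.pow_card]
      rw [e, ← sub_pow_char]
      refine pow_dvd_pow_of_dvd ?_ p
      rw [X_dvd_iff]
      simp [coeff_zero_eq_eval_zero]
    have h5 : (X ^ p : (ZMod p)[X]) ∣ (r j) ^ 2 * f - C (f.eval 0) * (s j) ^ 2 := by
      have e : (r j) ^ 2 * f - C (f.eval 0) * (s j) ^ 2 =
          (r j + g * s j) * ((r j - g * s j) * f) + (f ^ p - C (f.eval 0)) * (s j) ^ 2 := by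
        have : f ^ p = g ^ 2 * f := by
          rw [hg, ← pow_mul, ← pow_succ]; congr 1; omega
        rw [this]; ring
      rw [e]
      exact dvd_add (h3.mul_right _) (h4.mul_right _)
    have h6 : (r j) ^ 2 * f - C (f.eval 0) * (s j) ^ 2 = 0 := by
      refine eq_zero_of_dvd_of_natDegree_lt h5 ?_
      rw [natDegree_X_pow]
      refine lt_of_le_of_lt (natDegree_sub_le_of_le (m := 2 * d + m) ?_ (n := 2 * d + m) ?_) (by simpa using hd)
      · refine natDegree_mul_le.trans ?_
        have := natDegree_pow_le (p := r j) (n := 2)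
        have := hr j
        omega
      · refine (natDegree_C_mul_le _ _).trans ?_
        have := natDegree_pow_le (p := s j) (n := 2)
        have := hs j
        omega
    exact step_sq_false f (r j) (s j) _ h0 a ha (sub_eq_zero.1 h6)
  exact fun j => key j j rfl

lemma step_exists (f : (ZMod p)[X]) (m d J l : ℕ) (b : ZMod p) (hf : f.natDegree ≤ m)
    (hlt : l * (d + l * m + J) < J * (2 * (d + 1))) (h : ℕ) :
    ∃ r s : Fin J → (ZMod p)[X], (∀ j, (r j).natDegree ≤ d) ∧ (∀ j, (s j).natDegree ≤ d) ∧
      (∃ j, ¬ (r j = 0 ∧ s j = 0)) ∧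
      ∀ k < l, ∑ j : Fin J, (stepR f l k (r j) + C b * stepR f (l + h) k (s j)) * X ^ (j : ℕ) = 0 := by
  classical
  let V := Fin J → (degreeLT (ZMod p) (d + 1) × degreeLT (ZMod p) (d + 1))
  let Q : ℕ → V →ₗ[ZMod p] (ZMod p)[X] := fun k =>
    ∑ j : Fin J, (LinearMap.mulRight (ZMod p) (X ^ (j : ℕ) : (ZMod p)[X])).comp
      (((stepR f l k).comp ((degreeLT (ZMod p) (d + 1)).subtype.comp
        ((LinearMap.fst _ _ _).comp (LinearMap.proj j)))) +
      (LinearMap.mulLeft (ZMod p) (C b)).comp ((stepR f (l + h) k).comp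
        ((degreeLT (ZMod p) (d + 1)).subtype.comp
        ((LinearMap.snd _ _ _).comp (LinearMap.proj j)))))
  have hQ : ∀ k v, Q k v = ∑ j : Fin J, (stepR f l k ((v j).1 : (ZMod p)[X]) +
      C b * stepR f (l + h) k ((v j).2 : (ZMod p)[X])) * X ^ (j : ℕ) := by
    intro k v
    simp [Q, V]
  let L : V →ₗ[ZMod p] (Fin l → Fin (d + l * m + J) → ZMod p) :=
    LinearMap.pi fun k => LinearMap.pi fun i => (lcoeff (ZMod p) (i : ℕ)).comp (Q k)
  have hker : LinearMap.ker L ≠ ⊥ := by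
    apply LinearMap.ker_ne_bot_of_finrank_lt
    have e1 : Module.finrank (ZMod p) (degreeLT (ZMod p) (d + 1)) = d + 1 := by
      rw [(degreeLTEquiv (ZMod p) (d + 1)).finrank_eq]; simp
    have e2 : Module.finrank (ZMod p) V = J * (2 * (d + 1)) := by
      simp [V, Module.finrank_pi_fintype, e1]; ring_nf; simp
    have e3 : Module.finrank (ZMod p) (Fin l → Fin (d + l * m + J) → ZMod p) =
        l * (d + l * m + J) := by
      rw [Module.finrank_pi_fintype]; simp
    rw [e2, e3]; exact hlt
  obtain ⟨v, hv, hv0⟩ := (Submodule.ne_bot_iff _).1 hker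
  have hdeg : ∀ q ∈ degreeLT (ZMod p) (d + 1), q.natDegree ≤ d := by
    intro q hq
    rw [mem_degreeLT] at hq
    by_cases h0 : q = 0
    · simp [h0]
    exact Nat.lt_succ_iff.1 ((natDegree_lt_iff_degree_lt h0).2 hq)
  refine ⟨fun j => (v j).1, fun j => (v j).2, fun j => hdeg _ (v j).1.2, fun j => hdeg _ (v j).2.2,
    ?_, ?_⟩
  · by_contra hcon
    push Not at hcon
    apply hv0
    funext j
    obtain ⟨h1, h2⟩ := hcon j
    exact Prod.ext (Subtype.ext h1) (Subtype.ext h2)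
  · intro k hk
    rw [← hQ]
    ext i
    by_cases hi : i < d + l * m + J
    · have := congrFun (congrFun (LinearMap.mem_ker.1 hv) ⟨k, hk⟩) ⟨i, hi⟩
      simpa [L] using this
    · rw [coeff_zero, hQ]
      have hkm : k * m ≤ l * m := Nat.mul_le_mul_right _ hk.le
      apply coeff_eq_zero_of_natDegree_lt
      by_cases hJ : J = 0
      · subst hJ; simp at hlt
      refine lt_of_le_of_lt (natDegree_sum_le_of_forall_le (n := d + k * m + (J - 1)) _ _ ?_) (by omega)
      intro j _
      refine natDegree_mul_le.trans ?_
      rw [natDegree_X_pow]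
      have hj := j.2
      have a1 := stepR_natDegree f _ l m d k hf (hdeg _ (v j).1.2)
      have a2 := stepR_natDegree f _ (l + h) m d k hf (hdeg _ (v j).2.2)
      have a3 : (stepR f l k ((v j).1 : (ZMod p)[X]) +
        C b * stepR f (l + h) k ((v j).2 : (ZMod p)[X])).natDegree ≤ d + k * m :=
        natDegree_add_le_of_degree_le a1 ((natDegree_C_mul_le _ _).trans a2)
      omega

lemma step_count (hp2 : p ≠ 2) (f : (ZMod p)[X]) (m d J l : ℕ) (b : ZMod p)
    (hf : f.natDegree ≤ m) (h0 : f.eval 0 ≠ 0)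
    (a : ZMod p) (ha : f.rootMultiplicity a = 1) (hd : 2 * d + m < p) (hl : l < p)
    (hlt : l * (d + l * m + J) < J * (2 * (d + 1))) :
    l * (Finset.univ.filter fun x : ZMod p => f.eval x ^ ((p - 1) / 2) = b).card ≤
      (l + (p - 1) / 2) * m + d + J * p := by
  classical
  obtain ⟨r, s, hr, hs, hne, hzero⟩ := step_exists f m d J l b hf hlt ((p - 1) / 2)
  have hp := (Fact.out : p.Prime)
  set h := (p - 1) / 2 with hh
  set H : (ZMod p)[X] := ∑ j : Fin J, (f ^ l * r j * X ^ ((j : ℕ) * p) +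
    f ^ (l + h) * s j * X ^ ((j : ℕ) * p)) with hH
  have hf0 : f ≠ 0 := by rintro rfl; simp at ha
  have hHne : H ≠ 0 := by
    intro hH0
    have e : H = f ^ l * ∑ j : Fin J, (r j + f ^ h * s j) * X ^ ((j : ℕ) * p) := by
      rw [hH, Finset.mul_sum]
      refine Finset.sum_congr rfl fun j _ => ?_
      rw [pow_add]; ring
    rw [e] at hH0
    have := (mul_eq_zero.1 hH0).resolve_left (pow_ne_zero _ hf0)
    obtain ⟨j, hj⟩ := hne
    exact hj (step_nonvanish hp2 f m d J hf h0 a ha hd r s hr hs this j)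
  have hHdeg : H.natDegree ≤ (l + h) * m + d + J * p := by
    refine natDegree_sum_le_of_forall_le _ _ fun j _ => ?_
    have hj : (j : ℕ) * p ≤ J * p := Nat.mul_le_mul_right _ j.2.le
    have hpw : ∀ n, (f ^ n).natDegree ≤ n * m := fun n =>
      natDegree_pow_le.trans (Nat.mul_le_mul_left _ hf)
    have hlm : l * m ≤ (l + h) * m := Nat.mul_le_mul_right _ (by omega)
    refine natDegree_add_le_of_degree_le ?_ ?_
    · refine natDegree_mul_le.trans ?_
      rw [natDegree_X_pow]
      have := natDegree_mul_le (p := f ^ l) (q := r j)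
      have := hpw l
      have := hr j
      omega
    · refine natDegree_mul_le.trans ?_
      rw [natDegree_X_pow]
      have := natDegree_mul_le (p := f ^ (l + h)) (q := s j)
      have := hpw (l + h)
      have := hs j
      omega
  have hmult : ∀ x : ZMod p, f.eval x ^ h = b → (X - C x) ^ l ∣ H := by
    intro x hx
    rw [← le_rootMultiplicity_iff hHne]
    rcases Nat.eq_zero_or_pos l with hl0 | hlpos
    · omega
    suffices l - 1 < H.rootMultiplicity x by omega
    apply lt_rootMultiplicity_of_isRoot_iterate_derivative_of_mem_nonZeroDivisors' hHne
    · intro k hk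
      have hkl : k < l := by omega
      rw [IsRoot, hH, iterate_derivative_sum, eval_finsetSum]
      have hz := congrArg (eval x) (hzero k hkl)
      rw [eval_finsetSum, eval_zero] at hz
      have : ∀ j : Fin J, eval x (derivative^[k] (f ^ l * r j * X ^ ((j : ℕ) * p) +
          f ^ (l + h) * s j * X ^ ((j : ℕ) * p))) =
          (eval x f) ^ (l - k) * eval x ((stepR f l k (r j) + C b * stepR f (l + h) k (s j)) * X ^ (j : ℕ)) := by
        intro j
        rw [iterate_map_add derivative, stepR_deriv _ _ _ _ _ (by omega), stepR_deriv _ _ _ _ _ (by omega)]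
        have e : l + h - k = (l - k) + h := by omega
        rw [e]
        simp only [eval_add, eval_mul, eval_pow, eval_X, eval_C, pow_add, hx]
        rw [mul_comm (j : ℕ) p, pow_mul, ZMod.pow_card]
        ring
      rw [Finset.sum_congr rfl fun j _ => this j, ← Finset.mul_sum, hz, mul_zero]
    · intro k hk hk0
      rw [mem_nonZeroDivisors_iff_ne_zero, Ne, ZMod.natCast_eq_zero_iff]
      intro hdvd
      have := Nat.le_of_dvd (Nat.pos_of_ne_zero hk0) hdvd
      omega
  have hprod : (∏ x ∈ Finset.univ.filter (fun x : ZMod p => f.eval x ^ h = b), (X - C x) ^ l) ∣ H := by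
    apply Finset.prod_dvd_of_coprime
    · intro x _ y _ hxy
      exact (isCoprime_X_sub_C_of_isUnit_sub (sub_ne_zero.2 hxy).isUnit).pow
    · intro x hx
      exact hmult x (Finset.mem_filter.1 hx).2
  have := natDegree_le_of_dvd hprod hHne
  rw [natDegree_prod _ _ (fun x _ => pow_ne_zero _ (X_sub_C_ne_zero x))] at this
  simp only [natDegree_pow, natDegree_X_sub_C, mul_one, Finset.sum_const, smul_eq_mul] at this
  rw [mul_comm]
  exact this.trans hHdeg

lemma step_bound (m : ℕ) (hm : 1 ≤ m) (f : (ZMod p)[X]) (b : ZMod p)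
    (hf : f.natDegree ≤ m) (h0 : f.eval 0 ≠ 0)
    (a : ZMod p) (ha : f.rootMultiplicity a = 1) (hpm : 16 ≤ p) (hpm' : 4 * m + 8 ≤ p) :
    ((Finset.univ.filter fun x : ZMod p => f.eval x ^ ((p - 1) / 2) = b).card : ℝ) ≤
      p / 2 + (30 * m) * √p := by
  have hp := (Fact.out : p.Prime)
  set l := Nat.sqrt p with hl
  have l1 : l * l ≤ p := Nat.sqrt_le p
  have l2 : p < (l + 1) * (l + 1) := Nat.lt_succ_sqrt p
  have l4 : 4 ≤ l := by
    rw [hl, Nat.le_sqrt]; omega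
  have hpd : ∃ d, 2 * d + m < p ∧ p ≤ 2 * d + m + 2 := ⟨(p - m - 1) / 2, by omega, by omega⟩
  obtain ⟨d, hd, hd'⟩ := hpd
  have hJ : ∃ J, 2 * J ≤ l + 8 * m + 8 ∧ l + 8 * m + 7 ≤ 2 * J := ⟨l / 2 + 4 * m + 4, by omega, by omega⟩
  obtain ⟨J, hJ1, hJ2⟩ := hJ
  have hp2 : p ≠ 2 := by omega
  have hlp : 4 * l ≤ p := le_trans (Nat.mul_le_mul_right _ l4) l1
  have hlt : l * (d + l * m + J) < J * (2 * (d + 1)) := by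
    have e1 : (l + 8 * m + 7) * (d + 1) ≤ 2 * J * (d + 1) := Nat.mul_le_mul_right _ hJ2
    have e2 : l * (2 * J) ≤ l * (l + 8 * m + 8) := Nat.mul_le_mul_left _ hJ1
    have e3 : l * l * m ≤ p * m := Nat.mul_le_mul_right _ l1
    have e4 : 4 * l * m ≤ p * m := Nat.mul_le_mul_right _ hlp
    have e5 : m * p ≤ m * (2 * d + m + 2) := Nat.mul_le_mul_left _ hd'
    have e6 : m * (4 * m + 8) ≤ m * p := Nat.mul_le_mul_left _ hpm'
    nlinarith
  have hc := step_count hp2 f m d J l b hf h0 a ha hd (by omega) hlt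
  set c := (Finset.univ.filter fun x : ZMod p => f.eval x ^ ((p - 1) / 2) = b).card
  have hh : (p - 1) / 2 * 2 ≤ p := by omega
  have hc' : 2 * (l * c) ≤ 2 * l * m + p * m + p + (l + 8 * m + 8) * p := by
    have e1 : (p - 1) / 2 * 2 * m ≤ p * m := Nat.mul_le_mul_right _ hh
    have e2 : 2 * J * p ≤ (l + 8 * m + 8) * p := Nat.mul_le_mul_right _ hJ1
    nlinarith
  have hcR : 2 * ((l : ℝ) * c) ≤ 2 * l * m + p * m + p + (l + 8 * m + 8) * p := by exact_mod_cast hc'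
  have hlR : (0 : ℝ) < l := by exact_mod_cast (by omega : 0 < l)
  have hl4R : (4 : ℝ) ≤ l := by exact_mod_cast l4
  have hmR : (1 : ℝ) ≤ m := by exact_mod_cast hm
  have hsq : √(p : ℝ) * √(p : ℝ) = p := Real.mul_self_sqrt (by positivity)
  have hs1 : √(p : ℝ) ≤ l + 1 := by
    rw [Real.sqrt_le_left (by positivity)]
    have : (p : ℝ) < (l + 1) * (l + 1) := by exact_mod_cast l2
    nlinarith
  have hs0 : (1 : ℝ) ≤ √(p : ℝ) := by
    rw [Real.one_le_sqrt]; exact_mod_cast (by omega : 1 ≤ p)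
  have hs2 : (p : ℝ) ≤ 5 / 4 * l * √(p : ℝ) := by nlinarith
  refine le_of_mul_le_mul_left ?_ (by positivity : (0 : ℝ) < 2 * l)
  have e1 : (m : ℝ) * p ≤ m * (5 / 4 * l * √(p : ℝ)) := by gcongr
  have e2 : (l : ℝ) * m * 1 ≤ l * m * √(p : ℝ) := by gcongr
  have e3 : (p : ℝ) ≤ m * (5 / 4 * l * √(p : ℝ)) := by nlinarith
  nlinarith

end Stepanov

section Moments
open Polynomial
variable {p : ℕ} [Fact p.Prime]

lemma chi_eq_ind (hp2 : p ≠ 2) (y : ZMod p) : ((quadraticChar (ZMod p) y : ℤ) : ℝ) =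
    (if y ^ ((p - 1) / 2) = 1 then 1 else 0) - (if y ^ ((p - 1) / 2) = -1 then 1 else 0) := by
  have hp := (Fact.out : p.Prime)
  have hodd := hp.odd_of_ne_two hp2
  have hch : ringChar (ZMod p) ≠ 2 := by rwa [ZMod.ringChar_zmod_n]
  have hne : (1 : ZMod p) ≠ -1 := (Ring.neg_one_ne_one_of_char_ne_two hch).symm
  have h2 : Fintype.card (ZMod p) / 2 = (p - 1) / 2 := by
    rw [ZMod.card]; obtain ⟨t, ht⟩ := hodd; omega
  by_cases hy : y = 0
  · subst hy
    have : (p - 1) / 2 ≠ 0 := by have := hp.two_le; obtain ⟨t, ht⟩ := hodd; omega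
    simp [zero_pow this]
  · have e := quadraticChar_eq_pow_of_char_ne_two hch hy
    rw [h2] at e
    have e2 := FiniteField.pow_dichotomy hch hy
    rw [h2] at e2
    rw [e]
    rcases e2 with e2 | e2
    · simp [e2, hne]
    · simp [e2, hne, hne.symm]

lemma abs_chi_le (y : ZMod p) : |((quadraticChar (ZMod p) y : ℤ) : ℝ)| ≤ 1 := by
  by_cases hy : y = 0
  · simp [hy]
  · rcases quadraticChar_dichotomy hy with h | h <;> simp [h]

lemma weil_prod (m : ℕ) (hm : 1 ≤ m) (O : Finset (ZMod p)) (hO : O.Nonempty) (h0 : (0 : ZMod p) ∉ O)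
    (hcard : O.card ≤ m) (hpm : 4 * m + 16 ≤ p) :
    |∑ x : ZMod p, ∏ c ∈ O, ((quadraticChar (ZMod p) (x + c) : ℤ) : ℝ)| ≤ 61 * m * √p := by
  classical
  have hp := (Fact.out : p.Prime)
  have hp2 : p ≠ 2 := by omega
  set f : (ZMod p)[X] := ∏ c ∈ O, (X - C (-c)) with hfdef
  have hfne : f ≠ 0 := Finset.prod_ne_zero_iff.2 fun c _ => X_sub_C_ne_zero _
  have hdeg : f.natDegree ≤ m := by
    rw [hfdef, natDegree_prod _ _ fun c _ => X_sub_C_ne_zero _]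
    simpa using hcard
  have hev : ∀ x, f.eval x = ∏ c ∈ O, (x + c) := by
    intro x; simp [hfdef, eval_prod]
  have hf0 : f.eval 0 ≠ 0 := by
    rw [hev, Finset.prod_ne_zero_iff]
    intro c hc h; rw [zero_add] at h; exact h0 (h ▸ hc)
  obtain ⟨a, ha⟩ := hO
  have hmult : f.rootMultiplicity (-a) = 1 := by
    rw [hfdef, ← Finset.mul_prod_erase _ _ ha] at *
    rw [rootMultiplicity_mul hfne, rootMultiplicity_X_sub_C_self]
    rw [rootMultiplicity_eq_zero]
    rw [IsRoot, eval_prod, Finset.prod_eq_zero_iff]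
    rintro ⟨c, hc, h⟩
    simp only [eval_sub, eval_X, eval_C] at h
    have : c = a := by linear_combination h
    exact (Finset.ne_of_mem_erase hc) this
  have hb := fun b => step_bound m hm f b hdeg hf0 (-a) hmult (by omega) (by omega)
  have hχ : ∀ x : ZMod p, ∏ c ∈ O, ((quadraticChar (ZMod p) (x + c) : ℤ) : ℝ) =
      ((quadraticChar (ZMod p) (f.eval x) : ℤ) : ℝ) := by
    intro x
    rw [hev, map_prod]; push_cast; rfl
  simp_rw [hχ, chi_eq_ind hp2]
  rw [Finset.sum_sub_distrib, Finset.sum_boole, Finset.sum_boole]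
  set Np := (Finset.univ.filter fun x : ZMod p => f.eval x ^ ((p - 1) / 2) = 1)
  set Nm := (Finset.univ.filter fun x : ZMod p => f.eval x ^ ((p - 1) / 2) = -1)
  have h1 : (Np.card : ℝ) ≤ p / 2 + (30 * m) * √p := hb 1
  have h2 : (Nm.card : ℝ) ≤ p / 2 + (30 * m) * √p := hb (-1)
  have hch : ringChar (ZMod p) ≠ 2 := by rwa [ZMod.ringChar_zmod_n]
  have hcov : p ≤ Np.card + Nm.card + m := by
    have : (Finset.univ : Finset (ZMod p)) ⊆ Np ∪ Nm ∪ f.roots.toFinset := by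
      intro x _
      by_cases hx : f.eval x = 0
      · apply Finset.mem_union_right
        rw [Multiset.mem_toFinset, mem_roots hfne]; exact hx
      · have e2 := FiniteField.pow_dichotomy hch hx
        have h2 : Fintype.card (ZMod p) / 2 = (p - 1) / 2 := by
          have hodd := hp.odd_of_ne_two hp2
          rw [ZMod.card]; obtain ⟨t, ht⟩ := hodd; omega
        rw [h2] at e2
        apply Finset.mem_union_left
        rcases e2 with e | e
        · exact Finset.mem_union_left _ (by simp [Np, e])
        · exact Finset.mem_union_right _ (by simp [Nm, e])
    have h3 := Finset.card_le_card this
    rw [Finset.card_univ, ZMod.card] at h3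
    have h4 := Finset.card_union_le (Np ∪ Nm) f.roots.toFinset
    have h5 := Finset.card_union_le Np Nm
    have h6 := f.roots.toFinset_card_le
    have h7 := f.card_roots'
    omega
  have hcovR : (p : ℝ) ≤ Np.card + Nm.card + m := by exact_mod_cast hcov
  have hs0 : (1 : ℝ) ≤ √(p : ℝ) := by
    rw [Real.one_le_sqrt]; exact_mod_cast (by omega : 1 ≤ p)
  have hmR : (1 : ℝ) ≤ m := by exact_mod_cast hm
  have e : (m : ℝ) * 1 ≤ m * √(p : ℝ) := by gcongr
  rw [abs_le]
  constructor <;> nlinarith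

lemma weil_tuple (s : ℕ) (hs : 1 ≤ s) (hps : 8 * s + 16 ≤ p) (t : Fin (2 * s) → ZMod p)
    (ht : ∀ i, t i ≠ 0) (hcard : s < (Finset.univ.image t).card) :
    |∑ x : ZMod p, ∏ i, ((quadraticChar (ZMod p) (x + t i) : ℤ) : ℝ)| ≤ 126 * s * √p := by
  classical
  have hp := (Fact.out : p.Prime)
  set I := Finset.univ.image t with hI
  have hIcard : I.card ≤ 2 * s := by
    have := Finset.card_image_le (s := Finset.univ) (f := t); simpa using this
  let n : ZMod p → ℕ := fun c => (Finset.univ.filter fun i => t i = c).card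
  set O := I.filter fun c => Odd (n c) with hOdef
  have hO : O.Nonempty := by
    by_contra hcon
    rw [Finset.not_nonempty_iff_eq_empty, hOdef, Finset.filter_eq_empty_iff] at hcon
    have h1 : ∀ c ∈ I, 2 ≤ n c := by
      intro c hc
      have h2 := hcon hc
      rw [Nat.not_odd_iff_even] at h2
      have h3 : 0 < n c := by
        obtain ⟨i, _, hi⟩ := Finset.mem_image.1 hc
        exact Finset.card_pos.2 ⟨i, by simp [hi]⟩
      obtain ⟨w, hw⟩ := h2
      omega
    have h4 : ∑ c ∈ I, n c = 2 * s := by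
      have := Finset.card_eq_sum_card_image t Finset.univ
      simpa using this.symm
    have h5 := Finset.card_nsmul_le_sum I n 2 h1
    rw [h4] at h5
    simp at h5
    omega
  have hO0 : (0 : ZMod p) ∉ O := by
    intro h
    obtain ⟨i, _, hi⟩ := Finset.mem_image.1 (Finset.mem_filter.1 h).1
    exact ht i hi
  have hOI : O.card ≤ 2 * s := (Finset.card_filter_le _ _).trans hIcard
  have hW := weil_prod (2 * s) (by omega) O hO hO0 hOI (by omega)
  set P : ZMod p → ℝ := fun x => ∏ i, ((quadraticChar (ZMod p) (x + t i) : ℤ) : ℝ) with hP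
  set Q : ZMod p → ℝ := fun x => ∏ c ∈ O, ((quadraticChar (ZMod p) (x + c) : ℤ) : ℝ) with hQ
  have hPabs : ∀ x, |P x| ≤ 1 := by
    intro x; rw [hP]; simp only; rw [Finset.abs_prod]
    exact Finset.prod_le_one (fun _ _ => abs_nonneg _) fun _ _ => abs_chi_le _
  have hQabs : ∀ x, |Q x| ≤ 1 := by
    intro x; rw [hQ]; simp only; rw [Finset.abs_prod]
    exact Finset.prod_le_one (fun _ _ => abs_nonneg _) fun _ _ => abs_chi_le _
  have hPQ : ∀ x, x ∉ I.image (fun c => -c) → P x = Q x := by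
    intro x hx
    have hx' : ∀ c ∈ I, x + c ≠ 0 := by
      intro c hc h
      exact hx (Finset.mem_image.2 ⟨c, hc, by linear_combination -h⟩)
    rw [hP, hQ]
    simp only
    rw [Finset.prod_comp (fun c => ((quadraticChar (ZMod p) (x + c) : ℤ) : ℝ)) t, hOdef,
      Finset.prod_filter]
    refine Finset.prod_congr rfl fun c hc => ?_
    have hd := quadraticChar_dichotomy (hx' c hc)
    split_ifs with hodd
    · rcases hd with h | h
      · simp [h]
      · rw [h]; simpa using Odd.neg_one_pow hodd
    · rw [Nat.not_odd_iff_even] at hodd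
      rcases hd with h | h
      · simp [h]
      · rw [h]; simpa using Even.neg_one_pow hodd
  have hdiff : |∑ x, P x - ∑ x, Q x| ≤ 4 * s := by
    rw [← Finset.sum_sub_distrib]
    rw [← Finset.sum_subset (Finset.subset_univ (I.image fun c => -c))
      (fun x _ hx => by rw [hPQ x hx, sub_self])]
    refine (Finset.abs_sum_le_sum_abs _ _).trans ?_
    refine (Finset.sum_le_card_nsmul _ _ 2 fun x _ => ?_).trans ?_
    · have := abs_sub (P x) (Q x); have := hPabs x; have := hQabs x; linarith
    · have h1 : (I.image fun c => -c).card ≤ 2 * s := Finset.card_image_le.trans hIcard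
      have h2 : ((I.image fun c => -c).card : ℝ) ≤ 2 * s := by exact_mod_cast h1
      rw [nsmul_eq_mul]; linarith
  have hs0 : (1 : ℝ) ≤ √(p : ℝ) := by
    rw [Real.one_le_sqrt]; exact_mod_cast (by omega : 1 ≤ p)
  have e : (s : ℝ) * 1 ≤ s * √(p : ℝ) := by gcongr
  have h3 : |∑ x, P x| ≤ |∑ x, P x - ∑ x, Q x| + |∑ x, Q x| := by
    have := abs_add_le (∑ x, P x - ∑ x, Q x) (∑ x, Q x)
    simpa using this
  have hW' : |∑ x, Q x| ≤ 61 * (2 * s) * √p := by exact_mod_cast hW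
  linarith

lemma few_tuples {α : Type*} [DecidableEq α] (s : ℕ) (hs : 1 ≤ s) (S : Finset α) :
    ((Fintype.piFinset fun _ : Fin (2 * s) => S).filter
      fun t => (Finset.univ.image t).card ≤ s).card ≤ s ^ (2 * s) * S.card ^ s := by
  classical
  have hsub : ((Fintype.piFinset fun _ : Fin (2 * s) => S).filter
      fun t => (Finset.univ.image t).card ≤ s) ⊆
      ((Finset.univ : Finset (Fin (2 * s) → Fin s)) ×ˢ (Fintype.piFinset fun _ : Fin s => S)).image
        fun hg => hg.2 ∘ hg.1 := by
    intro t ht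
    rw [Finset.mem_filter, Fintype.mem_piFinset] at ht
    obtain ⟨htS, htc⟩ := ht
    let I := {x // x ∈ Finset.univ.image t}
    have hmem : ∀ i, t i ∈ Finset.univ.image t := fun i => Finset.mem_image_of_mem _ (Finset.mem_univ _)
    have : Nonempty I := ⟨⟨t ⟨0, by omega⟩, hmem _⟩⟩
    obtain ⟨e⟩ : Nonempty (I ↪ Fin s) := by
      apply Function.Embedding.nonempty_of_card_le
      simpa [I] using htc
    rw [Finset.mem_image]
    refine ⟨(fun i => e ⟨t i, hmem i⟩, fun k => (Function.invFun e k).1), ?_, ?_⟩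
    · rw [Finset.mem_product]
      refine ⟨Finset.mem_univ _, ?_⟩
      rw [Fintype.mem_piFinset]
      intro k
      obtain ⟨i, _, hi⟩ := Finset.mem_image.1 (Function.invFun e k).2
      simp only
      rw [← hi]; exact htS i
    · funext i
      simp [Function.leftInverse_invFun e.injective _]
  refine (Finset.card_le_card hsub).trans (Finset.card_image_le.trans ?_)
  rw [Finset.card_product]
  simp

lemma moment_bound (s : ℕ) (hs : 1 ≤ s) (hps : 8 * s + 16 ≤ p) (S : Finset (ZMod p))
    (h0 : (0 : ZMod p) ∉ S) :
    ∑ x : ZMod p, (∑ c ∈ S, ((quadraticChar (ZMod p) (x + c) : ℤ) : ℝ)) ^ (2 * s) ≤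
      s ^ (2 * s) * (S.card : ℝ) ^ s * p + (S.card : ℝ) ^ (2 * s) * (126 * s * √p) := by
  classical
  simp_rw [Finset.sum_pow']
  rw [Finset.sum_comm]
  set T := Fintype.piFinset fun _ : Fin (2 * s) => S with hT
  rw [← Finset.sum_filter_add_sum_filter_not T (fun t => (Finset.univ.image t).card ≤ s)]
  refine add_le_add ?_ ?_
  · refine (Finset.sum_le_card_nsmul _ _ (p : ℝ) fun t _ => ?_).trans ?_
    · refine (Finset.sum_le_card_nsmul _ _ (1 : ℝ) fun x _ => ?_).trans ?_
      · refine (le_abs_self _).trans ?_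
        rw [Finset.abs_prod]
        exact Finset.prod_le_one (fun _ _ => abs_nonneg _) fun _ _ => abs_chi_le _
      · simp [ZMod.card]
    · rw [nsmul_eq_mul]
      have := few_tuples s hs S
      gcongr
      exact_mod_cast this
  · refine (Finset.sum_le_card_nsmul _ _ (126 * s * √p : ℝ) fun t ht => ?_).trans ?_
    · rw [Finset.mem_filter, Fintype.mem_piFinset] at ht
      refine (le_abs_self _).trans (weil_tuple s hs hps t (fun i h => h0 (h ▸ ht.1 i)) (by omega))
    · rw [nsmul_eq_mul]
      have h1 := Finset.card_filter_le T (fun t => ¬ (Finset.univ.image t).card ≤ s)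
      have h2 : T.card = S.card ^ (2 * s) := by simp [hT]
      rw [h2] at h1
      gcongr
      exact_mod_cast h1

end Moments

lemma divisor_bound (ε : ℝ) (hε : 0 < ε) : ∃ C : ℝ, 1 ≤ C ∧ ∀ n : ℕ, 1 ≤ n →
    (n.divisors.card : ℝ) ≤ C * (n : ℝ) ^ ε := by
  have hlog : 0 < Real.log 2 := Real.log_pos (by norm_num)
  set C0 : ℝ := 1 + 1 / (ε * Real.log 2) with hC0
  have hC01 : 1 ≤ C0 := by rw [hC0]; have : 0 < 1 / (ε * Real.log 2) := by positivity
                           linarith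
  set W : ℕ := ⌈(2 : ℝ) ^ (1 / ε)⌉₊ with hW
  refine ⟨C0 ^ W, one_le_pow₀ hC01, fun n hn => ?_⟩
  have hn0 : n ≠ 0 := by omega
  have key : ∀ q : ℕ, q.Prime → ∀ e : ℕ, ((e + 1 : ℕ) : ℝ) ≤
      (if q < W then C0 else 1) * ((q : ℝ) ^ e) ^ ε := by
    intro q hq e
    have hq2 : (2 : ℝ) ≤ q := by exact_mod_cast hq.two_le
    have hsw : ((q : ℝ) ^ e) ^ ε = ((q : ℝ) ^ ε) ^ e := by
      rw [← Real.rpow_natCast, ← Real.rpow_natCast, ← Real.rpow_mul (by positivity),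
        ← Real.rpow_mul (by positivity), mul_comm]
    rw [hsw]
    split_ifs with h
    · have h1 : ((2 : ℝ) ^ ε) ^ e ≤ ((q : ℝ) ^ ε) ^ e := by gcongr
      have h2 : 1 + e * (ε * Real.log 2) ≤ ((2 : ℝ) ^ ε) ^ e := by
        rw [Real.rpow_def_of_pos (by norm_num), ← Real.exp_nat_mul]
        have := Real.add_one_le_exp (e * (Real.log 2 * ε))
        nlinarith
      have h3 : ((e + 1 : ℕ) : ℝ) ≤ C0 * (1 + e * (ε * Real.log 2)) := by
        have e1 : C0 * (1 + e * (ε * Real.log 2)) = 1 + e * (ε * Real.log 2) + 1 / (ε * Real.log 2) + e := by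
          rw [hC0]; field_simp; ring
        rw [e1]; push_cast
        have : 0 < 1 / (ε * Real.log 2) := by positivity
        have : 0 ≤ e * (ε * Real.log 2) := by positivity
        linarith
      refine h3.trans ?_
      gcongr
      exact h2.trans h1
    · have h1 : (2 : ℝ) ≤ (q : ℝ) ^ ε := by
        have h2 : (2 : ℝ) ^ (1 / ε) ≤ q := by
          refine (Nat.le_ceil _).trans ?_
          exact_mod_cast (not_lt.1 h)
        calc (2 : ℝ) = ((2 : ℝ) ^ (1 / ε)) ^ ε := by
              rw [← Real.rpow_mul (by norm_num)]; field_simp; simp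
          _ ≤ _ := by gcongr
      rw [one_mul]
      have h2 : (2 : ℝ) ^ e ≤ ((q : ℝ) ^ ε) ^ e := by gcongr
      refine le_trans ?_ h2
      exact_mod_cast Nat.lt_two_pow_self
  rw [Nat.card_divisors hn0]
  have hprod : (n : ℝ) ^ ε = ∏ q ∈ n.primeFactors, ((q : ℝ) ^ (n.factorization q)) ^ ε := by
    rw [Real.finsetProd_rpow _ _ (fun i _ => by positivity)]
    congr 1
    conv_lhs => rw [← Nat.prod_factorization_pow_eq_self hn0]
    rw [Finsupp.prod]
    push_cast
    rfl
  rw [hprod]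
  push_cast
  calc ∏ q ∈ n.primeFactors, ((n.factorization q : ℝ) + 1)
      ≤ ∏ q ∈ n.primeFactors, ((if q < W then C0 else 1) * ((q : ℝ) ^ (n.factorization q)) ^ ε) := by
        refine Finset.prod_le_prod (fun _ _ => by positivity) fun q hq => ?_
        have := key q (Nat.prime_of_mem_primeFactors hq) (n.factorization q)
        exact_mod_cast this
    _ = (∏ q ∈ n.primeFactors, (if q < W then C0 else 1)) *
          ∏ q ∈ n.primeFactors, ((q : ℝ) ^ (n.factorization q)) ^ ε := Finset.prod_mul_distrib
    _ ≤ _ := by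
        gcongr
        rw [← Finset.prod_filter, Finset.prod_const]
        refine pow_le_pow_right₀ hC01 ?_
        calc _ ≤ (Finset.range W).card := Finset.card_le_card (by
              intro q hq; simpa using (Finset.mem_filter.1 hq).2)
          _ = W := by simp

section Level
variable {p : ℕ} [Fact p.Prime]

/-- real-valued quadratic character -/
noncomputable def qc (p : ℕ) [Fact p.Prime] (x : ZMod p) : ℝ := ((quadraticChar (ZMod p) x : ℤ) : ℝ)

lemma abs_qc_le (x : ZMod p) : |qc p x| ≤ 1 := abs_chi_le x

lemma qc_mul (x y : ZMod p) : qc p (x * y) = qc p x * qc p y := by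
  rw [qc, map_mul]; push_cast; rfl

/-- level set -/
noncomputable def lev (p : ℕ) [Fact p.Prime] (B : ℕ) (δ : ℝ) : Finset (ZMod p) :=
  Finset.univ.filter fun y => δ * B ≤ |∑ b ∈ Finset.Icc 1 B, qc p (y + (b : ZMod p))|

lemma lev_bound (s : ℕ) (hs : 1 ≤ s) (hps : 8 * s + 16 ≤ p) (B : ℕ) (hB : 1 ≤ B) (hBp : B < p)
    (hBs : √(p : ℝ) ≤ (B : ℝ) ^ s) (δ : ℝ) (hδ : 0 < δ) :
    ((lev p B δ).card : ℝ) ≤ ((s ^ (2 * s) + 126 * s) / δ ^ (2 * s)) * √p := by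
  classical
  have hinj : Set.InjOn (fun b : ℕ => (b : ZMod p)) (Finset.Icc 1 B : Finset ℕ) := by
    intro a ha b hb hab
    rw [Finset.mem_coe, Finset.mem_Icc] at ha hb
    have := (ZMod.natCast_eq_natCast_iff' a b p).1 hab
    rwa [Nat.mod_eq_of_lt (by omega), Nat.mod_eq_of_lt (by omega)] at this
  set S : Finset (ZMod p) := (Finset.Icc 1 B).image (fun b : ℕ => (b : ZMod p)) with hS
  have hScard : S.card = B := by
    rw [hS, Finset.card_image_of_injOn hinj]; simp
  have hS0 : (0 : ZMod p) ∉ S := by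
    intro h
    obtain ⟨b, hb, hb0⟩ := Finset.mem_image.1 h
    rw [Finset.mem_Icc] at hb
    have := Nat.le_of_dvd (by omega) ((ZMod.natCast_eq_zero_iff b p).1 hb0)
    omega
  have hsum : ∀ y : ZMod p, ∑ c ∈ S, ((quadraticChar (ZMod p) (y + c) : ℤ) : ℝ) =
      ∑ b ∈ Finset.Icc 1 B, qc p (y + (b : ZMod p)) := by
    intro y
    rw [hS, Finset.sum_image hinj]; rfl
  have hm := moment_bound s hs hps S hS0
  simp_rw [hsum, hScard] at hm
  have hB0 : (0 : ℝ) < B := by exact_mod_cast hB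
  have hlow : ((lev p B δ).card : ℝ) * (δ * B) ^ (2 * s) ≤
      ∑ x : ZMod p, (∑ b ∈ Finset.Icc 1 B, qc p (x + (b : ZMod p))) ^ (2 * s) := by
    calc ((lev p B δ).card : ℝ) * (δ * B) ^ (2 * s) = ∑ x ∈ lev p B δ, (δ * B) ^ (2 * s) := by simp
      _ ≤ ∑ x ∈ lev p B δ, (∑ b ∈ Finset.Icc 1 B, qc p (x + (b : ZMod p))) ^ (2 * s) := by
        refine Finset.sum_le_sum fun x hx => ?_
        have := (Finset.mem_filter.1 hx).2
        rw [← (even_two_mul s).pow_abs (∑ b ∈ Finset.Icc 1 B, qc p (x + (b : ZMod p)))]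
        gcongr
      _ ≤ _ := Finset.sum_le_sum_of_subset_of_nonneg (Finset.subset_univ _)
          (fun x _ _ => (even_two_mul s).pow_nonneg _)
  have hp0 : (0 : ℝ) ≤ p := by positivity
  have hsq : √(p : ℝ) * √(p : ℝ) = p := Real.mul_self_sqrt hp0
  have h1 : (B : ℝ) ^ s * p ≤ (B : ℝ) ^ (2 * s) * √p := by
    calc (B : ℝ) ^ s * p = (B : ℝ) ^ s * (√p * √p) := by rw [hsq]
      _ ≤ (B : ℝ) ^ s * ((B : ℝ) ^ s * √p) := by gcongr
      _ = _ := by rw [two_mul, pow_add]; ring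
  have h2 : ((lev p B δ).card : ℝ) * (δ * B) ^ (2 * s) ≤
      (B : ℝ) ^ (2 * s) * ((s ^ (2 * s) + 126 * s) * √p) := by
    refine (hlow.trans hm).trans ?_
    have : (s : ℝ) ^ (2 * s) * ((B : ℝ) ^ s * p) ≤ s ^ (2 * s) * ((B : ℝ) ^ (2 * s) * √p) := by gcongr
    linarith
  rw [mul_pow] at h2
  rw [div_mul_eq_mul_div, le_div_iff₀ (by positivity)]
  refine le_of_mul_le_mul_left ?_ (by positivity : (0 : ℝ) < (B : ℝ) ^ (2 * s))
  linarith

/-- pairs -/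
noncomputable def badPairs (p : ℕ) [Fact p.Prime] (Z A : ℕ) (L : Finset (ZMod p)) : Finset (ℕ × ℕ) :=
  (Finset.Icc 1 Z ×ˢ Finset.Icc 1 A).filter fun q => (q.1 : ZMod p) / (q.2 : ZMod p) ∈ L

lemma mod_count (X w : ℕ) : ((Finset.Icc 1 X).filter fun v : ℕ => (v : ZMod p) = (w : ZMod p)).card
    ≤ X / p + 1 := by
  have hp := (Fact.out : p.Prime)
  have hsub : ((Finset.Icc 1 X).filter fun v : ℕ => (v : ZMod p) = (w : ZMod p)) ⊆
      (Finset.range (X / p + 1)).image fun t => t * p + w % p := by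
    intro v hv
    rw [Finset.mem_filter, Finset.mem_Icc] at hv
    have h := (ZMod.natCast_eq_natCast_iff' v w p).1 hv.2
    rw [Finset.mem_image]
    refine ⟨v / p, ?_, ?_⟩
    · rw [Finset.mem_range]
      exact Nat.lt_succ_of_le (Nat.div_le_div_right hv.1.2)
    · rw [← h]; exact Nat.div_add_mod' v p
  refine (Finset.card_le_card hsub).trans (Finset.card_image_le.trans (by simp))

lemma fac_count (Z A w D : ℕ) (hD : ∀ n, 1 ≤ n → n ≤ Z * A → n.divisors.card ≤ D) :
    ((Finset.Icc 1 Z ×ˢ Finset.Icc 1 A).filter fun q : ℕ × ℕ =>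
      (w : ZMod p) = ((q.1 * q.2 : ℕ) : ZMod p)).card ≤ D * (Z * A / p + 1) := by
  classical
  set U := (Finset.Icc 1 Z ×ˢ Finset.Icc 1 A).filter fun q : ℕ × ℕ =>
      (w : ZMod p) = ((q.1 * q.2 : ℕ) : ZMod p) with hU
  set V := ((Finset.Icc 1 (Z * A)).filter fun v : ℕ => (v : ZMod p) = (w : ZMod p)) with hV
  have hmap : ∀ q ∈ U, q.1 * q.2 ∈ V := by
    intro q hq
    rw [hU, Finset.mem_filter, Finset.mem_product, Finset.mem_Icc, Finset.mem_Icc] at hq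
    rw [hV, Finset.mem_filter, Finset.mem_Icc]
    exact ⟨⟨Nat.mul_pos hq.1.1.1 hq.1.2.1, Nat.mul_le_mul hq.1.1.2 hq.1.2.2⟩, hq.2.symm⟩
  have := Finset.card_le_mul_card_image_of_maps_to (f := fun q : ℕ × ℕ => q.1 * q.2) hmap D (by
    intro v hv
    rw [hV, Finset.mem_filter, Finset.mem_Icc] at hv
    refine le_trans ?_ (hD v hv.1.1 hv.1.2)
    refine Finset.card_le_card_of_injOn (fun q => q.1) ?_ ?_
    · intro q hq
      have hq' := (Finset.mem_filter.1 hq).2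
      simp only [Finset.mem_coe, Nat.mem_divisors]
      exact ⟨⟨q.2, hq'.symm⟩, by omega⟩
    · intro q hq q' hq' h
      have h1 := (Finset.mem_filter.1 hq).2
      have h2 := (Finset.mem_filter.1 hq').2
      simp only at h h1 h2
      have h3 : 0 < q.1 := by
        rcases Nat.eq_zero_or_pos q.1 with h0 | h0
        · rw [h0] at h1; omega
        · exact h0
      refine Prod.ext h ?_
      rw [← h2, ← h] at h1
      exact Nat.eq_of_mul_eq_mul_left h3 h1)
  refine this.trans (Nat.mul_le_mul_left _ (mod_count _ _))

lemma pair_count (Z A D : ℕ) (hA : A < p) (L : Finset (ZMod p))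
    (hD : ∀ n, 1 ≤ n → n ≤ Z * A → n.divisors.card ≤ D) :
    (badPairs p Z A L).card ^ 2 ≤ L.card * (Z * A * (D * (Z * A / p + 1))) := by
  classical
  set PP := Finset.Icc 1 Z ×ˢ Finset.Icc 1 A with hPP
  let y : ℕ × ℕ → ZMod p := fun q => (q.1 : ZMod p) / (q.2 : ZMod p)
  set BP := badPairs p Z A L with hBP
  have hBPPP : BP ⊆ PP := Finset.filter_subset _ _
  have hunit : ∀ q ∈ PP, (q.2 : ZMod p) ≠ 0 := by
    intro q hq h
    rw [hPP, Finset.mem_product, Finset.mem_Icc, Finset.mem_Icc] at hq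
    have := Nat.le_of_dvd (by omega) ((ZMod.natCast_eq_zero_iff _ p).1 h)
    omega
  have h1 : BP.card = ∑ c ∈ L, (BP.filter fun q => y q = c).card :=
    Finset.card_eq_sum_card_fiberwise fun q hq => (Finset.mem_filter.1 hq).2
  have h2 : BP.card ^ 2 ≤ L.card * ∑ c ∈ L, (BP.filter fun q => y q = c).card ^ 2 := by
    rw [h1]
    exact sq_sum_le_card_mul_sum_sq
  set E := (BP ×ˢ BP).filter fun q => y q.1 = y q.2 with hE
  have h3 : ∑ c ∈ L, (BP.filter fun q => y q = c).card ^ 2 ≤ E.card := by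
    have hmaps : Set.MapsTo (fun q : (ℕ × ℕ) × ℕ × ℕ => y q.1) (E : Set _) (L : Set (ZMod p)) := by
      intro q hq
      exact (Finset.mem_filter.1 (Finset.mem_product.1 (Finset.mem_filter.1 hq).1).1).2
    rw [Finset.card_eq_sum_card_fiberwise hmaps]
    refine Finset.sum_le_sum fun c _ => ?_
    rw [sq, ← Finset.card_product]
    refine Finset.card_le_card ?_
    intro q hq
    simp only [Finset.mem_product, Finset.mem_filter, hE] at hq ⊢
    exact ⟨⟨⟨hq.1.1, hq.2.1⟩, hq.1.2.trans hq.2.2.symm⟩, hq.1.2⟩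
  set E' := (PP ×ˢ PP).filter fun q =>
    ((q.1.1 * q.1.2 : ℕ) : ZMod p) = ((q.2.1 * q.2.2 : ℕ) : ZMod p) with hE'
  have h4 : E.card ≤ E'.card := by
    refine Finset.card_le_card_of_injOn (fun q => ((q.1.1, q.2.2), (q.2.1, q.1.2))) ?_ ?_
    · intro q hq
      rw [Finset.mem_coe, hE, Finset.mem_filter, Finset.mem_product] at hq
      obtain ⟨⟨ha, hb⟩, hc⟩ := hq
      have ha := hBPPP ha
      have hb := hBPPP hb
      have hu1 := hunit _ ha
      have hu2 := hunit _ hb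
      rw [hPP, Finset.mem_product] at ha hb
      rw [Finset.mem_coe, hE', Finset.mem_filter, Finset.mem_product, hPP, Finset.mem_product,
        Finset.mem_product]
      refine ⟨⟨⟨ha.1, hb.2⟩, hb.1, ha.2⟩, ?_⟩
      simp only [y] at hc
      rw [div_eq_div_iff hu1 hu2] at hc
      push_cast
      exact hc
    · rintro ⟨⟨a, b⟩, c, d⟩ _ ⟨⟨a', b'⟩, c', d'⟩ _ h
      simp only [Prod.mk.injEq] at h ⊢
      tauto
  have h5 : E'.card ≤ Z * A * (D * (Z * A / p + 1)) := by
    have hmaps : Set.MapsTo (fun q : (ℕ × ℕ) × ℕ × ℕ => q.1) (E' : Set _) (PP : Set (ℕ × ℕ)) := by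
      intro q hq
      exact (Finset.mem_product.1 (Finset.mem_filter.1 hq).1).1
    rw [Finset.card_eq_sum_card_fiberwise hmaps]
    have hc : PP.card = Z * A := by simp [hPP]
    rw [← hc, ← smul_eq_mul]
    refine Finset.sum_le_card_nsmul _ _ _ fun q hq => ?_
    rw [hc]
    refine le_trans ?_ (fac_count (p := p) Z A (q.1 * q.2) D hD)
    refine Finset.card_le_card_of_injOn (fun u => u.2) ?_ ?_
    · intro u hu
      simp only [Finset.mem_coe, Finset.mem_filter, hE', Finset.mem_product] at hu ⊢
      rw [← hu.2]
      refine ⟨?_, hu.1.2⟩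
      simpa [hPP] using hu.1.1.2
    · intro u hu u' hu' h
      have a1 := (Finset.mem_filter.1 hu).2
      have a2 := (Finset.mem_filter.1 hu').2
      exact Prod.ext (a1.trans a2.symm) h
  exact h2.trans (Nat.mul_le_mul_left _ (h3.trans (h4.trans h5)))

end Level

section Shift
variable {p : ℕ} [Fact p.Prime]

/-- short sum -/
noncomputable def sh (p : ℕ) [Fact p.Prime] (K x : ℕ) : ℝ :=
  ∑ k ∈ Finset.Icc 1 K, qc p ((x + k : ℕ) : ZMod p)

lemma sh_succ (K x : ℕ) : |sh p K (x + 1) - sh p K x| ≤ 2 := by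
  have h : sh p K (x + 1) - sh p K x = qc p ((x + 1 + K : ℕ) : ZMod p) - qc p ((x + 1 : ℕ) : ZMod p) := by
    induction K with
    | zero => simp [sh]
    | succ K ih =>
      have e : ∀ x, sh p (K + 1) x = sh p K x + qc p ((x + (K + 1) : ℕ) : ZMod p) := by
        intro x; simp only [sh]; rw [Finset.sum_Icc_succ_top (by omega)]
      rw [e, e]
      have e2 : x + (K + 1) = x + 1 + K := by ring
      rw [e2]
      linarith
  rw [h]
  have h1 := abs_sub (qc p ((x + 1 + K : ℕ) : ZMod p)) (qc p ((x + 1 : ℕ) : ZMod p))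
  have h2 := abs_qc_le (p := p) ((x + 1 + K : ℕ) : ZMod p)
  have h3 := abs_qc_le (p := p) ((x + 1 : ℕ) : ZMod p)
  linarith

lemma sh_shift (K x j : ℕ) : |sh p K (x + j) - sh p K x| ≤ 2 * j := by
  induction j with
  | zero => simp
  | succ j ih =>
    have h1 := sh_succ (p := p) K (x + j)
    have h2 := abs_add_le (sh p K (x + j + 1) - sh p K (x + j)) (sh p K (x + j) - sh p K x)
    rw [sub_add_sub_cancel] at h2
    push_cast
    rw [← add_assoc]
    linarith

lemma many_k (K A B x a : ℕ) (δ : ℝ) (hδ : 0 < δ) (hB : 1 ≤ B) (hAB : (A : ℝ) * B ≤ δ * K / 4)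
    (ha1 : 1 ≤ a) (haA : a ≤ A) (hAp : A < p) (hx : δ * K ≤ |sh p K x|) :
    δ * K / 4 ≤ (((Finset.Icc 1 K).filter fun k =>
      ((x + k : ℕ) : ZMod p) / (a : ZMod p) ∈ lev p B (δ / 4)).card : ℝ) := by
  classical
  have hB0 : (0 : ℝ) < B := by exact_mod_cast hB
  have haR : (a : ℝ) ≤ A := by exact_mod_cast haA
  have ha0 : (a : ZMod p) ≠ 0 := by
    intro h
    have := Nat.le_of_dvd (by omega) ((ZMod.natCast_eq_zero_iff _ p).1 h)
    omega
  let G : ℕ → ℝ := fun k => |∑ b ∈ Finset.Icc 1 B, qc p (((x + k : ℕ) : ZMod p) / (a : ZMod p) + (b : ZMod p))|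
  have hGle : ∀ k, G k ≤ B := by
    intro k
    refine (Finset.abs_sum_le_sum_abs _ _).trans ?_
    refine (Finset.sum_le_card_nsmul _ _ 1 fun b _ => abs_qc_le _).trans ?_
    simp
  have h1 : B * (δ * K / 2) ≤ |∑ b ∈ Finset.Icc 1 B, sh p K (x + a * b)| := by
    have hd : |∑ b ∈ Finset.Icc 1 B, (sh p K (x + a * b) - sh p K x)| ≤ B * (δ * K / 2) := by
      refine (Finset.abs_sum_le_sum_abs _ _).trans ?_
      refine (Finset.sum_le_card_nsmul _ _ (δ * K / 2) fun b hb => ?_).trans ?_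
      · refine (sh_shift K x (a * b)).trans ?_
        rw [Finset.mem_Icc] at hb
        have hbR : (b : ℝ) ≤ B := by exact_mod_cast hb.2
        push_cast
        have : (a : ℝ) * b ≤ A * B := by gcongr
        linarith
      · simp
    rw [Finset.sum_sub_distrib] at hd
    simp only [Finset.sum_const, Nat.card_Icc, nsmul_eq_mul, Nat.add_sub_cancel] at hd
    set S1 := ∑ b ∈ Finset.Icc 1 B, sh p K (x + a * b)
    have h2 := abs_sub_abs_le_abs_sub ((B : ℝ) * sh p K x) S1
    rw [abs_sub_comm, abs_mul, abs_of_pos hB0] at h2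
    have h3 : (B : ℝ) * (δ * K) ≤ B * |sh p K x| := by gcongr
    linarith
  have h2 : |∑ b ∈ Finset.Icc 1 B, sh p K (x + a * b)| ≤ ∑ k ∈ Finset.Icc 1 K, G k := by
    simp only [sh]
    rw [Finset.sum_comm]
    refine (Finset.abs_sum_le_sum_abs _ _).trans ?_
    refine Finset.sum_le_sum fun k _ => ?_
    have e : ∑ b ∈ Finset.Icc 1 B, qc p ((x + a * b + k : ℕ) : ZMod p) =
        qc p (a : ZMod p) * ∑ b ∈ Finset.Icc 1 B, qc p (((x + k : ℕ) : ZMod p) / (a : ZMod p) + (b : ZMod p)) := by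
      rw [Finset.mul_sum]
      refine Finset.sum_congr rfl fun b _ => ?_
      rw [← qc_mul]
      congr 1
      push_cast
      field_simp
      ring
    rw [e, abs_mul]
    exact mul_le_of_le_one_left (abs_nonneg _) (abs_qc_le _)
  set Fk := (Finset.Icc 1 K).filter fun k =>
      ((x + k : ℕ) : ZMod p) / (a : ZMod p) ∈ lev p B (δ / 4) with hFk
  have h3 : ∑ k ∈ Finset.Icc 1 K, G k ≤ ∑ k ∈ Finset.Icc 1 K, (δ / 4 * B + if ((x + k : ℕ) : ZMod p) / (a : ZMod p) ∈ lev p B (δ / 4) then (B : ℝ) else 0) := by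
    refine Finset.sum_le_sum fun k _ => ?_
    split_ifs with h
    · have := hGle k
      have : 0 ≤ δ / 4 * B := by positivity
      linarith
    · simp only [lev, Finset.mem_filter, Finset.mem_univ, true_and, not_le] at h
      have : G k < δ / 4 * B := h
      linarith
  rw [Finset.sum_add_distrib, ← Finset.sum_filter, ← hFk] at h3
  simp only [Finset.sum_const, Nat.card_Icc, nsmul_eq_mul, Nat.add_sub_cancel] at h3
  refine le_of_mul_le_mul_left ?_ hB0
  nlinarith

/-- bad starting points -/
noncomputable def badX (p : ℕ) [Fact p.Prime] (K Y : ℕ) (δ : ℝ) : Finset ℕ :=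
  (Finset.Icc 1 Y).filter fun x => δ * K ≤ |sh p K x|

lemma badX_count (K Y A B : ℕ) (δ : ℝ) (hδ : 0 < δ) (hB : 1 ≤ B) (hAB : (A : ℝ) * B ≤ δ * K / 4)
    (hAp : A < p) :
    ((badX p K Y δ).card : ℝ) * (A * (δ * K / 4)) ≤
      (min K Y : ℕ) * ((badPairs p (Y + K) A (lev p B (δ / 4))).card : ℝ) := by
  classical
  set L := lev p B (δ / 4)
  set U : Finset ((ℕ × ℕ) × ℕ) := ((badX p K Y δ ×ˢ Finset.Icc 1 A) ×ˢ Finset.Icc 1 K).filter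
    fun q => ((q.1.1 + q.2 : ℕ) : ZMod p) / (q.1.2 : ZMod p) ∈ L with hU
  have hlow : ((badX p K Y δ).card : ℝ) * (A * (δ * K / 4)) ≤ U.card := by
    have e : U.card = ∑ q ∈ badX p K Y δ ×ˢ Finset.Icc 1 A, ((Finset.Icc 1 K).filter fun k =>
      ((q.1 + k : ℕ) : ZMod p) / (q.2 : ZMod p) ∈ L).card := by
      rw [hU, Finset.card_filter, Finset.sum_product]
      refine Finset.sum_congr rfl fun q _ => ?_
      rw [Finset.card_filter]
    rw [e]
    push_cast
    have := Finset.card_nsmul_le_sum (badX p K Y δ ×ˢ Finset.Icc 1 A) (fun q => (((Finset.Icc 1 K).filter fun k =>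
      ((q.1 + k : ℕ) : ZMod p) / (q.2 : ZMod p) ∈ L).card : ℝ)) (δ * K / 4) (by
        intro q hq
        rw [Finset.mem_product, Finset.mem_Icc] at hq
        exact many_k K A B q.1 q.2 δ hδ hB hAB hq.2.1 hq.2.2 hAp (Finset.mem_filter.1 hq.1).2)
    rw [nsmul_eq_mul, Finset.card_product] at this
    push_cast at this
    simp only [Nat.card_Icc, Nat.add_sub_cancel] at this
    calc _ = _ := by ring
      _ ≤ _ := this
  have hup : U.card ≤ min K Y * (badPairs p (Y + K) A L).card := by
    refine Finset.card_le_mul_card_image_of_maps_to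
      (f := fun q : (ℕ × ℕ) × ℕ => (q.1.1 + q.2, q.1.2)) ?_ _ ?_
    · intro q hq
      simp only [hU, Finset.mem_filter, Finset.mem_product, Finset.mem_Icc, badX] at hq
      simp only [badPairs, Finset.mem_filter, Finset.mem_product, Finset.mem_Icc]
      exact ⟨⟨⟨by omega, by omega⟩, hq.1.1.2⟩, hq.2⟩
    · intro v hv
      refine le_min ?_ ?_
      · have := Finset.card_le_card_of_injOn (s := U.filter fun q => (q.1.1 + q.2, q.1.2) = v)
          (t := Finset.Icc 1 K) (fun q => q.2) (by
            intro q hq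
            simp only [hU, Finset.mem_coe, Finset.mem_filter, Finset.mem_product] at hq
            exact hq.1.1.2) (by
            rintro ⟨⟨a, b⟩, c⟩ hq ⟨⟨a', b'⟩, c'⟩ hq' h
            have h1 := (Finset.mem_filter.1 hq).2
            have h2 := (Finset.mem_filter.1 hq').2
            rw [← h2] at h1
            simp only [Prod.mk.injEq] at h1 h ⊢
            omega)
        simpa using this
      · have := Finset.card_le_card_of_injOn (s := U.filter fun q => (q.1.1 + q.2, q.1.2) = v)
          (t := Finset.Icc 1 Y) (fun q => q.1.1) (by
            intro q hq
            simp only [hU, Finset.mem_coe, Finset.mem_filter, Finset.mem_product, badX] at hq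
            exact hq.1.1.1.1.1) (by
            rintro ⟨⟨a, b⟩, c⟩ hq ⟨⟨a', b'⟩, c'⟩ hq' h
            have h1 := (Finset.mem_filter.1 hq).2
            have h2 := (Finset.mem_filter.1 hq').2
            rw [← h2] at h1
            simp only [Prod.mk.injEq] at h1 h ⊢
            omega)
        simpa using this
  refine hlow.trans ?_
  exact_mod_cast hup

end Shift

set_option maxHeartbeats 2000000 in
lemma badX_small (η δ E : ℝ) (hη : 0 < η) (hη' : η ≤ 1 / 4) (hδ : 0 < δ) (hδ' : δ ≤ 1) (hE : 1 ≤ E) :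
    ∃ C P : ℝ, 0 < C ∧ ∀ (p : ℕ) [Fact p.Prime], P ≤ (p : ℝ) → ∀ K Y : ℕ, 1 ≤ Y →
      (p : ℝ) ^ η ≤ K → (p : ℝ) ^ (1 / 2 + η) ≤ K * Y → (Y : ℝ) + K ≤ (p : ℝ) ^ E →
      ((badX p K Y δ).card : ℝ) ≤ C * (p : ℝ) ^ (-(η / 16)) * Y := by
  set ε := η / 16 with hε
  have hε0 : 0 < ε := by positivity
  set s : ℕ := ⌈2 / η⌉₊ with hs
  have hs1 : 1 ≤ s := Nat.one_le_ceil_iff.2 (by positivity)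
  have hsη : 1 ≤ η / 2 * s := by
    have : 2 / η ≤ s := Nat.le_ceil _
    calc (1 : ℝ) = η / 2 * (2 / η) := by field_simp
      _ ≤ _ := by gcongr
  obtain ⟨C1, hC1, hdiv⟩ := divisor_bound (ε / (E + 1)) (by positivity)
  set CL : ℝ := (s ^ (2 * s) + 126 * s) / (δ / 4) ^ (2 * s) with hCL
  have hCL0 : 0 < CL := by
    have : (0 : ℝ) < s := by exact_mod_cast hs1
    positivity
  obtain ⟨P1, hP1⟩ := Filter.eventually_atTop.1
    ((tendsto_rpow_atTop (by positivity : 0 < η / 4)).eventually_ge_atTop (8 / δ))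
  refine ⟨√(128 * CL * C1 / δ ^ 2), max P1 (max (8 * s + 16) (4 ^ s)), by positivity, ?_⟩
  intro p _ hP K Y hY hK hKY hYK
  have hp := (Fact.out : p.Prime)
  have hp1 : (1 : ℝ) ≤ p := by exact_mod_cast hp.one_le
  have hp0 : (0 : ℝ) < p := by linarith
  have hPa := hP1 p ((le_max_left _ _).trans hP)
  have hPb : (8 * s + 16 : ℝ) ≤ p := (le_max_left _ _).trans ((le_max_right _ _).trans hP)
  have hPc : (4 : ℝ) ^ s ≤ p := (le_max_right _ _).trans ((le_max_right _ _).trans hP)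
  have hps : 8 * s + 16 ≤ p := by exact_mod_cast hPb
  have hδp : 1 ≤ δ / 8 * (p : ℝ) ^ (η / 4) := by
    have : δ / 8 * (8 / δ) ≤ δ / 8 * (p : ℝ) ^ (η / 4) := by gcongr
    have e : δ / 8 * (8 / δ) = 1 := by field_simp
    linarith
  have hsqp : √(p : ℝ) * √(p : ℝ) = p := Real.mul_self_sqrt hp0.le
  have hsq1 : 1 < √(p : ℝ) := by
    rw [Real.lt_sqrt (by norm_num)]
    have : (1 : ℝ) < p := by exact_mod_cast hp.one_lt
    simpa using this
  -- B
  set B : ℕ := ⌊(p : ℝ) ^ (η / 2)⌋₊ with hB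
  have hpθ1 : (1 : ℝ) ≤ (p : ℝ) ^ (η / 2) := Real.one_le_rpow hp1 (by positivity)
  have hB1 : 1 ≤ B := Nat.le_floor (by simpa using hpθ1)
  have hBle : (B : ℝ) ≤ (p : ℝ) ^ (η / 2) := Nat.floor_le (by positivity)
  have hBge : (p : ℝ) ^ (η / 2) / 2 ≤ B := by
    have h1 := Nat.lt_floor_add_one ((p : ℝ) ^ (η / 2))
    have h2 : (1 : ℝ) ≤ B := by exact_mod_cast hB1
    rw [← hB] at h1
    linarith
  have hB0 : (0 : ℝ) < B := by exact_mod_cast hB1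
  have hBp : B < p := by
    have h1 : (p : ℝ) ^ (η / 2) < (p : ℝ) ^ (1 : ℝ) :=
      Real.rpow_lt_rpow_of_exponent_lt (by exact_mod_cast hp.one_lt) (by linarith)
    rw [Real.rpow_one] at h1
    exact_mod_cast hBle.trans_lt h1
  have hBs : √(p : ℝ) ≤ (B : ℝ) ^ s := by
    have h1 : ((p : ℝ) ^ (η / 2) / 2) ^ s ≤ (B : ℝ) ^ s := by gcongr
    rw [div_pow, ← Real.rpow_natCast, ← Real.rpow_mul hp0.le] at h1
    have h2 : (p : ℝ) ^ (1 : ℝ) ≤ (p : ℝ) ^ (η / 2 * s) := Real.rpow_le_rpow_of_exponent_le hp1 hsη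
    rw [Real.rpow_one] at h2
    have h3 : (2 : ℝ) ^ s ≤ √p := by
      apply Real.le_sqrt_of_sq_le
      rw [← pow_mul, mul_comm, pow_mul]; norm_num; exact hPc
    refine le_trans ?_ h1
    rw [le_div_iff₀ (by positivity)]
    refine le_trans ?_ h2
    calc √(p : ℝ) * 2 ^ s ≤ √(p : ℝ) * √(p : ℝ) := by gcongr
      _ = p := hsqp
  -- A
  set v : ℝ := min (δ * K / (4 * B)) (√p) with hv
  have hηsplit : (p : ℝ) ^ η = (p : ℝ) ^ (η / 2) * (p : ℝ) ^ (η / 2) := by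
    rw [← Real.rpow_add hp0]; congr 1; ring
  have hη2 : (p : ℝ) ^ (η / 2) = (p : ℝ) ^ (η / 4) * (p : ℝ) ^ (η / 4) := by
    rw [← Real.rpow_add hp0]; congr 1; ring
  have hpq1 : (1 : ℝ) ≤ (p : ℝ) ^ (η / 4) := Real.one_le_rpow hp1 (by positivity)
  have hδp2 : 1 ≤ δ / 8 * (p : ℝ) ^ (η / 2) := by
    rw [hη2]; rw [← mul_assoc]; exact one_le_mul_of_one_le_of_one_le hδp hpq1
  have hv1 : 1 ≤ v := by
    refine le_min ?_ hsq1.le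
    rw [le_div_iff₀ (by positivity)]
    have h1 : δ * ((p : ℝ) ^ (η / 2) * (p : ℝ) ^ (η / 2)) ≤ δ * K := by rw [← hηsplit]; gcongr
    have h2 : (p : ℝ) ^ (η / 2) * 1 ≤ (p : ℝ) ^ (η / 2) * (δ / 8 * (p : ℝ) ^ (η / 2)) := by gcongr
    linarith
  set A : ℕ := ⌊v⌋₊ with hA
  have hAle : (A : ℝ) ≤ v := Nat.floor_le (by linarith)
  have hA1 : 1 ≤ A := Nat.le_floor (by simpa using hv1)
  have hAge : v / 2 ≤ A := by
    have h1 := Nat.lt_floor_add_one v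
    have h2 : (1 : ℝ) ≤ A := by exact_mod_cast hA1
    rw [← hA] at h1
    linarith
  have hAsq : (A : ℝ) ≤ √p := hAle.trans (min_le_right _ _)
  have hAp' : (A : ℝ) < p := by
    refine lt_of_le_of_lt hAsq ?_
    calc √(p : ℝ) = √(p : ℝ) * 1 := (mul_one _).symm
      _ < √(p : ℝ) * √(p : ℝ) := by gcongr
      _ = p := hsqp
  have hAp : A < p := by exact_mod_cast hAp'
  have hAB : (A : ℝ) * B ≤ δ * K / 4 := by
    have h1 : (A : ℝ) ≤ δ * K / (4 * B) := hAle.trans (min_le_left _ _)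
    rw [le_div_iff₀ (by positivity)] at h1
    linarith
  -- W
  set Z := Y + K with hZ
  have hZR : (Z : ℝ) = Y + K := by push_cast [hZ]; ring
  have hY0 : (1 : ℝ) ≤ Y := by exact_mod_cast hY
  have hK0 : (0 : ℝ) < K := lt_of_lt_of_le (by positivity) hK
  set W : ℝ := (Z : ℝ) * A with hW
  have hhalf : √(p : ℝ) = (p : ℝ) ^ (1 / 2 : ℝ) := Real.sqrt_eq_rpow _
  have hWge : (p : ℝ) ^ (1 / 2 + 4 * ε) ≤ W := by
    have e0 : (p : ℝ) ^ (1 / 2 + 4 * ε) = √p * (p : ℝ) ^ (η / 4) := by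
      rw [hhalf, ← Real.rpow_add hp0]; congr 1; rw [hε]; ring
    have e1 : (p : ℝ) ^ (1 / 2 + η) = √p * (p : ℝ) ^ (η / 2) * (p : ℝ) ^ (η / 2) := by
      rw [hhalf, ← Real.rpow_add hp0, ← Real.rpow_add hp0]; congr 1; ring
    have hmid : √p * (p : ℝ) ^ (η / 4) ≤ δ / 8 * (√p * (p : ℝ) ^ (η / 2)) := by
      have : √p * (p : ℝ) ^ (η / 4) * 1 ≤ √p * (p : ℝ) ^ (η / 4) * (δ / 8 * (p : ℝ) ^ (η / 4)) := by gcongr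
      rw [hη2]; linarith
    rw [e0]
    refine hmid.trans ?_
    have h1 : (Z : ℝ) * (v / 2) ≤ W := by rw [hW]; gcongr
    refine le_trans ?_ h1
    rcases min_choice (δ * K / (4 * B)) (√(p : ℝ)) with h | h
    · rw [hv, h]
      have h2 : (K : ℝ) * Y ≤ Z * K := by rw [hZR]; have := mul_pos hK0 hK0; linarith
      have h3 : (Z : ℝ) * (δ * K / (4 * B) / 2) = δ / 8 * (Z * K) / B := by field_simp; ring
      rw [h3, le_div_iff₀ hB0]
      have h4 : δ / 8 * (√p * (p : ℝ) ^ (η / 2)) * B ≤ δ / 8 * (√p * (p : ℝ) ^ (η / 2)) * (p : ℝ) ^ (η / 2) := by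
        gcongr
      refine h4.trans ?_
      have h5 : δ / 8 * (p : ℝ) ^ (1 / 2 + η) ≤ δ / 8 * (Z * K) := by
        gcongr; linarith
      rw [e1] at h5
      linarith
    · rw [hv, h]
      have h2 : (p : ℝ) ^ (η / 2) ≤ Z := by
        have : (p : ℝ) ^ (η / 2) ≤ (p : ℝ) ^ η := Real.rpow_le_rpow_of_exponent_le hp1 (by linarith)
        rw [hZR]; linarith
      have h3 : √p * (p : ℝ) ^ (η / 2) ≤ √p * Z := by gcongr
      have h4 : 0 ≤ √p * (p : ℝ) ^ (η / 2) := by positivity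
      have h5 := mul_le_mul_of_nonneg_right hδ' h4
      linarith
  have hW0 : 0 < W := lt_of_lt_of_le (by positivity) hWge
  have hWle : W ≤ (p : ℝ) ^ (E + 1) := by
    rw [Real.rpow_add hp0, Real.rpow_one, hW, hZR]
    gcongr
  -- D
  set D : ℕ := ⌊C1 * (p : ℝ) ^ ε⌋₊ with hD
  have hDle : (D : ℝ) ≤ C1 * (p : ℝ) ^ ε := Nat.floor_le (by positivity)
  have hDdiv : ∀ n, 1 ≤ n → n ≤ Z * A → n.divisors.card ≤ D := by
    intro n hn1 hn
    apply Nat.le_floor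
    refine (hdiv n hn1).trans ?_
    gcongr
    have h1 : (n : ℝ) ≤ (p : ℝ) ^ (E + 1) := by
      refine le_trans ?_ hWle
      rw [hW]; exact_mod_cast hn
    calc (n : ℝ) ^ (ε / (E + 1)) ≤ ((p : ℝ) ^ (E + 1)) ^ (ε / (E + 1)) := by gcongr
      _ = (p : ℝ) ^ ε := by
        rw [← Real.rpow_mul hp0.le]; congr 1; field_simp
  have hL := lev_bound s hs1 hps B hB1 hBp hBs (δ / 4) (by positivity)
  rw [← hCL] at hL
  have hpc := pair_count Z A D hAp (lev p B (δ / 4)) hDdiv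
  have hbx := badX_count K Y A B δ hδ hB1 hAB hAp
  set G := (badPairs p (Y + K) A (lev p B (δ / 4))).card with hG
  have hG2 : (G : ℝ) ^ 2 ≤ CL * √p * (W * (C1 * (p : ℝ) ^ ε * (W / p + 1))) := by
    have h1 : (G : ℝ) ^ 2 ≤ ((lev p B (δ / 4)).card : ℝ) * (W * (D * ((Z * A / p : ℕ) + 1))) := by
      rw [hW]; exact_mod_cast hpc
    refine h1.trans ?_
    have h2 : ((Z * A / p : ℕ) : ℝ) ≤ W / p := by
      refine Nat.cast_div_le.trans ?_
      rw [hW]; push_cast; rfl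
    gcongr
  set bd : ℝ := ((badX p K Y δ).card : ℝ) with hbd
  have hbd0 : 0 ≤ bd := by positivity
  have hmain : bd * (W * (δ / 8)) ≤ Y * G := by
    have hmin : ((min K Y : ℕ) : ℝ) * Z ≤ 2 * K * Y := by
      rw [hZR]
      rcases le_total K Y with h | h
      · rw [min_eq_left h]
        have : (K : ℝ) ≤ Y := by exact_mod_cast h
        have := mul_le_mul_of_nonneg_left this hK0.le; linarith
      · rw [min_eq_right h]
        have : (Y : ℝ) ≤ K := by exact_mod_cast h
        have := mul_le_mul_of_nonneg_left this (by linarith : (0:ℝ) ≤ Y); linarith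
    have h1 : bd * (A * (δ * K / 4)) * Z ≤ ((min K Y : ℕ) : ℝ) * G * Z := by gcongr
    have h2 : ((min K Y : ℕ) : ℝ) * Z * G ≤ 2 * K * Y * G := by gcongr
    refine le_of_mul_le_mul_left ?_ hK0
    rw [hW]
    linarith
  have hsq : bd ^ 2 * (W ^ 2 * (δ ^ 2 / 64)) ≤ Y ^ 2 * (CL * √p * (W * (C1 * (p : ℝ) ^ ε * (W / p + 1)))) := by
    calc bd ^ 2 * (W ^ 2 * (δ ^ 2 / 64)) = (bd * (W * (δ / 8))) ^ 2 := by ring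
      _ ≤ ((Y : ℝ) * G) ^ 2 := by gcongr
      _ = (Y : ℝ) ^ 2 * (G : ℝ) ^ 2 := by ring
      _ ≤ _ := by gcongr
  -- p^{1/2+ε} (W/p+1) ≤ 2 W p^{-2ε}
  have hfin : √p * (p : ℝ) ^ ε * (W / p + 1) ≤ 2 * W * (p : ℝ) ^ (-(2 * ε)) := by
    have h1 : √p * (p : ℝ) ^ ε * (W / p) ≤ W * (p : ℝ) ^ (-(2 * ε)) := by
      have e : √p * (p : ℝ) ^ ε * (W / p) = W * (p : ℝ) ^ (1 / 2 + ε - 1) := by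
        rw [Real.rpow_sub hp0, Real.rpow_add hp0, Real.rpow_one, hhalf]; ring
      rw [e]
      gcongr
      rw [hε]; linarith

    have h2 : √p * (p : ℝ) ^ ε ≤ W * (p : ℝ) ^ (-(2 * ε)) := by
      have h3 : (p : ℝ) ^ (1 / 2 + 4 * ε) * (p : ℝ) ^ (-(2 * ε)) ≤ W * (p : ℝ) ^ (-(2 * ε)) := by gcongr
      refine le_trans ?_ h3
      rw [hhalf, ← Real.rpow_add hp0, ← Real.rpow_add hp0]
      exact Real.rpow_le_rpow_of_exponent_le hp1 (by linarith)
    linarith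
  have hsq2 : bd ^ 2 ≤ (128 * CL * C1 / δ ^ 2) * (p : ℝ) ^ (-(2 * ε)) * Y ^ 2 := by
    have h1 : bd ^ 2 * (W ^ 2 * (δ ^ 2 / 64)) ≤ Y ^ 2 * (CL * C1 * W * (2 * W * (p : ℝ) ^ (-(2 * ε)))) := by
      refine hsq.trans ?_
      have : CL * C1 * W * (√p * (p : ℝ) ^ ε * (W / p + 1)) ≤ CL * C1 * W * (2 * W * (p : ℝ) ^ (-(2 * ε))) := by
        gcongr
      calc _ = Y ^ 2 * (CL * C1 * W * (√p * (p : ℝ) ^ ε * (W / p + 1))) := by ring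
        _ ≤ _ := by gcongr
    refine le_of_mul_le_mul_right ?_ (by positivity : 0 < W ^ 2 * (δ ^ 2 / 64))
    refine h1.trans (le_of_eq ?_)
    field_simp
    ring
  have hpe : (p : ℝ) ^ (-(2 * ε)) = ((p : ℝ) ^ (-ε)) ^ 2 := by
    rw [← Real.rpow_natCast, ← Real.rpow_mul hp0.le]; congr 1; push_cast; ring
  refine le_of_sq_le_sq ?_ (by positivity)
  rw [mul_pow, mul_pow, Real.sq_sqrt (by positivity), ← hpe]
  exact hsq2

lemma qc_pt (p : ℕ) [Fact p.Prime] (a : ZMod p) :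
    1 + qc p a ≤ 2 * (if qc p a = 1 then (1 : ℝ) else 0) + (if a = 0 then (1 : ℝ) else 0) := by
  by_cases ha : a = 0
  · subst ha
    simp [qc]
  · rcases quadraticChar_dichotomy ha with h | h
    · simp [qc, h, ha]; norm_num
    · simp [qc, h, ha]; norm_num

lemma zero_count (p : ℕ) [Fact p.Prime] (K x : ℕ) :
    ((Icc 1 K).filter fun k : ℕ => ((x + k : ℕ) : ZMod p) = 0).card ≤ K / p + 1 := by
  refine le_trans (Finset.card_le_card ?_) (mod_count (p := p) K (-(x : ZMod p)).val)
  intro k hk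
  rw [Finset.mem_filter] at hk ⊢
  refine ⟨hk.1, ?_⟩
  rw [ZMod.natCast_val, ZMod.cast_id]
  have := hk.2
  push_cast at this
  linear_combination this

lemma good_k (p : ℕ) [Fact p.Prime] (K x : ℕ) (hs : |sh p K x| ≤ 1 / 4 * K)
    (hz : ((K / p : ℕ) : ℝ) + 1 ≤ K / 4) :
    (K : ℝ) / 4 ≤ (((Icc 1 K).filter fun k : ℕ => qc p ((x + k : ℕ) : ZMod p) = 1).card : ℝ) := by
  have h := Finset.sum_le_sum (s := Icc 1 K) fun k _ => qc_pt p ((x + k : ℕ) : ZMod p)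
  rw [Finset.sum_add_distrib, Finset.sum_add_distrib, ← Finset.mul_sum, Finset.sum_boole, Finset.sum_boole] at h
  simp only [Finset.sum_const, Nat.card_Icc, nsmul_eq_mul, Nat.add_sub_cancel, mul_one] at h
  have h0 : (((Icc 1 K).filter fun k : ℕ => ((x + k : ℕ) : ZMod p) = 0).card : ℝ) ≤ ((K / p : ℕ) : ℝ) + 1 := by
    exact_mod_cast zero_count p K x
  have h1 := (abs_le.1 hs).1
  change _ + sh p K x ≤ _ at h
  linarith

lemma isQuadRes_of_qc (p : ℕ) [Fact p.Prime] (z : ℤ) (h : qc p (z : ZMod p) = 1) : IsQuadRes p z := by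
  have h' : quadraticChar (ZMod p) (z : ZMod p) = 1 := by
    unfold qc at h; exact_mod_cast h
  have h0 : (z : ZMod p) ≠ 0 := by
    intro h0; rw [h0] at h'; simp at h'
  refine ⟨fun hd => h0 ((ZMod.intCast_zmod_eq_zero_iff_dvd _ _).2 hd), ?_⟩
  obtain ⟨y, hy⟩ := (quadraticChar_one_iff_isSquare h0).1 h'
  refine ⟨(y.val : ℤ), ?_⟩
  rw [← ZMod.intCast_eq_intCast_iff]
  push_cast
  rw [ZMod.natCast_val, ZMod.cast_id, hy]; ring

lemma bad_pairs_count (ℳ 𝒩 : Finset ℤ) (hM : ∀ m ∈ ℳ, 1 ≤ m) (hN : ∀ n ∈ 𝒩, 1 ≤ n)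
    (B : Finset ℕ) (hB : ∀ x ∈ B, 1 ≤ x) (D : ℕ) (hD : ∀ x ∈ B, x.divisors.card ≤ D) :
    ((ℳ ×ˢ 𝒩).filter fun t => (t.1 * t.2).toNat ∈ B).card ≤ D * B.card := by
  refine Finset.card_le_mul_card_image_of_maps_to
      (f := fun t : ℤ × ℤ => (t.1 * t.2).toNat) ?_ _ ?_
  · intro t ht
    exact (Finset.mem_filter.1 ht).2
  · intro x hx
    refine le_trans ?_ (hD x hx)
    refine Finset.card_le_card_of_injOn (fun t : ℤ × ℤ => t.1.toNat) ?_ ?_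
    · intro t ht
      simp only [Finset.mem_coe, Finset.mem_filter, Finset.mem_product] at ht
      have h1 := hM _ ht.1.1.1
      have h2 := hN _ ht.1.1.2
      have h3 := hB x hx
      simp only [Finset.mem_coe, Nat.mem_divisors]
      refine ⟨⟨t.2.toNat, ?_⟩, by omega⟩
      rw [← ht.2, Int.toNat_mul (by omega) (by omega)]
    · intro t ht u hu htu
      simp only [Finset.mem_coe, Finset.mem_filter, Finset.mem_product] at ht hu
      have h1 := hM _ ht.1.1.1
      have h2 := hN _ ht.1.1.2
      have h1' := hM _ hu.1.1.1
      have h2' := hN _ hu.1.1.2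
      have h3 : t.1 = u.1 := by simp only at htu; omega
      have h4 : 0 < t.1 * t.2 := by positivity
      have h5 : 0 < u.1 * u.2 := by positivity
      have h6 : t.1 * t.2 = u.1 * u.2 := by omega
      rw [← h3] at h6
      have h7 := mul_left_cancel₀ (by omega) h6
      exact Prod.ext h3 h7

open Classical in
lemma count_lower (p : ℕ) [Fact p.Prime] (K Y : ℕ) (ℳ 𝒩 : Finset ℤ)
    (hM : ∀ m ∈ ℳ, 1 ≤ m) (hN : ∀ n ∈ 𝒩, 1 ≤ n) (hY : ∀ m ∈ ℳ, ∀ n ∈ 𝒩, (m * n).toNat ≤ Y)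
    (D : ℕ) (hD : ∀ x, 1 ≤ x → x ≤ Y → x.divisors.card ≤ D)
    (hz : ((K / p : ℕ) : ℝ) + 1 ≤ K / 4) :
    ((ℳ.card : ℝ) * 𝒩.card - D * (badX p K Y (1 / 4)).card) * (K / 4) ≤
      ((((ℳ ×ˢ 𝒩) ×ˢ Finset.Icc (1 : ℤ) (K : ℤ)).filter
          fun t => IsQuadRes p (t.1.1 * t.1.2 + t.2)).card : ℝ) := by
  set B := badX p K Y (1 / 4) with hB
  set bad := (ℳ ×ˢ 𝒩).filter fun t => (t.1 * t.2).toNat ∈ B with hbad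
  set good := (ℳ ×ˢ 𝒩).filter fun t => ¬ (t.1 * t.2).toNat ∈ B with hgood
  have hbc : bad.card ≤ D * B.card := by
    apply bad_pairs_count ℳ 𝒩 hM hN B
    · intro x hx
      exact (Finset.mem_Icc.1 (Finset.mem_filter.1 hx).1).1
    · intro x hx
      have := Finset.mem_Icc.1 (Finset.mem_filter.1 hx).1
      exact hD x this.1 this.2
  have hsum : bad.card + good.card = ℳ.card * 𝒩.card := by
    rw [← Finset.card_product]
    exact Finset.card_filter_add_card_filter_not _
  have hgc : (ℳ.card : ℝ) * 𝒩.card - D * B.card ≤ good.card := by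
    have h1 : (bad.card : ℝ) ≤ D * B.card := by exact_mod_cast hbc
    have h2 : (bad.card : ℝ) + good.card = ℳ.card * 𝒩.card := by exact_mod_cast hsum
    linarith
  have hK0 : (0 : ℝ) ≤ K / 4 := by positivity
  refine (mul_le_mul_of_nonneg_right hgc hK0).trans ?_
  have e : (((ℳ ×ˢ 𝒩) ×ˢ Finset.Icc (1 : ℤ) (K : ℤ)).filter
          fun t => IsQuadRes p (t.1.1 * t.1.2 + t.2)).card = ∑ q ∈ ℳ ×ˢ 𝒩,
          ((Finset.Icc (1 : ℤ) (K : ℤ)).filter fun k => IsQuadRes p (q.1 * q.2 + k)).card := by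
    rw [Finset.card_filter, Finset.sum_product]
    refine Finset.sum_congr rfl fun q _ => ?_
    rw [Finset.card_filter]
  rw [e]
  have hsub : good ⊆ ℳ ×ˢ 𝒩 := Finset.filter_subset _ _
  refine le_trans ?_ (Nat.cast_le.2 (Finset.sum_le_sum_of_subset hsub))
  push_cast
  rw [← nsmul_eq_mul]
  refine Finset.card_nsmul_le_sum _ _ _ fun q hq => ?_
  rw [hgood, Finset.mem_filter, Finset.mem_product] at hq
  have h1 := hM _ hq.1.1
  have h2 := hN _ hq.1.2
  have h3 := hY _ hq.1.1 _ hq.1.2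
  have hpos : 0 < q.1 * q.2 := by positivity
  set x := (q.1 * q.2).toNat with hx
  have hx1 : 1 ≤ x := by omega
  have hxz : (x : ℤ) = q.1 * q.2 := by omega
  have hs : |sh p K x| ≤ 1 / 4 * K := by
    have := hq.2
    rw [hB, badX, Finset.mem_filter, not_and, not_le] at this
    exact (this (Finset.mem_Icc.2 ⟨hx1, h3⟩)).le
  refine (good_k p K x hs hz).trans ?_
  rw [Nat.cast_le]
  refine Finset.card_le_card_of_injOn (fun k : ℕ => (k : ℤ)) ?_ ?_
  · intro k hk
    simp only [Finset.mem_coe, Finset.mem_filter, Finset.mem_Icc] at hk ⊢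
    refine ⟨by omega, isQuadRes_of_qc p _ ?_⟩
    rw [← hxz]
    have := hk.2
    push_cast at this ⊢
    exact this
  · intro a _ b _ h
    exact Int.ofNat.inj h

lemma X_bound (q a η T : ℝ) (hq : 1 ≤ q) (ha : 1 ≤ a) (hT : 0 < T) :
    q ^ (1 / 2 + η) ≤ (q ^ (a + η) / T ^ 2 + q ^ η) * T := by
  have hq0 : 0 < q := by linarith
  set u := q ^ (a / 2) with hu
  have hu0 : 0 < u := by positivity
  have e1 : q ^ (a + η) = q ^ η * u ^ 2 := by
    rw [hu, ← Real.rpow_natCast, ← Real.rpow_mul hq0.le, ← Real.rpow_add hq0]; congr 1; push_cast; ring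
  have h1 : q ^ (1 / 2 + η) ≤ q ^ η * u := by
    rw [hu, ← Real.rpow_add hq0]
    exact Real.rpow_le_rpow_of_exponent_le hq (by linarith)
  refine h1.trans ?_
  have e2 : (q ^ (a + η) / T ^ 2 + q ^ η) * T = q ^ η * ((u ^ 2 + T ^ 2) / T) := by
    rw [e1]; field_simp
  rw [e2]
  gcongr
  rw [le_div_iff₀ hT]
  nlinarith [sq_nonneg (u - T)]

open Classical in
/-- Quantitative version of Theorem 2.11: the number of triples `(m, n, k)` with
`m·n + k` a quadratic residue modulo `p` is of the expected order of magnitude. -/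
theorem iwaniec_sarkozy_analogue_count (r : ℕ) (hr : 0 < r) (c₀ η : ℝ)
    (hc₀ : 0 < c₀) (hc₀' : c₀ < 1) (hη : 0 < η) :
    ∃ c : ℝ, 0 < c ∧ ∃ P : ℝ, ∀ (p : ℕ), p.Prime → P ≤ (p : ℝ) →
      ∀ (M N : ℝ), 1 ≤ M → 1 ≤ N →
        M ^ 4 * N ^ 2 ≥ (p : ℝ) ^ (1 + 1 / (r : ℝ) + η : ℝ) →
      ∀ (ℳ 𝒩 : Finset ℤ),
        (∀ m ∈ ℳ, M ≤ (m : ℝ) ∧ (m : ℝ) ≤ 2 * M ∧ 1 ≤ m ∧ m ≤ (p : ℤ)) →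
        (∀ n ∈ 𝒩, N ≤ (n : ℝ) ∧ (n : ℝ) ≤ 2 * N ∧ 1 ≤ n ∧ n ≤ (p : ℤ)) →
        c₀ * M ≤ (ℳ.card : ℝ) → c₀ * N ≤ (𝒩.card : ℝ) →
      ∀ K : ℕ, K = ⌊(p : ℝ) ^ (1 + 1 / (r : ℝ) + η : ℝ) / (M * N) ^ 2 + (p : ℝ) ^ η⌋₊ →
      c * K * M * N ≤
        ((((ℳ ×ˢ 𝒩) ×ˢ Finset.Icc (1 : ℤ) (K : ℤ)).filter
          fun t => IsQuadRes p (t.1.1 * t.1.2 + t.2)).card : ℝ) := by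
  set η₀ : ℝ := min (η / 2) (1 / 4) with hη₀
  have hη₀0 : 0 < η₀ := lt_min (by positivity) (by norm_num)
  have hη₀1 : η₀ ≤ η / 2 := min_le_left _ _
  have hη₀2 : η₀ ≤ 1 / 4 := min_le_right _ _
  set E : ℝ := 3 + η with hE
  have hE0 : 0 < E := by positivity
  obtain ⟨C, P0, hC, hbx⟩ := badX_small η₀ (1 / 4) E hη₀0 hη₀2 (by norm_num) (by norm_num) (by linarith)
  obtain ⟨C2, hC2, hdiv⟩ := divisor_bound (η₀ / 32 / E) (by positivity)
  obtain ⟨P1, hP1⟩ := Filter.eventually_atTop.1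
    ((tendsto_rpow_atTop (by positivity : 0 < η / 2)).eventually_ge_atTop 16)
  obtain ⟨P2, hP2⟩ := Filter.eventually_atTop.1
    ((tendsto_rpow_atTop (by positivity : 0 < η₀ / 32)).eventually_ge_atTop (8 * C * C2 / c₀ ^ 2))
  refine ⟨c₀ ^ 2 / 8, by positivity, max (max P0 8) (max P1 P2), ?_⟩
  intro p hp hP M N hM hN _ ℳ 𝒩 hℳ h𝒩 hMc hNc K hK
  have : Fact p.Prime := ⟨hp⟩
  have hP0 : P0 ≤ (p : ℝ) := (le_max_left _ _).trans ((le_max_left _ _).trans hP)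
  have hq8 : (8 : ℝ) ≤ (p : ℝ) := (le_max_right _ _).trans ((le_max_left _ _).trans hP)
  have hPa := hP1 p ((le_max_left _ _).trans ((le_max_right _ _).trans hP))
  have hPb := hP2 p ((le_max_right _ _).trans ((le_max_right _ _).trans hP))
  clear hP1 hP2 hP
  set q : ℝ := (p : ℝ) with hq
  have hq1 : 1 ≤ q := by linarith
  have hq0 : 0 < q := by linarith
  set a : ℝ := 1 + 1 / (r : ℝ) with ha
  have hr1 : (1 : ℝ) ≤ r := by exact_mod_cast hr
  have ha1 : 1 ≤ a := by
    have : 0 ≤ 1 / (r : ℝ) := by positivity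
    linarith
  have ha2 : a ≤ 2 := by
    have : 1 / (r : ℝ) ≤ 1 := by rw [div_le_one (by linarith)]; exact hr1
    linarith
  set T : ℝ := M * N with hT
  have hT1 : 1 ≤ T := one_le_mul_of_one_le_of_one_le hM hN
  have hT0 : 0 < T := by linarith
  set X : ℝ := q ^ (a + η) / T ^ 2 + q ^ η with hX
  have hXη : q ^ η ≤ X := by
    have : 0 ≤ q ^ (a + η) / T ^ 2 := by positivity
    linarith
  have hηs : q ^ η = q ^ (η / 2) * q ^ (η / 2) := by
    rw [← Real.rpow_add hq0]; congr 1; ring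
  have hX16 : 16 * q ^ (η / 2) ≤ X := by
    refine le_trans ?_ hXη
    rw [hηs]; gcongr
  have hX1 : 256 ≤ X := by linarith
  have hKX : (K : ℝ) ≤ X := by rw [hK]; exact Nat.floor_le (by linarith)
  have hKX2 : X / 2 ≤ K := by
    have h1 := Nat.lt_floor_add_one X
    rw [← hK] at h1
    linarith
  have hK8 : (8 : ℝ) ≤ K := by linarith
  -- Y
  set Y : ℕ := ⌊4 * T⌋₊ with hY
  have hYle : (Y : ℝ) ≤ 4 * T := Nat.floor_le (by linarith)
  have hYge : 2 * T ≤ Y := by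
    have h1 := Nat.lt_floor_add_one (4 * T)
    rw [← hY] at h1
    linarith
  have hY1 : 1 ≤ Y := by
    have : (1 : ℝ) ≤ Y := by linarith
    exact_mod_cast this
  have hMq : M ≤ q := by
    have h1 : 0 < (ℳ.card : ℝ) := lt_of_lt_of_le (by positivity) hMc
    obtain ⟨m, hm⟩ := Finset.card_pos.1 (by exact_mod_cast h1 : 0 < ℳ.card)
    have h2 := hℳ m hm
    refine h2.1.trans ?_
    rw [hq]
    exact_mod_cast h2.2.2.2
  have hNq : N ≤ q := by
    have h1 : 0 < (𝒩.card : ℝ) := lt_of_lt_of_le (by positivity) hNc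
    obtain ⟨m, hm⟩ := Finset.card_pos.1 (by exact_mod_cast h1 : 0 < 𝒩.card)
    have h2 := h𝒩 m hm
    refine h2.1.trans ?_
    rw [hq]
    exact_mod_cast h2.2.2.2
  have hYK : (Y : ℝ) + K ≤ q ^ E := by
    have h1 : T ≤ q ^ (2 + η) := by
      have h2 : T ≤ q * q := by rw [hT]; gcongr
      have h3 : q ^ (2 : ℝ) ≤ q ^ (2 + η) := Real.rpow_le_rpow_of_exponent_le hq1 (by linarith)
      have h4 : q ^ (2 : ℝ) = q * q := by rw [Real.rpow_two]; ring
      rw [h4] at h3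
      exact h2.trans h3
    have h2 : X ≤ 2 * q ^ (2 + η) := by
      have h3 : q ^ η ≤ q ^ (2 + η) := Real.rpow_le_rpow_of_exponent_le hq1 (by linarith)
      have h4 : q ^ (a + η) ≤ q ^ (2 + η) := Real.rpow_le_rpow_of_exponent_le hq1 (by linarith)
      have h5 : q ^ (a + η) / T ^ 2 ≤ q ^ (a + η) := div_le_self (by positivity) (one_le_pow₀ hT1)
      linarith
    have h3 : q ^ E = q * q ^ (2 + η) := by
      rw [hE, show 3 + η = 1 + (2 + η) by ring, Real.rpow_add hq0, Real.rpow_one]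
    have h4 : 8 * q ^ (2 + η) ≤ q * q ^ (2 + η) := by gcongr
    have h5 : 0 < q ^ (2 + η) := by positivity
    linarith
  have hKη : q ^ η₀ ≤ K := by
    have h1 : q ^ η₀ ≤ q ^ (η / 2) := Real.rpow_le_rpow_of_exponent_le hq1 hη₀1
    linarith
  have hKY : q ^ (1 / 2 + η₀) ≤ K * Y := by
    have h1 : q ^ (1 / 2 + η₀) ≤ q ^ (1 / 2 + η) := Real.rpow_le_rpow_of_exponent_le hq1 (by linarith)
    have h2 := X_bound q a η T hq1 ha1 hT0
    have h3 : X / 2 * (2 * T) ≤ K * Y := by gcongr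
    rw [← hX] at h2
    linarith
  have hbad := hbx p hP0 K Y hY1 hKη hKY hYK
  -- divisors
  set D : ℕ := ⌊C2 * q ^ (η₀ / 32)⌋₊ with hD
  have hDle : (D : ℝ) ≤ C2 * q ^ (η₀ / 32) := Nat.floor_le (by positivity)
  have hDdiv : ∀ x, 1 ≤ x → x ≤ Y → x.divisors.card ≤ D := by
    intro n hn1 hn
    apply Nat.le_floor
    refine (hdiv n hn1).trans ?_
    have h1 : (n : ℝ) ≤ q ^ E := by
      have : (n : ℝ) ≤ Y := by exact_mod_cast hn
      linarith
    have h2 : (n : ℝ) ^ (η₀ / 32 / E) ≤ q ^ (η₀ / 32) := by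
      calc (n : ℝ) ^ (η₀ / 32 / E) ≤ (q ^ E) ^ (η₀ / 32 / E) := by gcongr
        _ = q ^ (η₀ / 32) := by
          rw [← Real.rpow_mul hq0.le]; congr 1; field_simp
    gcongr
  have hz : ((K / p : ℕ) : ℝ) + 1 ≤ K / 4 := by
    have h1 : ((K / p : ℕ) : ℝ) ≤ K / q := Nat.cast_div_le
    have h2 : (K : ℝ) / q ≤ K / 8 := by gcongr
    linarith
  have hmain := count_lower p K Y ℳ 𝒩 (fun m hm => (hℳ m hm).2.2.1) (fun n hn => (h𝒩 n hn).2.2.1)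
    (by
      intro m hm n hn
      have h1 := hℳ m hm
      have h2 := h𝒩 n hn
      have hmn : (0 : ℤ) ≤ m * n := mul_nonneg (by omega) (by omega)
      apply Nat.le_floor
      have e : (((m * n).toNat : ℕ) : ℝ) = m * n := by
        have : (((m * n).toNat : ℕ) : ℤ) = m * n := Int.toNat_of_nonneg hmn
        exact_mod_cast this
      rw [e]
      have h3 : (0 : ℝ) ≤ m := by linarith
      have h4 : (0 : ℝ) ≤ n := by linarith
      calc (m : ℝ) * n ≤ (2 * M) * (2 * N) := by gcongr <;> linarith
        _ = 4 * T := by rw [hT]; ring) D hDdiv hz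
  refine le_trans ?_ hmain
  have hcc : c₀ ^ 2 * T ≤ (ℳ.card : ℝ) * 𝒩.card := by
    calc c₀ ^ 2 * T = (c₀ * M) * (c₀ * N) := by rw [hT]; ring
      _ ≤ _ := by gcongr
  have hbadT : (D : ℝ) * (badX p K Y (1 / 4)).card ≤ c₀ ^ 2 / 2 * T := by
    set w := q ^ (η₀ / 32) with hw
    have hw0 : 0 < w := by positivity
    have e : q ^ (-(η₀ / 16)) = (w * w)⁻¹ := by
      rw [Real.rpow_neg hq0.le, hw, ← Real.rpow_add hq0]; congr 2; ring
    rw [e] at hbad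
    have h1 : (D : ℝ) * (badX p K Y (1 / 4)).card ≤ (C2 * w) * (C * (w * w)⁻¹ * (4 * T)) := by
      refine mul_le_mul hDle (hbad.trans ?_) (by positivity) (by positivity)
      gcongr
    refine h1.trans ?_
    have e2 : (C2 * w) * (C * (w * w)⁻¹ * (4 * T)) = 4 * C * C2 * T / w := by
      field_simp
    rw [e2, div_le_iff₀ hw0]
    rw [div_le_iff₀ (by positivity)] at hPb
    have h3 := mul_le_mul_of_nonneg_right hPb hT0.le
    linarith
  have hfin : c₀ ^ 2 / 2 * T ≤ (ℳ.card : ℝ) * 𝒩.card - D * (badX p K Y (1 / 4)).card := by linarith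
  have := mul_le_mul_of_nonneg_right hfin (by positivity : (0 : ℝ) ≤ K / 4)
  refine le_trans (le_of_eq ?_) this
  rw [hT]; ring
end

section
/- Fix η with 0 < η < 1/20. For every sufficiently large prime p, there exist primes p₁, p₂, p₃ with p^{1/5 + η} < p₁, p₂, p₃ ≤ 2·p^{1/5 + η} such that p₁·p₂ + p₃ is a quadratic non-residue modulo p. -/
/-- An integer `x` is a quadratic non-residue modulo the prime `p`. -/
def IsQuadNonRes (p : ℕ) (x : ℤ) : Prop :=
  ¬ ((p : ℤ) ∣ x) ∧ ¬ ∃ y : ℤ, y ^ 2 ≡ x [ZMOD (p : ℤ)]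

section
open Polynomial

/-- one differentiation step -/
noncomputable def stepD {K : Type*} [Field K] (F : K[X]) (e : K) : K[X] →ₗ[K] K[X] where
  toFun r := C e * derivative F * r + F * derivative r
  map_add' x y := by simp only [map_add]; ring
  map_smul' c x := by simp only [smul_eq_C_mul, derivative_mul, derivative_C, RingHom.id_apply]; ring

noncomputable def stepIt {K : Type*} [Field K] (F : K[X]) (e : K) : ℕ → (K[X] →ₗ[K] K[X])
  | 0 => LinearMap.id
  | k + 1 => (stepD F (e - k)) ∘ₗ (stepIt F e k)

lemma stepIt_natDegree {K : Type*} [Field K] (F : K[X]) (e : K) (k d : ℕ) (r : K[X])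
    (hr : r.natDegree ≤ d) : (stepIt F e k r).natDegree ≤ d + k * F.natDegree := by
  induction k with
  | zero => simpa [stepIt] using hr
  | succ k ih =>
    simp only [stepIt, stepD, LinearMap.comp_apply, LinearMap.coe_mk, AddHom.coe_mk]
    set g := stepIt F e k r
    have h1 : (derivative F).natDegree ≤ F.natDegree :=
      (natDegree_derivative_le F).trans (Nat.sub_le _ _)
    have h2 : (derivative g).natDegree ≤ g.natDegree :=
      (natDegree_derivative_le g).trans (Nat.sub_le _ _)
    have h3 : (d + k * F.natDegree) + F.natDegree = d + (k + 1) * F.natDegree := by ring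
    refine (natDegree_add_le _ _).trans (max_le ?_ ?_)
    · refine natDegree_mul_le.trans ?_
      have := natDegree_C_mul_le (e - (k:K)) (derivative F)
      omega
    · refine natDegree_mul_le.trans ?_
      omega

lemma stepIt_derivative {K : Type*} [Field K] (F Y : K[X]) (hY : derivative Y = 0) (l h k : ℕ)
    (hk : k ≤ l) (r : K[X]) :
    derivative^[k] (F ^ l * F ^ h * r * Y) =
      F ^ (l - k) * F ^ h * stepIt F ((l : K) + h) k r * Y := by
  induction k with
  | zero => simp [stepIt]
  | succ k ih =>
    rw [Function.iterate_succ_apply', ih (by omega)]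
    obtain ⟨e, he⟩ : ∃ e, l = k + 1 + e := ⟨l - (k + 1), by omega⟩
    subst he
    have e1 : k + 1 + e - k = e + 1 := by omega
    have e2 : k + 1 + e - (k + 1) = e := by omega
    rw [e1, e2]
    simp only [stepIt, stepD, LinearMap.comp_apply, LinearMap.coe_mk, AddHom.coe_mk]
    set g := stepIt F _ k r
    rw [← pow_add, derivative_mul, hY, derivative_mul, derivative_pow]
    have e3 : e + 1 + h - 1 = e + h := by omega
    rw [e3]
    have : (((k + 1 + e : ℕ) : K) + h - k) = ((e + 1 + h : ℕ) : K) := by push_cast; ring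
    rw [this]
    simp only [pow_add, pow_one]
    ring

noncomputable def pol {K : Type*} [Field K] (D : ℕ) : (Fin D → K) →ₗ[K] K[X] :=
  ∑ i : Fin D, (monomial (i : ℕ)) ∘ₗ (LinearMap.proj i)

lemma pol_coeff {K : Type*} [Field K] (D : ℕ) (v : Fin D → K) (n : ℕ) :
    (pol D v).coeff n = if h : n < D then v ⟨n, h⟩ else 0 := by
  simp only [pol, LinearMap.sum_apply, LinearMap.comp_apply, LinearMap.proj_apply, finsetSum_coeff,
    coeff_monomial]
  split_ifs with h
  · rw [Finset.sum_eq_single ⟨n, h⟩]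
    · simp
    · intro b _ hb
      rw [if_neg]
      intro hh; apply hb; ext; exact hh
    · simp
  · apply Finset.sum_eq_zero
    intro i _
    rw [if_neg]; have := i.2; omega

lemma pol_natDegree {K : Type*} [Field K] (D : ℕ) (v : Fin D → K) :
    (pol D v).natDegree ≤ D := by
  rw [natDegree_le_iff_coeff_eq_zero]
  intro n hn
  rw [pol_coeff, dif_neg (by omega)]

/-- assembled polynomial -/
noncomputable def bigPol {K : Type*} [Field K] (p J D : ℕ) (v : Fin J → Fin D → K) : K[X] :=
  ∑ j : Fin J, pol D (v j) * X ^ (p * (j : ℕ))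

lemma bigPol_coeff {K : Type*} [Field K] (p J D : ℕ) (hp : 0 < p) (hD : D ≤ p)
    (v : Fin J → Fin D → K) (n : ℕ) :
    (bigPol p J D v).coeff n =
      if h : n / p < J ∧ n % p < D then v ⟨n / p, h.1⟩ ⟨n % p, h.2⟩ else 0 := by
  simp only [bigPol, finsetSum_coeff, coeff_mul_X_pow', pol_coeff]
  have key : ∀ j : ℕ, p * j ≤ n → n - p * j < D → j = n / p ∧ n - p * j = n % p := by
    intro j h1 h2
    have h3 : n = (n - p * j) + p * j := by omega
    have h4 : n - p * j < p := by omega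
    constructor
    · rw [h3, Nat.add_mul_div_left _ _ hp, Nat.div_eq_of_lt h4]; simp
    · conv_rhs => rw [h3]
      rw [Nat.add_mul_mod_self_left, Nat.mod_eq_of_lt h4]
  split_ifs with h
  · rw [Finset.sum_eq_single ⟨n / p, h.1⟩]
    · have h5 := Nat.div_add_mod n p
      have h6 : n - p * (n / p) = n % p := by omega
      rw [if_pos (by simp; omega), dif_pos (by simp [h6, h.2])]
      simp [h6]
    · intro b _ hb
      by_cases h1 : p * (b : ℕ) ≤ n
      · rw [if_pos h1, dif_neg]
        intro h2
        exact hb (Fin.ext (key b h1 h2).1)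
      · rw [if_neg h1]
    · simp
  · apply Finset.sum_eq_zero
    intro b _
    by_cases h1 : p * (b : ℕ) ≤ n
    · rw [if_pos h1, dif_neg]
      intro h2
      obtain ⟨h3, h4⟩ := key b h1 h2
      apply h
      rw [← h3, ← h4]
      exact ⟨b.2, h2⟩
    · rw [if_neg h1]

lemma bigPol_natDegree_mod {K : Type*} [Field K] (p J D : ℕ) (hp : 0 < p) (hD : D ≤ p)
    (v : Fin J → Fin D → K) (hv : bigPol p J D v ≠ 0) :
    (bigPol p J D v).natDegree / p < J ∧ (bigPol p J D v).natDegree % p < D := by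
  by_contra h
  apply hv
  rw [← leadingCoeff_eq_zero, leadingCoeff, bigPol_coeff p J D hp hD, dif_neg h]

lemma bigPol_natDegree {K : Type*} [Field K] (p J D : ℕ) (hp : 0 < p) (hD : D ≤ p)
    (v : Fin J → Fin D → K) : (bigPol p J D v).natDegree ≤ p * J := by
  by_cases hv : bigPol p J D v = 0
  · simp [hv]
  · have := (bigPol_natDegree_mod p J D hp hD v hv).1
    have := (Nat.div_lt_iff_lt_mul hp).1 this
    rw [mul_comm]; omega

lemma bigPol_eq_zero {K : Type*} [Field K] (p J D : ℕ) (hp : 0 < p) (hD : D ≤ p)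
    (v : Fin J → Fin D → K) (hv : bigPol p J D v = 0) : v = 0 := by
  funext j i
  have h := bigPol_coeff p J D hp hD v (i + p * j)
  have hi : (i : ℕ) < p := lt_of_lt_of_le i.2 hD
  have h1 : ((i : ℕ) + p * j) / p = j := by
    rw [Nat.add_mul_div_left _ _ hp, Nat.div_eq_of_lt hi]; simp
  have h2 : ((i : ℕ) + p * j) % p = i := by
    rw [Nat.add_mul_mod_self_left, Nat.mod_eq_of_lt hi]
  rw [hv, dif_pos (by rw [h1, h2]; exact ⟨j.2, i.2⟩)] at h
  simp only [coeff_zero, h1, h2] at h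
  simpa using h.symm

lemma bigPol_nonvanish {K : Type*} [Field K] (p m q J : ℕ) (hp : p = m + 2 * q) (hm : Odd m)
    (F : K[X]) (hF : F.natDegree = m)
    (v w : Fin J → Fin q → K) (h : bigPol p J q v + F ^ ((p - 1) / 2) * bigPol p J q w = 0) :
    v = 0 ∧ w = 0 := by
  have hm0 : 0 < m := hm.pos
  have hp0 : 0 < p := by omega
  have hD : q ≤ p := by omega
  by_cases hB : bigPol p J q w = 0
  · rw [hB, mul_zero, add_zero] at h
    exact ⟨bigPol_eq_zero p J q hp0 hD v h, bigPol_eq_zero p J q hp0 hD w hB⟩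
  exfalso
  have hF0 : F ≠ 0 := by rintro rfl; simp at hF; omega
  have hA : bigPol p J q v = - (F ^ ((p - 1) / 2) * bigPol p J q w) := eq_neg_of_add_eq_zero_left h
  have hA0 : bigPol p J q v ≠ 0 := by
    rw [hA, neg_ne_zero]; exact mul_ne_zero (pow_ne_zero _ hF0) hB
  have h1 := (bigPol_natDegree_mod p J q hp0 hD v hA0).2
  have h2 := (bigPol_natDegree_mod p J q hp0 hD w hB).2
  rw [hA, natDegree_neg, natDegree_mul (pow_ne_zero _ hF0) hB, natDegree_pow, hF] at h1
  set n := (bigPol p J q w).natDegree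
  obtain ⟨t, ht⟩ := hm
  have e1 : (p - 1) / 2 = t + q := by omega
  have e2 : (t + q) * m + n = (q + n % p) + p * (t + n / p) := by
    have := Nat.div_add_mod n p
    calc (t + q) * m + n = (t + q) * m + (p * (n / p) + n % p) := by rw [this]
      _ = _ := by
        have : (t + q) * m = q + p * t := by rw [hp, ht]; ring
        rw [this]; ring
  rw [e1, e2, Nat.add_mul_mod_self_left, Nat.mod_eq_of_lt (by omega)] at h1
  omega

end

section
open Polynomial

noncomputable def condPol {K : Type*} [Field K] (F : K[X]) (a : K) (l h J D k : ℕ)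
    (v : (Fin J → Fin D → K) × (Fin J → Fin D → K)) : K[X] :=
  ∑ j : Fin J, (stepIt F (l : K) k (pol D (v.1 j)) +
    C a * stepIt F ((l : K) + h) k (pol D (v.2 j))) * X ^ (j : ℕ)

noncomputable def condMap {K : Type*} [Field K] (F : K[X]) (a : K) (l h J D E : ℕ) :
    ((Fin J → Fin D → K) × (Fin J → Fin D → K)) →ₗ[K] (Fin l → Fin E → K) where
  toFun v := fun k i => (condPol F a l h J D k v).coeff i
  map_add' x y := by
    funext k i
    simp only [Pi.add_apply, ← coeff_add, condPol, ← Finset.sum_add_distrib, Prod.fst_add,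
      Prod.snd_add, map_add]
    congr 1
    refine Finset.sum_congr rfl fun j _ => ?_
    ring
  map_smul' c x := by
    funext k i
    simp only [Pi.smul_apply, ← coeff_smul, condPol, Finset.smul_sum, Prod.smul_fst, Prod.smul_snd,
      map_smul, RingHom.id_apply]
    congr 1
    refine Finset.sum_congr rfl fun j _ => ?_
    simp only [smul_eq_C_mul]
    ring

lemma condPol_natDegree {K : Type*} [Field K] (F : K[X]) (a : K) (l h J D k : ℕ) (hk : k ≤ l)
    (v : (Fin J → Fin D → K) × (Fin J → Fin D → K)) :
    (condPol F a l h J D k v).natDegree ≤ D + l * F.natDegree + J := by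
  unfold condPol
  apply natDegree_sum_le_of_forall_le
  intro j _
  refine natDegree_mul_le.trans ?_
  have h1 := stepIt_natDegree F (l : K) k D (pol D (v.1 j)) (pol_natDegree _ _)
  have h2 := stepIt_natDegree F ((l : K) + h) k D (pol D (v.2 j)) (pol_natDegree _ _)
  have h3 : k * F.natDegree ≤ l * F.natDegree := Nat.mul_le_mul_right _ hk
  have h4 := natDegree_C_mul_le a (stepIt F ((l : K) + h) k (pol D (v.2 j)))
  have h5 := natDegree_add_le (stepIt F (l : K) k (pol D (v.1 j)))
    (C a * stepIt F ((l : K) + h) k (pol D (v.2 j)))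
  have h6 := j.2
  have h7 : (X ^ (j : ℕ) : K[X]).natDegree = j := natDegree_X_pow _
  omega

lemma stepanov_count (p : ℕ) [Fact p.Prime] (m q J l : ℕ) (hp : p = m + 2 * q) (hm : Odd m)
    (F : (ZMod p)[X]) (hF : F.natDegree = m) (a : ZMod p) (ha : a ≠ 0)
    (hl : l ≤ p) (hl0 : 0 < l) (hdim : l * (q + l * m + J + 1) < 2 * (J * q)) :
    (Finset.univ.filter (fun x : ZMod p => F.eval x ^ ((p - 1) / 2) = a)).card * l ≤
      l * m + (p - 1) / 2 * m + p * J := by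
  set h := (p - 1) / 2 with hh
  have hm0 : 0 < m := hm.pos
  have hp0 : 0 < p := by omega
  have hqp : q ≤ p := by omega
  have hF0 : F ≠ 0 := by rintro rfl; simp at hF; omega
  set E := q + l * m + J + 1 with hE
  have hker : LinearMap.ker (condMap F a l h J q E) ≠ ⊥ := by
    apply LinearMap.ker_ne_bot_of_finrank_lt
    simp only [Module.finrank_prod, Module.finrank_pi_fintype, Module.finrank_self, Finset.sum_const,
      Finset.card_univ, Fintype.card_fin, smul_eq_mul, mul_one]
    omega
  obtain ⟨⟨v, w⟩, hvw, hne⟩ := (Submodule.ne_bot_iff _).mp hker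
  rw [LinearMap.mem_ker] at hvw
  have hcond : ∀ k < l, condPol F a l h J q k (v, w) = 0 := by
    intro k hk
    ext i
    by_cases hi : i < E
    · have := congrFun (congrFun hvw ⟨k, hk⟩) ⟨i, hi⟩
      simpa [condMap] using this
    · rw [coeff_zero]
      apply coeff_eq_zero_of_natDegree_lt
      have := condPol_natDegree F a l h J q k hk.le (v, w)
      rw [hF] at this
      omega
  set Q := bigPol p J q v + F ^ h * bigPol p J q w with hQ
  have hQ0 : Q ≠ 0 := by
    intro h0
    obtain ⟨h1, h2⟩ := bigPol_nonvanish p m q J hp hm F hF v w h0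
    exact hne (by simp [h1, h2])
  set R := F ^ l * Q with hR
  have hR0 : R ≠ 0 := mul_ne_zero (pow_ne_zero _ hF0) hQ0
  have hRdeg : R.natDegree ≤ l * m + h * m + p * J := by
    have h1 := bigPol_natDegree p J q hp0 hqp v
    have h2 := bigPol_natDegree p J q hp0 hqp w
    have h3 : (F ^ h).natDegree = h * m := by rw [natDegree_pow, hF]
    have h4 : (F ^ l).natDegree = l * m := by rw [natDegree_pow, hF]
    have h5 := natDegree_mul_le (p := F ^ l) (q := Q)
    have h6 := natDegree_mul_le (p := F ^ h) (q := bigPol p J q w)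
    have h7 := natDegree_add_le (bigPol p J q v) (F ^ h * bigPol p J q w)
    rw [← hQ] at h7
    rw [← hR] at h5
    omega
  have hderiv : ∀ k ≤ l, derivative^[k] R = ∑ j : Fin J,
      (F ^ (l - k) * F ^ 0 * stepIt F ((l : ZMod p) + (0 : ℕ)) k (pol q (v j)) * X ^ (p * (j : ℕ)) +
       F ^ (l - k) * F ^ h * stepIt F ((l : ZMod p) + h) k (pol q (w j)) * X ^ (p * (j : ℕ))) := by
    intro k hk
    have hX : ∀ j : ℕ, derivative (X ^ (p * j) : (ZMod p)[X]) = 0 := by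
      intro j
      simp [derivative_X_pow]
    have : R = ∑ j : Fin J, (F ^ l * F ^ 0 * pol q (v j) * X ^ (p * (j : ℕ)) +
       F ^ l * F ^ h * pol q (w j) * X ^ (p * (j : ℕ))) := by
      rw [hR, hQ, bigPol, bigPol, mul_add, ← mul_assoc, Finset.mul_sum, Finset.mul_sum,
        ← Finset.sum_add_distrib]
      refine Finset.sum_congr rfl fun j _ => ?_
      ring
    rw [this, iterate_derivative_sum]
    refine Finset.sum_congr rfl fun j _ => ?_
    rw [iterate_map_add, stepIt_derivative F _ (hX j) l 0 k hk,
      stepIt_derivative F _ (hX j) l h k hk]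
  set S := Finset.univ.filter (fun x : ZMod p => F.eval x ^ h = a) with hS
  have hmult : ∀ x ∈ S, l ≤ R.rootMultiplicity x := by
    intro x hx
    have hxa : F.eval x ^ h = a := by simpa [hS] using hx
    have : l - 1 < R.rootMultiplicity x := by
      apply lt_rootMultiplicity_of_isRoot_iterate_derivative_of_mem_nonZeroDivisors' hR0
      · intro k hk
        rw [IsRoot, hderiv k (by omega)]
        have h1 := congrArg (eval x) (hcond k (by omega))
        simp only [condPol, eval_finsetSum, eval_mul, eval_add, eval_C, eval_pow, eval_X,
          eval_zero] at h1
        simp only [eval_finsetSum, eval_mul, eval_add, eval_pow, eval_X, hxa, pow_mul,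
          ZMod.pow_card, Nat.cast_zero, add_zero, pow_zero, eval_one, mul_one]
        rw [← mul_zero (eval x F ^ (l - k)), ← h1, Finset.mul_sum]
        refine Finset.sum_congr rfl fun j _ => ?_
        ring
      · intro k hk hk0
        rw [mem_nonZeroDivisors_iff_ne_zero]
        intro h0
        rw [ZMod.natCast_eq_zero_iff] at h0
        have := Nat.le_of_dvd (by omega) h0
        omega
    omega
  calc S.card * l = ∑ x ∈ S, l := by simp
    _ ≤ ∑ x ∈ S, R.roots.count x := by
        refine Finset.sum_le_sum fun x hx => ?_
        rw [count_roots]; exact hmult x hx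
    _ ≤ ∑ x : ZMod p, R.roots.count x :=
        Finset.sum_le_sum_of_subset (Finset.subset_univ _)
    _ = R.roots.card := Multiset.sum_count_eq_card (fun _ _ => Finset.mem_univ _)
    _ ≤ R.natDegree := card_roots' R
    _ ≤ _ := hRdeg

end

section
open Polynomial

lemma stepanov_bound (p : ℕ) [Fact p.Prime] (m : ℕ) (hm : Odd m) (hmp : (2 * m + 6) ^ 2 ≤ p)
    (F : (ZMod p)[X]) (hF : F.natDegree = m) (a : ZMod p) (ha : a ≠ 0) :
    2 * (Finset.univ.filter (fun x : ZMod p => F.eval x ^ ((p - 1) / 2) = a)).card ≤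
      p + Nat.sqrt p * (14 * m + 16) := by
  set l := Nat.sqrt p with hl
  have h1 : l * l ≤ p := Nat.sqrt_le p
  have h2 : p < (l + 1) * (l + 1) := Nat.lt_succ_sqrt p
  have h3 : 2 * m + 6 ≤ l := by rw [hl, Nat.le_sqrt']; exact hmp
  have hp2 : Odd p := by
    rcases (Fact.out : p.Prime).eq_two_or_odd' with h | h
    · nlinarith
    · exact h
  obtain ⟨q, hq⟩ : ∃ q, p = m + 2 * q := by
    obtain ⟨a, ha⟩ := hm
    obtain ⟨b, hb⟩ := hp2
    refine ⟨b - a, ?_⟩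
    have : m ≤ p := by nlinarith
    omega
  obtain ⟨J, hJ⟩ : ∃ J, J = l / 2 + m + 2 := ⟨_, rfl⟩
  have hJ1 : l + 2 * m + 3 ≤ 2 * J := by omega
  have hJ2 : 2 * J ≤ l + 2 * m + 4 := by omega
  have key := stepanov_count p m q J l hq hm F hF a ha (by nlinarith) (by omega) (by
    have e1 : (l + 2 * m + 3) * q ≤ 2 * J * q := Nat.mul_le_mul_right _ hJ1
    have e2 : l * (2 * J) ≤ l * (l + 2 * m + 4) := Nat.mul_le_mul_left _ hJ2
    have e3 : (l * l) * (2 * m + 1) ≤ p * (2 * m + 1) := Nat.mul_le_mul_right _ h1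
    have e4 : l * (2 * m + 6) ≤ l * l := Nat.mul_le_mul_left _ h3
    have e5 : (2 * m + 6) * (2 * m + 6) ≤ p := by rw [← sq]; exact hmp
    have e6 : (2 * m + 3) * p = (2 * m + 3) * m + (2 * m + 3) * (2 * q) := by
      conv_lhs => rw [hq]
      ring
    nlinarith)
  set n := (Finset.univ.filter (fun x : ZMod p => F.eval x ^ ((p - 1) / 2) = a)).card with hn
  have f1 : 2 * ((p - 1) / 2) ≤ p := by omega
  have f2 : 2 * ((p - 1) / 2) * m ≤ p * m := Nat.mul_le_mul_right _ f1
  have f3 : p * (2 * J) ≤ p * (l + 2 * m + 4) := Nat.mul_le_mul_left _ hJ2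
  have f4 : p ≤ 4 * (l * l) := by nlinarith
  have f5 : p * (3 * m + 4) ≤ 4 * (l * l) * (3 * m + 4) := Nat.mul_le_mul_right _ f4
  have f6 : l * (2 * m) ≤ l * (l * (2 * m)) := Nat.mul_le_mul_left _ (by nlinarith)
  have : (2 * n) * l ≤ (p + l * (14 * m + 16)) * l := by nlinarith
  exact Nat.le_of_mul_le_mul_right this (by omega)

lemma weil_odd (p : ℕ) [Fact p.Prime] (m : ℕ) (hm : Odd m) (hmp : (2 * m + 6) ^ 2 ≤ p)
    (F : (ZMod p)[X]) (hF : F.natDegree = m) :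
    |∑ x : ZMod p, quadraticChar (ZMod p) (F.eval x)| ≤ (Nat.sqrt p * (15 * m + 16) : ℕ) := by
  have hp2 : p ≠ 2 := by rintro rfl; nlinarith
  have hchar : ringChar (ZMod p) ≠ 2 := by rwa [ZMod.ringChar_zmod_n]
  have hodd : p % 2 = 1 := ((Fact.out : p.Prime).eq_two_or_odd).resolve_left hp2
  have hh : Fintype.card (ZMod p) / 2 = (p - 1) / 2 := by rw [ZMod.card]; omega
  have h3 : 2 * m + 6 ≤ Nat.sqrt p := by rw [Nat.le_sqrt']; exact hmp
  have hne : (1 : ZMod p) ≠ -1 := by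
    intro h
    exact (Ring.neg_one_ne_one_of_char_ne_two hchar) h.symm
  have hF0 : F ≠ 0 := by rintro rfl; have := hm.pos; simp at hF; omega
  set A := Finset.univ.filter (fun x : ZMod p => F.eval x ^ ((p - 1) / 2) = 1) with hA
  set B := Finset.univ.filter (fun x : ZMod p => F.eval x ^ ((p - 1) / 2) = -1) with hB
  set Z := Finset.univ.filter (fun x : ZMod p => F.eval x = 0) with hZ
  have hAb := stepanov_bound p m hm hmp F hF 1 one_ne_zero
  have hBb := stepanov_bound p m hm hmp F hF (-1) (neg_ne_zero.2 one_ne_zero)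
  have hh0 : (p - 1) / 2 ≠ 0 := by have := (Fact.out : p.Prime).two_le; omega
  have hZb : Z.card ≤ m := by
    rw [← hF]
    refine le_trans (Finset.card_le_card (t := F.roots.toFinset) ?_) ?_
    · intro x hx
      simp only [hZ, Finset.mem_filter, Finset.mem_univ, true_and] at hx
      simp [hF0, hx]
    · exact (Multiset.toFinset_card_le _).trans (card_roots' F)
  have hval : ∀ x : ZMod p, quadraticChar (ZMod p) (F.eval x) =
      (if F.eval x ^ ((p - 1) / 2) = 1 then 1 else 0) -
      (if F.eval x ^ ((p - 1) / 2) = -1 then 1 else 0) := by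
    intro x
    by_cases h0 : F.eval x = 0
    · simp [h0, hh0]
    · rcases quadraticChar_dichotomy h0 with h | h
      · have := quadraticChar_eq_pow_of_char_ne_two' hchar (F.eval x)
        rw [hh, h] at this
        simp only [Int.cast_one] at this
        rw [h, ← this, if_pos rfl, if_neg hne]; norm_num
      · have := quadraticChar_eq_pow_of_char_ne_two' hchar (F.eval x)
        rw [hh, h] at this
        simp only [Int.cast_neg, Int.cast_one] at this
        rw [h, ← this, if_pos rfl, if_neg hne.symm]; norm_num
  have hone : ∀ x : ZMod p, (1 : ℤ) = (if F.eval x ^ ((p - 1) / 2) = 1 then 1 else 0) +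
      (if F.eval x ^ ((p - 1) / 2) = -1 then 1 else 0) + (if F.eval x = 0 then 1 else 0) := by
    intro x
    by_cases h0 : F.eval x = 0
    · simp [h0, hh0]
    · rcases quadraticChar_dichotomy h0 with h | h
      · have := quadraticChar_eq_pow_of_char_ne_two' hchar (F.eval x)
        rw [hh, h] at this
        simp only [Int.cast_one] at this
        rw [← this, if_pos rfl, if_neg hne, if_neg h0]; norm_num
      · have := quadraticChar_eq_pow_of_char_ne_two' hchar (F.eval x)
        rw [hh, h] at this
        simp only [Int.cast_neg, Int.cast_one] at this
        rw [← this, if_pos rfl, if_neg hne.symm, if_neg h0]; norm_num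
  have hsum : ∑ x : ZMod p, quadraticChar (ZMod p) (F.eval x) = (A.card : ℤ) - B.card := by
    rw [Finset.sum_congr rfl (fun x _ => hval x), Finset.sum_sub_distrib, Finset.sum_boole,
      Finset.sum_boole]
  have htot : (p : ℤ) = A.card + B.card + Z.card := by
    have : (p : ℤ) = ∑ x : ZMod p, (1 : ℤ) := by simp
    rw [this, Finset.sum_congr rfl (fun x _ => hone x), Finset.sum_add_distrib,
      Finset.sum_add_distrib, Finset.sum_boole, Finset.sum_boole, Finset.sum_boole]
  rw [hsum, abs_le]
  have hmm : m ≤ Nat.sqrt p * m := Nat.le_mul_of_pos_left _ (by omega)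
  have e : Nat.sqrt p * (15 * m + 16) = Nat.sqrt p * (14 * m + 16) + Nat.sqrt p * m := by ring
  rw [e]
  rw [← hA] at hAb
  rw [← hB] at hBb
  constructor <;> omega

end

section
open Polynomial

lemma prod_char_bound (p : ℕ) [Fact p.Prime] (k : ℕ) (hkp : (4 * k + 6) ^ 2 ≤ p)
    (t : Fin (2 * k) → ZMod p) (t0 : ZMod p)
    (h0 : Odd (Finset.univ.filter (fun i => t i = t0)).card) :
    (∑ x : ZMod p, ∏ i, quadraticChar (ZMod p) (x + t i)) ^ 2 ≤ (30 * k + 17) ^ 2 * (p : ℤ) := by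
  classical
  set χ := quadraticChar (ZMod p) with hχ
  set F : (ZMod p)[X] := ∏ i, (C (t i - t0) * X + C 1) with hF
  have hdeg : F.natDegree = (Finset.univ.filter (fun i => ¬ t i = t0)).card := by
    rw [hF, natDegree_prod, Finset.card_filter]
    · refine Finset.sum_congr rfl fun i _ => ?_
      split_ifs with h
      · simp [h]
      · exact natDegree_linear (sub_ne_zero.2 h)
    · intro i _ h
      have := congrArg (fun f => coeff f 0) h
      simp at this
  have hcard := Finset.card_filter_add_card_filter_not (s := (Finset.univ : Finset (Fin (2 * k))))
    (fun i => t i = t0)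
  rw [Finset.card_univ, Fintype.card_fin] at hcard
  have hm : Odd F.natDegree := by
    rw [hdeg]
    rw [Nat.odd_iff] at h0 ⊢
    omega
  have hmk : F.natDegree ≤ 2 * k := by omega
  have hb := weil_odd p F.natDegree hm ((Nat.pow_le_pow_left (by omega) 2).trans hkp) F rfl
  have heq : ∑ x : ZMod p, ∏ i, χ (x + t i) = (∑ y : ZMod p, χ (F.eval y)) - 1 := by
    have e1 : ∑ x : ZMod p, ∏ i, χ (x + t i) = ∑ y : ZMod p, ∏ i, χ ((y⁻¹ - t0) + t i) := by
      symm
      exact Equiv.sum_comp ((Function.Involutive.toPerm (fun y : ZMod p => y⁻¹) inv_involutive).trans (Equiv.subRight t0))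
        (fun x => ∏ i, χ (x + t i))
    have e2 : (1 : ℤ) = ∑ y : ZMod p, if y = 0 then 1 else 0 := by simp
    rw [e1, e2, ← Finset.sum_sub_distrib]
    refine Finset.sum_congr rfl fun y _ => ?_
    rw [hF, eval_prod, map_prod]
    simp only [eval_add, eval_mul, eval_C, eval_X]
    split_ifs with hy
    · subst hy
      obtain ⟨i, hi⟩ := Finset.card_pos.1 h0.pos
      simp only [Finset.mem_filter, Finset.mem_univ, true_and] at hi
      rw [Finset.prod_eq_zero (Finset.mem_univ i)]
      · simp
      · simp [hi, hχ]
    · rw [sub_zero]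
      have : ∀ i, χ ((y⁻¹ - t0) + t i) = χ y⁻¹ * χ ((t i - t0) * y + 1) := by
        intro i
        rw [← map_mul]
        congr 1
        field_simp
        ring
      simp only [this]
      rw [Finset.prod_mul_distrib, Finset.prod_const, Finset.card_univ, Fintype.card_fin, pow_mul,
        quadraticChar_sq_one (inv_ne_zero hy)]
      simp
  rw [heq]
  set S := ∑ y : ZMod p, χ (F.eval y)
  have hs : (Nat.sqrt p : ℤ) * Nat.sqrt p ≤ p := by exact_mod_cast Nat.sqrt_le p
  have hs1 : 1 ≤ Nat.sqrt p := by
    rw [Nat.le_sqrt']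
    have : 1 ≤ p := (Fact.out : p.Prime).one_le
    simpa using this
  have hb2 : |S - 1| ≤ (Nat.sqrt p : ℤ) * (30 * k + 17) := by
    have h1 : |S - 1| ≤ |S| + 1 := by simpa using abs_sub S 1
    have h2 : Nat.sqrt p * (15 * F.natDegree + 16) + 1 ≤ Nat.sqrt p * (30 * k + 17) := by
      calc Nat.sqrt p * (15 * F.natDegree + 16) + 1
          ≤ Nat.sqrt p * (30 * k + 16) + Nat.sqrt p * 1 := by
            have := Nat.mul_le_mul_left (Nat.sqrt p) (show 15 * F.natDegree + 16 ≤ 30 * k + 16 by omega)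
            omega
        _ = _ := by ring
    zify at h2
    push_cast at hb
    linarith
  calc (S - 1) ^ 2 = |S - 1| ^ 2 := (sq_abs _).symm
    _ ≤ ((Nat.sqrt p : ℤ) * (30 * k + 17)) ^ 2 := by gcongr
    _ = (30 * k + 17) ^ 2 * ((Nat.sqrt p : ℤ) * Nat.sqrt p) := by ring
    _ ≤ _ := by gcongr

open Classical in
lemma even_tuples {α : Type*} (D : Finset α) (k : ℕ) (hk : 0 < k) :
    ((Fintype.piFinset (fun _ : Fin (2 * k) => D)).filter
      (fun t => ∀ v, ¬ Odd (Finset.univ.filter (fun i => t i = v)).card)).card ≤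
      k ^ (2 * k) * D.card ^ k := by
  have hsub : ((Fintype.piFinset (fun _ : Fin (2 * k) => D)).filter
      (fun t => ∀ v, ¬ Odd (Finset.univ.filter (fun i => t i = v)).card)) ⊆
      ((Finset.univ : Finset (Fin (2 * k) → Fin k)) ×ˢ
        (Fintype.piFinset (fun _ : Fin k => D))).image (fun x => fun i => x.2 (x.1 i)) := by
    intro t ht
    simp only [Finset.mem_filter, Fintype.mem_piFinset] at ht
    obtain ⟨htD, hte⟩ := ht
    have hI : (Finset.univ.image t).card ≤ k := by
      have h1 : 2 * (Finset.univ.image t).card ≤ (Finset.univ : Finset (Fin (2 * k))).card := by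
        apply Finset.mul_card_image_le_card
        intro a ha
        obtain ⟨i, _, hi⟩ := Finset.mem_image.1 ha
        have h2 : 0 < (Finset.univ.filter (fun i => t i = a)).card :=
          Finset.card_pos.2 ⟨i, by simp [hi]⟩
        have h3 := hte a
        rw [Nat.odd_iff] at h3
        omega
      rw [Finset.card_univ, Fintype.card_fin] at h1
      omega
    have : Nonempty ((Finset.univ.image t) ↪ Fin k) := by
      apply Function.Embedding.nonempty_of_card_le
      simpa using hI
    obtain ⟨e⟩ := this
    have hne : Nonempty (Finset.univ.image t) :=
      ⟨⟨t ⟨0, by omega⟩, Finset.mem_image_of_mem _ (Finset.mem_univ _)⟩⟩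
    refine Finset.mem_image.2 ⟨(fun i => e ⟨t i, Finset.mem_image_of_mem _ (Finset.mem_univ _)⟩,
      fun j => ((Function.invFun e j : (Finset.univ.image t)) : α)), ?_, ?_⟩
    · simp only [Finset.mem_product, Finset.mem_univ, true_and, Fintype.mem_piFinset]
      intro j
      obtain ⟨i, _, hi⟩ := Finset.mem_image.1 (Function.invFun e j).2
      rw [← hi]; exact htD i
    · funext i
      simp only
      rw [Function.leftInverse_invFun e.injective]
  refine (Finset.card_le_card hsub).trans (Finset.card_image_le.trans ?_)
  rw [Finset.card_product, Fintype.card_piFinset]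
  simp

lemma moment_bound_s9 (p : ℕ) [Fact p.Prime] (k : ℕ) (hk : 0 < k) (hkp : (4 * k + 6) ^ 2 ≤ p)
    (D : Finset (ZMod p)) :
    ∑ x : ZMod p × ZMod p, (∑ t ∈ D, quadraticChar (ZMod p) (x.1 + t) *
        quadraticChar (ZMod p) (x.2 + t)) ^ (2 * k) ≤
      (k : ℤ) ^ (2 * k) * (D.card : ℤ) ^ k * (p : ℤ) ^ 2 +
        (D.card : ℤ) ^ (2 * k) * ((30 * k + 17) ^ 2 * (p : ℤ)) := by
  classical
  set χ := quadraticChar (ZMod p) with hχ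
  set P := Fintype.piFinset (fun _ : Fin (2 * k) => D) with hP
  have e1 : ∑ x : ZMod p × ZMod p, (∑ t ∈ D, χ (x.1 + t) * χ (x.2 + t)) ^ (2 * k) =
      ∑ t ∈ P, (∑ x : ZMod p, ∏ i, χ (x + t i)) ^ 2 := by
    have : ∀ x : ZMod p × ZMod p, (∑ t ∈ D, χ (x.1 + t) * χ (x.2 + t)) ^ (2 * k) =
        ∑ t ∈ P, (∏ i, χ (x.1 + t i)) * (∏ i, χ (x.2 + t i)) := by
      intro x
      rw [Finset.sum_pow']
      refine Finset.sum_congr rfl fun t _ => ?_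
      rw [Finset.prod_mul_distrib]
    simp only [this]
    rw [Finset.sum_comm]
    refine Finset.sum_congr rfl fun t _ => ?_
    rw [sq, Finset.sum_mul_sum, Fintype.sum_prod_type]
  rw [e1, ← Finset.sum_filter_add_sum_filter_not P
    (fun t => ∀ v, ¬ Odd (Finset.univ.filter (fun i => t i = v)).card)]
  refine add_le_add ?_ ?_
  · have hb : ∀ t ∈ P.filter (fun t => ∀ v, ¬ Odd (Finset.univ.filter (fun i => t i = v)).card),
        (∑ x : ZMod p, ∏ i, χ (x + t i)) ^ 2 ≤ (p : ℤ) ^ 2 := by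
      intro t _
      apply sq_le_sq'
      all_goals
        have habs : |∑ x : ZMod p, ∏ i, χ (x + t i)| ≤ p := by
          refine (Finset.abs_sum_le_sum_abs _ _).trans ?_
          calc ∑ x : ZMod p, |∏ i, χ (x + t i)| ≤ ∑ x : ZMod p, (1 : ℤ) := by
                refine Finset.sum_le_sum fun x _ => ?_
                rw [Finset.abs_prod]
                apply Finset.prod_le_one
                · intros; positivity
                · intro i _
                  by_cases h : x + t i = 0
                  · simp [h, hχ]
                  · rcases quadraticChar_dichotomy h with h | h <;> simp [hχ, h]
            _ = p := by simp
        have := abs_le.1 habs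
        linarith
    refine (Finset.sum_le_card_nsmul _ _ _ hb).trans ?_
    rw [nsmul_eq_mul]
    have := even_tuples D k hk
    gcongr
    have h2 : (P.filter (fun t => ∀ v, ¬ Odd (Finset.univ.filter (fun i => t i = v)).card)).card ≤
      k ^ (2 * k) * D.card ^ k := by convert this
    exact_mod_cast h2
  · have hb : ∀ t ∈ P.filter (fun t => ¬ ∀ v, ¬ Odd (Finset.univ.filter (fun i => t i = v)).card),
        (∑ x : ZMod p, ∏ i, χ (x + t i)) ^ 2 ≤ (30 * k + 17) ^ 2 * (p : ℤ) := by
      intro t ht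
      have := (Finset.mem_filter.1 ht).2
      push Not at this
      obtain ⟨v, hv⟩ := this
      exact prod_char_bound p k hkp t v hv
    refine (Finset.sum_le_card_nsmul _ _ _ hb).trans ?_
    rw [nsmul_eq_mul]
    have h1 : (P.filter (fun t => ¬ ∀ v, ¬ Odd (Finset.univ.filter (fun i => t i = v)).card)).card ≤
        D.card ^ (2 * k) := by
      refine (Finset.card_filter_le _ _).trans ?_
      rw [hP, Fintype.card_piFinset]; simp
    gcongr
    exact_mod_cast h1

end

section

lemma prime_prod_card (B : Finset ℕ) (hB : ∀ b ∈ B, b.Prime) :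
    B.card ^ 2 ≤ 2 * ((B ×ˢ B).image (fun x => x.1 * x.2)).card := by
  have : (B ×ˢ B).card ≤ 2 * ((B ×ˢ B).image (fun x => x.1 * x.2)).card := by
    apply Finset.card_le_mul_card_image
    intro n hn
    obtain ⟨⟨a, b⟩, hab, rfl⟩ := Finset.mem_image.1 hn
    rw [Finset.mem_product] at hab
    have ha := hB a hab.1
    have hb := hB b hab.2
    refine (Finset.card_le_card (t := {(a, b), (b, a)}) ?_).trans Finset.card_le_two
    rintro ⟨c, d⟩ hcd
    simp only [Finset.mem_filter, Finset.mem_product] at hcd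
    obtain ⟨⟨hc, hd⟩, he⟩ := hcd
    have hc := hB c hc
    have hd := hB d hd
    have h1 : c ∣ a * b := ⟨d, he.symm⟩
    simp only [Finset.mem_insert, Finset.mem_singleton, Prod.mk.injEq]
    rcases (hc.dvd_mul).1 h1 with h | h
    · have h2 : c = a := (Nat.prime_dvd_prime_iff_eq hc ha).1 h
      subst h2
      left
      exact ⟨rfl, Nat.eq_of_mul_eq_mul_left hc.pos he⟩
    · have h2 : c = b := (Nat.prime_dvd_prime_iff_eq hc hb).1 h
      subst h2
      right
      refine ⟨rfl, ?_⟩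
      rw [mul_comm a c] at he
      exact Nat.eq_of_mul_eq_mul_left hc.pos he
  rwa [Finset.card_product, ← sq] at this

/-- squared inner sum -/
noncomputable def sqF (p : ℕ) [Fact p.Prime] (B : Finset ℕ) (n : ℤ) : ℤ :=
  (∑ b ∈ B, quadraticChar (ZMod p) ((n : ZMod p) + (b : ZMod p))) ^ 2

lemma sqF_lower (p : ℕ) [Fact p.Prime] (B : Finset ℕ) (hB : ∀ b ∈ B, b.Prime) (H X : ℕ)
    (hBH : ∀ b ∈ B, b ≤ H) (hX : H * H ≤ X)
    (hχ : ∀ b₁ ∈ B, ∀ b₂ ∈ B, ∀ b₃ ∈ B,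
      quadraticChar (ZMod p) ((b₁ * b₂ + b₃ : ℕ) : ZMod p) = 1) :
    (B.card : ℤ) ^ 4 ≤ 2 * ∑ n ∈ Finset.Ioc (0 : ℤ) X, sqF p B n := by
  set A := ((B ×ˢ B).image (fun x => x.1 * x.2)) with hA
  have h1 := prime_prod_card B hB
  have h2 : ∑ n ∈ A.image (fun n : ℕ => (n : ℤ)), sqF p B n ≤
      ∑ n ∈ Finset.Ioc (0 : ℤ) X, sqF p B n := by
    apply Finset.sum_le_sum_of_subset_of_nonneg
    · intro n hn
      obtain ⟨a, ha, rfl⟩ := Finset.mem_image.1 hn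
      obtain ⟨⟨b, c⟩, hbc, rfl⟩ := Finset.mem_image.1 ha
      rw [Finset.mem_product] at hbc
      rw [Finset.mem_Ioc]
      constructor
      · have := Nat.mul_pos (hB _ hbc.1).pos (hB _ hbc.2).pos
        exact_mod_cast this
      · have := (Nat.mul_le_mul (hBH _ hbc.1) (hBH _ hbc.2)).trans hX
        exact_mod_cast this
    · intros; unfold sqF; positivity
  have h3 : ∑ n ∈ A.image (fun n : ℕ => (n : ℤ)), sqF p B n = A.card * (B.card : ℤ) ^ 2 := by
    rw [Finset.sum_image (by intro a _ b _ h; simpa using h)]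
    rw [Finset.sum_congr rfl (g := fun _ => (B.card : ℤ) ^ 2)]
    · simp
    · intro n hn
      obtain ⟨⟨b, c⟩, hbc, rfl⟩ := Finset.mem_image.1 hn
      rw [Finset.mem_product] at hbc
      unfold sqF
      congr 1
      rw [Finset.sum_congr rfl (g := fun _ => (1 : ℤ))]
      · simp
      · intro d hd
        rw [← hχ b hbc.1 c hbc.2 d hd]
        push_cast
        rfl
  have h4 : (B.card : ℤ) ^ 2 ≤ 2 * A.card := by exact_mod_cast h1
  have h5 : (B.card : ℤ) ^ 2 * (B.card : ℤ) ^ 2 ≤ 2 * A.card * (B.card : ℤ) ^ 2 := by gcongr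
  calc (B.card : ℤ) ^ 4 = (B.card : ℤ) ^ 2 * (B.card : ℤ) ^ 2 := by ring
    _ ≤ 2 * A.card * (B.card : ℤ) ^ 2 := h5
    _ = 2 * (A.card * (B.card : ℤ) ^ 2) := by ring
    _ ≤ _ := by rw [← h3]; linarith

lemma sqF_shift (p : ℕ) [Fact p.Prime] (B : Finset ℕ) (X s : ℕ) (hs : s ≤ X) :
    ∑ n ∈ Finset.Ioc (0 : ℤ) X, sqF p B n ≤ ∑ n ∈ Finset.Ioc (-(X : ℤ)) X, sqF p B (n + s) := by
  have : ∑ n ∈ Finset.Ioc (0 : ℤ) X, sqF p B n =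
      ∑ n ∈ (Finset.Ioc (0 : ℤ) X).image (fun n => n - (s : ℤ)), sqF p B (n + s) := by
    rw [Finset.sum_image (by intro a _ b _ h; simpa using h)]
    simp
  rw [this]
  apply Finset.sum_le_sum_of_subset_of_nonneg
  · intro n hn
    obtain ⟨a, ha, rfl⟩ := Finset.mem_image.1 hn
    rw [Finset.mem_Ioc] at ha ⊢
    omega
  · intros; unfold sqF; positivity

/-- the short correlation sum -/
noncomputable def corr (p : ℕ) [Fact p.Prime] (T : ℕ) (x : ZMod p × ZMod p) : ℤ :=
  ∑ t ∈ (Finset.Icc 1 T).image (fun t : ℕ => (t : ZMod p)),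
    quadraticChar (ZMod p) (x.1 + t) * quadraticChar (ZMod p) (x.2 + t)

lemma cast_inj_of_lt (p : ℕ) {a b : ℕ} (ha : a < p) (hb : b < p)
    (h : (a : ZMod p) = b) : a = b := by
  rw [ZMod.natCast_eq_natCast_iff] at h
  exact Nat.ModEq.eq_of_lt_of_lt h ha hb

lemma corr_le (p : ℕ) [Fact p.Prime] (T : ℕ) (x : ZMod p × ZMod p) : corr p T x ≤ T := by
  have h1 : ∀ y : ZMod p, |quadraticChar (ZMod p) y| ≤ 1 := by
    intro y
    by_cases h : y = 0
    · simp [h]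
    · rcases quadraticChar_dichotomy h with h | h <;> simp [h]
  have h2 : corr p T x ≤ ∑ t ∈ (Finset.Icc 1 T).image (fun t : ℕ => (t : ZMod p)), (1 : ℤ) := by
    refine Finset.sum_le_sum fun t _ => ?_
    refine (le_abs_self _).trans ?_
    rw [abs_mul]
    exact mul_le_one₀ (h1 _) (abs_nonneg _) (h1 _)
  refine h2.trans ?_
  have : ((Finset.Icc 1 T).image (fun t : ℕ => (t : ZMod p))).card ≤ T :=
    Finset.card_image_le.trans (by simp)
  simpa using this

lemma sqF_sum_t (p : ℕ) [Fact p.Prime] (B : Finset ℕ) (T m : ℕ) (hT : T < p) (hm0 : 0 < m)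
    (hm : m < p) (n : ℤ) :
    ∑ t ∈ Finset.Icc 1 T, sqF p B (n + ((m * t : ℕ) : ℤ)) =
      ∑ b ∈ B, ∑ b' ∈ B, corr p T (((n : ZMod p) + b) / m, ((n : ZMod p) + b') / m) := by
  have hm' : (m : ZMod p) ≠ 0 := by
    rw [Ne, ZMod.natCast_eq_zero_iff]
    exact Nat.not_dvd_of_pos_of_lt hm0 hm
  unfold corr sqF
  simp only [sq, Finset.sum_mul_sum]
  rw [Finset.sum_comm]
  refine Finset.sum_congr rfl fun b _ => ?_
  rw [Finset.sum_comm]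
  refine Finset.sum_congr rfl fun b' _ => ?_
  rw [Finset.sum_image]
  · refine Finset.sum_congr rfl fun t _ => ?_
    have key : ∀ c : ℕ, quadraticChar (ZMod p) (((n + ((m * t : ℕ) : ℤ) : ℤ) : ZMod p) + (c : ZMod p)) =
        quadraticChar (ZMod p) m * quadraticChar (ZMod p) (((n : ZMod p) + c) / m + t) := by
      intro c
      rw [← map_mul]
      congr 1
      push_cast
      field_simp
      ring
    rw [key, key]
    have := quadraticChar_sq_one hm'
    linear_combination (quadraticChar (ZMod p) (((n : ZMod p) + b) / m + t)) *
      (quadraticChar (ZMod p) (((n : ZMod p) + b') / m + t)) * this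
  · intro a ha b hb h
    simp only [Finset.coe_Icc, Set.mem_Icc] at ha hb
    exact cast_inj_of_lt p (by omega) (by omega) h

lemma int_eq_of_cast (p : ℕ) (a b : ℤ) (h : |a - b| < p) (hc : (a : ZMod p) = b) : a = b := by
  rw [ZMod.intCast_eq_intCast_iff_dvd_sub] at hc
  have := Int.eq_zero_of_abs_lt_dvd hc (by rwa [abs_sub_comm])
  omega

lemma pair_inj (p : ℕ) [Fact p.Prime] (H X M : ℕ) (h1 : 2 * (H * M) < p) (h2 : 2 * X < p)
    (b : ℕ) (hb0 : 0 < b) (hb : b ≤ H)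
    (m m₁ b' b₁ : ℕ) (n n₁ : ℤ) (hm : m.Prime) (hHm : H < m) (hmM : m ≤ M)
    (hm₁ : m₁.Prime) (hHm₁ : H < m₁) (hmM₁ : m₁ ≤ M)
    (hb' : b' ≤ H) (hb'b : b' ≠ b) (hb₁ : b₁ ≤ H) (hb0' : 0 < b') (hb0₁ : 0 < b₁)
    (hn : -(X : ℤ) < n ∧ n ≤ X) (hn₁ : -(X : ℤ) < n₁ ∧ n₁ ≤ X)
    (e1 : ((n : ZMod p) + b) / m = ((n₁ : ZMod p) + b) / m₁)
    (e2 : ((n : ZMod p) + b') / m = ((n₁ : ZMod p) + b₁) / m₁) :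
    m = m₁ ∧ n = n₁ ∧ b' = b₁ := by
  have hMp : M < p := by nlinarith
  have hmz : (m : ZMod p) ≠ 0 := by
    rw [Ne, ZMod.natCast_eq_zero_iff]
    exact Nat.not_dvd_of_pos_of_lt hm.pos (by omega)
  have hmz₁ : (m₁ : ZMod p) ≠ 0 := by
    rw [Ne, ZMod.natCast_eq_zero_iff]
    exact Nat.not_dvd_of_pos_of_lt hm₁.pos (by omega)
  rw [div_eq_div_iff hmz hmz₁] at e1 e2
  have e3 : ((((b' : ℤ) - b) * m₁ : ℤ) : ZMod p) = ((((b₁ : ℤ) - b) * m : ℤ) : ZMod p) := by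
    push_cast
    linear_combination e2 - e1
  have bd : ∀ (c d : ℕ), c ≤ H → d ≤ M → |((c : ℤ) - b) * d| ≤ H * M := by
    intro c d hc hd
    rw [abs_mul]
    have : |(c : ℤ) - b| ≤ H := by rw [abs_le]; constructor <;> omega
    have : |(d : ℤ)| ≤ M := by rw [abs_le]; constructor <;> omega
    gcongr
  have e4 := int_eq_of_cast p _ _ (by
    have a1 := bd b' m₁ hb' hmM₁
    have a2 := bd b₁ m hb₁ hmM
    have a3 := abs_sub (((b' : ℤ) - b) * m₁) (((b₁ : ℤ) - b) * m)
    have a4 : 2 * ((H : ℤ) * M) < p := by exact_mod_cast h1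
    linarith) e3
  have hmm : m = m₁ := by
    by_contra hne
    have hd : (m : ℤ) ∣ ((b' : ℤ) - b) * m₁ := ⟨(b₁ : ℤ) - b, by rw [e4]; ring⟩
    rcases (Nat.prime_iff_prime_int.1 hm).dvd_or_dvd hd with h | h
    · have := Int.eq_zero_of_abs_lt_dvd h (by rw [abs_lt]; constructor <;> omega)
      omega
    · have h' : m ∣ m₁ := by exact_mod_cast h
      exact hne ((Nat.prime_dvd_prime_iff_eq hm hm₁).1 h')
  subst hmm
  refine ⟨rfl, ?_, ?_⟩
  · have : ((n : ℤ) : ZMod p) = ((n₁ : ℤ) : ZMod p) := by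
      have := mul_right_cancel₀ hmz e1
      simpa using this
    refine int_eq_of_cast p _ _ ?_ this
    rw [abs_lt]; constructor <;> omega
  · have hm0 : (m : ℤ) ≠ 0 := by exact_mod_cast hm.ne_zero
    have := mul_right_cancel₀ hm0 e4
    omega

end

section

lemma core_ineq (p : ℕ) [Fact p.Prime] (B Ms : Finset ℕ) (H X M T : ℕ)
    (hB : ∀ b ∈ B, b.Prime) (hBH : ∀ b ∈ B, b ≤ H) (hX : H * H ≤ X)
    (hMs : ∀ m ∈ Ms, m.Prime ∧ H < m ∧ m ≤ M) (hMT : M * T ≤ X) (hT : T < p)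
    (h1 : 2 * (H * M) < p) (h2 : 2 * X < p)
    (hχ : ∀ b₁ ∈ B, ∀ b₂ ∈ B, ∀ b₃ ∈ B,
      quadraticChar (ZMod p) ((b₁ * b₂ + b₃ : ℕ) : ZMod p) = 1)
    (hBne : B.Nonempty) (hL : 8 * X ≤ B.card ^ 3) :
    ∃ S : Finset (ZMod p × ZMod p), S.card ≤ 2 * X * Ms.card * B.card ∧
      (Ms.card * T * B.card ^ 3 : ℤ) ≤ 4 * ∑ x ∈ S, |corr p T x| := by
  classical
  set I := Finset.Ioc (-(X : ℤ)) X with hI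
  have hIc : I.card = 2 * X := by rw [hI, Int.card_Ioc]; omega
  set Y : Finset (ℕ × ℤ × ℕ) := Ms ×ˢ I ×ˢ B with hY
  set f : ℕ → ℕ × ℤ × ℕ → ZMod p × ZMod p := fun b x =>
    (((x.2.1 : ZMod p) + b) / x.1, ((x.2.1 : ZMod p) + x.2.2) / x.1) with hf
  have hMp : ∀ m ∈ Ms, m < p := by
    intro m hm
    obtain ⟨b, hb⟩ := hBne
    have := (hB b hb).pos
    have := hBH b hb
    have := (hMs m hm).2.2
    nlinarith
  have total : (Ms.card * T * B.card ^ 4 : ℤ) ≤ 2 * ∑ b ∈ B, ∑ x ∈ Y, corr p T (f b x) := by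
    have a1 : ∑ m ∈ Ms, ∑ t ∈ Finset.Icc 1 T, (B.card : ℤ) ^ 4 ≤
        ∑ m ∈ Ms, ∑ t ∈ Finset.Icc 1 T, 2 * ∑ n ∈ I, sqF p B (n + ((m * t : ℕ) : ℤ)) := by
      refine Finset.sum_le_sum fun m hm => Finset.sum_le_sum fun t ht => ?_
      have b1 := sqF_lower p B hB H X hBH hX hχ
      have b2 := sqF_shift p B X (m * t) (by
        rw [Finset.mem_Icc] at ht
        exact (Nat.mul_le_mul (hMs m hm).2.2 ht.2).trans hMT)
      linarith
    have a2 : ∑ m ∈ Ms, ∑ t ∈ Finset.Icc 1 T, (B.card : ℤ) ^ 4 = Ms.card * T * B.card ^ 4 := by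
      simp; ring
    rw [a2] at a1
    refine a1.trans (le_of_eq ?_)
    simp only [← Finset.mul_sum]
    congr 1
    have a3 : ∀ m ∈ Ms, ∑ t ∈ Finset.Icc 1 T, ∑ n ∈ I, sqF p B (n + ((m * t : ℕ) : ℤ)) =
        ∑ b ∈ B, ∑ n ∈ I, ∑ b' ∈ B, corr p T (((n : ZMod p) + b) / m, ((n : ZMod p) + b') / m) := by
      intro m hm
      rw [Finset.sum_comm]
      rw [Finset.sum_congr rfl (fun n _ => sqF_sum_t p B T m hT (hMs m hm).1.pos (hMp m hm) n)]
      rw [Finset.sum_comm]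
    rw [Finset.sum_congr rfl a3, Finset.sum_comm]
    refine Finset.sum_congr rfl fun b _ => ?_
    rw [hY, Finset.sum_product]
    refine Finset.sum_congr rfl fun m _ => ?_
    rw [Finset.sum_product]
  have hLpos : (0 : ℤ) < B.card := by exact_mod_cast Finset.card_pos.2 hBne
  obtain ⟨b, hb, hbG⟩ : ∃ b ∈ B, (Ms.card * T * B.card ^ 3 : ℤ) ≤ 2 * ∑ x ∈ Y, corr p T (f b x) := by
    by_contra hcon
    push Not at hcon
    have := Finset.sum_lt_sum_of_nonempty hBne hcon
    rw [← Finset.mul_sum, Finset.sum_const, nsmul_eq_mul] at this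
    have e : (B.card : ℤ) * (Ms.card * T * B.card ^ 3 : ℤ) = Ms.card * T * B.card ^ 4 := by ring
    linarith
  set Y1 := Y.filter (fun x => x.2.2 = b) with hY1
  set Y2 := Y.filter (fun x => ¬ x.2.2 = b) with hY2
  refine ⟨Y2.image (f b), ?_, ?_⟩
  · refine Finset.card_image_le.trans ((Finset.card_filter_le _ _).trans ?_)
    rw [hY, Finset.card_product, Finset.card_product, hIc]
    apply le_of_eq; ring
  · have hinj : Set.InjOn (f b) Y2 := by
      rintro ⟨m, n, b'⟩ hx ⟨m₁, n₁, b₁⟩ hx₁ he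
      simp only [hY2, hY, hI, Finset.coe_filter, Finset.mem_product, Finset.mem_Ioc, Set.mem_ofPred_eq]
        at hx hx₁
      simp only [hf, Prod.mk.injEq] at he
      obtain ⟨⟨c1, c2, c3⟩, c4⟩ := hx
      obtain ⟨⟨d1, d2, d3⟩, d4⟩ := hx₁
      obtain ⟨r1, r2, r3⟩ := pair_inj p H X M h1 h2 b (hB b hb).pos (hBH b hb) m m₁ b' b₁ n n₁
        (hMs m c1).1 (hMs m c1).2.1 (hMs m c1).2.2 (hMs m₁ d1).1 (hMs m₁ d1).2.1 (hMs m₁ d1).2.2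
        (hBH _ c3) c4 (hBH _ d3) (hB _ c3).pos (hB _ d3).pos c2 d2 he.1 he.2
      rw [r1, r2, r3]
    rw [Finset.sum_image hinj]
    have s1 : ∑ x ∈ Y, corr p T (f b x) = ∑ x ∈ Y1, corr p T (f b x) + ∑ x ∈ Y2, corr p T (f b x) :=
      (Finset.sum_filter_add_sum_filter_not _ _ _).symm
    have s2 : ∑ x ∈ Y2, corr p T (f b x) ≤ ∑ x ∈ Y2, |corr p T (f b x)| :=
      Finset.sum_le_sum fun x _ => le_abs_self _
    have s3 : ∑ x ∈ Y1, corr p T (f b x) ≤ (2 * X * Ms.card : ℤ) * T := by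
      refine (Finset.sum_le_card_nsmul _ _ (T : ℤ) (fun x _ => corr_le p T _)).trans ?_
      rw [nsmul_eq_mul]
      have : Y1.card ≤ 2 * X * Ms.card := by
        have hsub : Y1 ⊆ Ms ×ˢ I ×ˢ {b} := by
          rintro ⟨m, n, b'⟩ hx
          simp only [hY1, hY, Finset.mem_filter, Finset.mem_product, Finset.mem_singleton] at hx ⊢
          exact ⟨hx.1.1, hx.1.2.1, hx.2⟩
        refine (Finset.card_le_card hsub).trans ?_
        rw [Finset.card_product, Finset.card_product, hIc, Finset.card_singleton]
        apply le_of_eq; ring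
      have h : (Y1.card : ℤ) ≤ 2 * X * Ms.card := by exact_mod_cast this
      gcongr
    have s4 : (8 * X : ℤ) ≤ B.card ^ 3 := by exact_mod_cast hL
    have s5 : (8 * X : ℤ) * (Ms.card * T) ≤ B.card ^ 3 * (Ms.card * T) := by gcongr
    linarith

lemma final_ineq (p : ℕ) [Fact p.Prime] (B Ms : Finset ℕ) (H X M T k : ℕ) (hk : 0 < k)
    (hkp : (4 * k + 6) ^ 2 ≤ p)
    (hB : ∀ b ∈ B, b.Prime) (hBH : ∀ b ∈ B, b ≤ H) (hX : H * H ≤ X)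
    (hMs : ∀ m ∈ Ms, m.Prime ∧ H < m ∧ m ≤ M) (hMT : M * T ≤ X) (hT : T < p)
    (h1 : 2 * (H * M) < p) (h2 : 2 * X < p)
    (hχ : ∀ b₁ ∈ B, ∀ b₂ ∈ B, ∀ b₃ ∈ B,
      quadraticChar (ZMod p) ((b₁ * b₂ + b₃ : ℕ) : ZMod p) = 1)
    (hBne : B.Nonempty) (hL : 8 * X ≤ B.card ^ 3) :
    ((Ms.card : ℝ) * T * B.card ^ 3) ^ (2 * k) ≤
      4 ^ (2 * k) * ((2 * X * Ms.card * B.card : ℝ) ^ (2 * k - 1) *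
        ((k : ℝ) ^ (2 * k) * (T : ℝ) ^ k * (p : ℝ) ^ 2 +
        (T : ℝ) ^ (2 * k) * ((30 * k + 17) ^ 2 * (p : ℝ)))) := by
  obtain ⟨S, hS, hmain⟩ := core_ineq p B Ms H X M T hB hBH hX hMs hMT hT h1 h2 hχ hBne hL
  have hD : ((Finset.Icc 1 T).image (fun t : ℕ => (t : ZMod p))).card = T := by
    rw [Finset.card_image_of_injOn]
    · simp
    · intro a ha b hb h
      simp only [Finset.coe_Icc, Set.mem_Icc] at ha hb
      exact cast_inj_of_lt p (by omega) (by omega) h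
  have hmom := moment_bound_s9 p k hk hkp ((Finset.Icc 1 T).image (fun t : ℕ => (t : ZMod p)))
  rw [hD] at hmom
  have hmom2 : ∑ x ∈ S, |corr p T x| ^ (2 * k) ≤ (k : ℤ) ^ (2 * k) * (T : ℤ) ^ k * (p : ℤ) ^ 2 +
        (T : ℤ) ^ (2 * k) * ((30 * k + 17) ^ 2 * (p : ℤ)) := by
    refine le_trans ?_ hmom
    calc ∑ x ∈ S, |corr p T x| ^ (2 * k) ≤ ∑ x : ZMod p × ZMod p, |corr p T x| ^ (2 * k) := by
          apply Finset.sum_le_sum_of_subset_of_nonneg (Finset.subset_univ _)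
          intros; positivity
      _ = _ := by
          refine Finset.sum_congr rfl fun x _ => ?_
          rw [(even_two_mul k).pow_abs]
          rfl
  obtain ⟨n, hn⟩ : ∃ n, 2 * k = n + 1 := ⟨2 * k - 1, by omega⟩
  have hhol : (∑ x ∈ S, |corr p T x|) ^ (2 * k) ≤
      (S.card : ℤ) ^ (2 * k - 1) * ∑ x ∈ S, |corr p T x| ^ (2 * k) := by
    rw [hn]
    exact pow_sum_le_card_mul_sum_pow (fun i _ => abs_nonneg _) n
  have hfin : ((Ms.card : ℤ) * T * B.card ^ 3) ^ (2 * k) ≤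
      4 ^ (2 * k) * ((2 * X * Ms.card * B.card : ℤ) ^ (2 * k - 1) *
        ((k : ℤ) ^ (2 * k) * (T : ℤ) ^ k * (p : ℤ) ^ 2 +
        (T : ℤ) ^ (2 * k) * ((30 * k + 17) ^ 2 * (p : ℤ)))) := by
    have hS2 : (S.card : ℤ) ≤ 2 * X * Ms.card * B.card := by exact_mod_cast hS
    calc ((Ms.card : ℤ) * T * B.card ^ 3) ^ (2 * k)
        ≤ (4 * ∑ x ∈ S, |corr p T x|) ^ (2 * k) := by gcongr
      _ = 4 ^ (2 * k) * (∑ x ∈ S, |corr p T x|) ^ (2 * k) := by rw [mul_pow]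
      _ ≤ 4 ^ (2 * k) * ((S.card : ℤ) ^ (2 * k - 1) * ∑ x ∈ S, |corr p T x| ^ (2 * k)) := by
          gcongr
      _ ≤ _ := by
          gcongr
  exact_mod_cast hfin

end

section

lemma centralBinom_le_primes (n : ℕ) (hn : 2 < n) :
    n.centralBinom ≤ (2 * n) ^ Nat.sqrt (2 * n) * 4 ^ (2 * n / 3) *
      (2 * n) ^ ((Finset.Ioc n (2 * n)).filter Nat.Prime).card := by
  have n_pos : 0 < n := by omega
  have n2_pos : 1 ≤ 2 * n := by omega
  let S := {p ∈ Finset.range (2 * n / 3 + 1) | Nat.Prime p}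
  let f : ℕ → ℕ := fun x => x ^ n.centralBinom.factorization x
  have hS : ∏ x ∈ S, f x = ∏ x ∈ Finset.range (2 * n / 3 + 1), f x := by
    refine Finset.prod_filter_of_ne fun p _ h => ?_
    contrapose h; dsimp only [f]
    rw [Nat.factorization_eq_zero_of_not_prime n.centralBinom h, _root_.pow_zero]
  have hsmall : ∏ x ∈ S, f x ≤ (2 * n) ^ Nat.sqrt (2 * n) * 4 ^ (2 * n / 3) := by
    rw [← Finset.prod_filter_mul_prod_filter_not S (· ≤ Nat.sqrt (2 * n))]
    apply mul_le_mul'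
    · refine (Finset.prod_le_prod' fun p _ => (?_ : f p ≤ 2 * n)).trans ?_
      · exact Nat.pow_factorization_choose_le (mul_pos two_pos n_pos)
      have : (Finset.Icc 1 (Nat.sqrt (2 * n))).card = Nat.sqrt (2 * n) := by
        rw [Nat.card_Icc, Nat.add_sub_cancel]
      rw [Finset.prod_const]
      refine pow_right_mono₀ n2_pos ((Finset.card_le_card fun x hx => ?_).trans this.le)
      obtain ⟨h1, h2⟩ := Finset.mem_filter.1 hx
      exact Finset.mem_Icc.mpr ⟨(Finset.mem_filter.1 h1).2.one_lt.le, h2⟩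
    · refine le_trans ?_ (primorial_le_four_pow (2 * n / 3))
      refine (Finset.prod_le_prod' fun p hp => (?_ : f p ≤ p)).trans ?_
      · obtain ⟨h1, h2⟩ := Finset.mem_filter.1 hp
        refine (pow_right_mono₀ (Finset.mem_filter.1 h1).2.one_lt.le ?_).trans (pow_one p).le
        exact Nat.factorization_choose_le_one (Nat.sqrt_lt'.mp <| not_le.1 h2)
      refine Finset.prod_le_prod_of_subset_of_one_le' (Finset.filter_subset _ _) ?_
      exact fun p hp _ => (Finset.mem_filter.1 hp).2.one_lt.le
  have hbig : ∏ x ∈ (Finset.Ioc n (2 * n)).filter Nat.Prime, f x ≤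
      (2 * n) ^ ((Finset.Ioc n (2 * n)).filter Nat.Prime).card := by
    refine (Finset.prod_le_prod' fun p _ => (?_ : f p ≤ 2 * n)).trans ?_
    · exact Nat.pow_factorization_choose_le (mul_pos two_pos n_pos)
    rw [Finset.prod_const]
  have hdisj : Disjoint S ((Finset.Ioc n (2 * n)).filter Nat.Prime) := by
    rw [Finset.disjoint_left]
    intro a ha hb
    simp only [S, Finset.mem_filter, Finset.mem_range, Finset.mem_Ioc] at ha hb
    omega
  have htot : n.centralBinom = ∏ x ∈ S ∪ (Finset.Ioc n (2 * n)).filter Nat.Prime, f x := by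
    refine (Eq.trans ?_ n.prod_pow_factorization_centralBinom).symm
    apply Finset.prod_subset
    · intro a ha
      simp only [S, Finset.mem_union, Finset.mem_filter, Finset.mem_range, Finset.mem_Ioc] at ha
      simp only [Finset.mem_range]
      omega
    intro x hx h2x
    simp only [S, Finset.mem_union, Finset.mem_filter, Finset.mem_range, Finset.mem_Ioc,
      not_or, not_and] at hx h2x
    by_cases hp : x.Prime
    · have a1 : ¬ x < 2 * n / 3 + 1 := fun h => h2x.1 h hp
      have a2 : ¬ (n < x ∧ x ≤ 2 * n) := fun h => h2x.2 h hp
      simp only [f]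
      rw [Nat.factorization_centralBinom_of_two_mul_self_lt_three_mul hn (by omega) (by omega),
        Nat.pow_zero]
    · simp only [f]
      rw [Nat.factorization_eq_zero_of_not_prime n.centralBinom hp, Nat.pow_zero]
  rw [htot, Finset.prod_union hdisj]
  exact Nat.mul_le_mul hsmall hbig

lemma prime_count_log (n : ℕ) (hn : 4 ≤ n) :
    (n : ℝ) / 3 ≤ (((Finset.Ioc n (2 * n)).filter Nat.Prime).card + Real.sqrt (2 * n) + 1) *
      Real.log (2 * n) := by
  set P := ((Finset.Ioc n (2 * n)).filter Nat.Prime).card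
  have h1 := Nat.four_pow_lt_mul_centralBinom n hn
  have h2 := centralBinom_le_primes n (by omega)
  have h3 : 4 ^ n ≤ n * ((2 * n) ^ Nat.sqrt (2 * n) * 4 ^ (2 * n / 3) * (2 * n) ^ P) :=
    h1.le.trans (Nat.mul_le_mul le_rfl h2)
  have h4 : (4:ℝ) ^ n ≤ n * ((2 * n) ^ Nat.sqrt (2 * n) * 4 ^ (2 * n / 3) * (2 * n) ^ P) := by
    exact_mod_cast h3
  have hn0 : (0:ℝ) < n := by exact_mod_cast (by omega : 0 < n)
  have hn4 : (4:ℝ) ≤ n := by exact_mod_cast hn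
  have h5 := Real.log_le_log (by positivity) h4
  rw [Real.log_mul (by positivity) (by positivity), Real.log_mul (by positivity) (by positivity),
    Real.log_mul (by positivity) (by positivity), Real.log_pow, Real.log_pow, Real.log_pow,
    Real.log_pow] at h5
  have h6 : Real.log n ≤ Real.log (2 * n) := Real.log_le_log hn0 (by linarith)
  have h7 : ((Nat.sqrt (2 * n) : ℕ) : ℝ) ≤ Real.sqrt (2 * n) := by
    have := @Real.nat_sqrt_le_real_sqrt (2 * n)
    simpa using this
  have h8 : ((2 * n / 3 : ℕ) : ℝ) ≤ 2 * n / 3 := by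
    have := @Nat.cast_div_le ℝ _ _ _ (2 * n) 3
    simpa using this
  have h9 : (1:ℝ) ≤ Real.log 4 := by
    rw [Real.le_log_iff_exp_le (by norm_num)]
    have := Real.exp_one_lt_d9
    linarith
  have h10 : 0 ≤ Real.log (2 * n) := Real.log_nonneg (by linarith)
  have h11 := mul_le_mul_of_nonneg_right h7 h10
  have h12 := mul_le_mul_of_nonneg_right h8 (by linarith : 0 ≤ Real.log 4)
  nlinarith

lemma prime_count (ε : ℝ) (h0 : 0 < ε) (h1 : ε ≤ 1 / 4) : ∀ᶠ x : ℝ in Filter.atTop,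
    x ^ (1 - ε) ≤ (((Finset.Ioc ⌊x⌋₊ (2 * ⌊x⌋₊)).filter Nat.Prime).card : ℝ) := by
  have hl := (isLittleO_log_rpow_atTop h0).bound (by norm_num : (0:ℝ) < 1 / 40)
  filter_upwards [hl, Filter.eventually_ge_atTop (16:ℝ)] with x hx hx16
  have hx0 : (0:ℝ) < x := by linarith
  set n := ⌊x⌋₊
  have hn1 : (n:ℝ) ≤ x := Nat.floor_le hx0.le
  have hn2 : x < n + 1 := Nat.lt_floor_add_one x
  have hn4 : 4 ≤ n := by
    apply Nat.le_floor; norm_num; linarith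
  have hmain := prime_count_log n hn4
  set P := ((Finset.Ioc n (2 * n)).filter Nat.Prime).card
  by_contra hcon
  push Not at hcon
  have hlx : 0 ≤ Real.log x := Real.log_nonneg (by linarith)
  rw [Real.norm_eq_abs, Real.norm_eq_abs, abs_of_nonneg hlx, abs_of_nonneg (by positivity)] at hx
  have hn0 : (4:ℝ) ≤ n := by exact_mod_cast hn4
  have e1 : Real.log (2 * n) ≤ 2 * Real.log x := by
    have : Real.log (2 * n) ≤ Real.log (x ^ 2) := Real.log_le_log (by linarith) (by nlinarith)
    rwa [Real.log_pow] at this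
  have e2 : Real.sqrt (2 * n) ≤ x ^ (1 - ε) := by
    rw [Real.sqrt_le_left (by positivity)]
    rw [← Real.rpow_natCast, ← Real.rpow_mul hx0.le]
    calc (2 * n : ℝ) ≤ x ^ (1/2:ℝ) * x := by
          have : (2:ℝ) ≤ x ^ (1/2:ℝ) := by
            rw [← Real.sqrt_eq_rpow]
            apply Real.le_sqrt_of_sq_le; linarith
          nlinarith
      _ = x ^ (1/2 + 1:ℝ) := by rw [Real.rpow_add hx0, Real.rpow_one]
      _ ≤ _ := by
          apply Real.rpow_le_rpow_of_exponent_le (by linarith)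
          push_cast; linarith
  have e3 : 1 ≤ x ^ (1 - ε) := Real.one_le_rpow (by linarith) (by linarith)
  have e4 : x ^ (1 - ε) * x ^ ε = x := by
    rw [← Real.rpow_add hx0]; simp
  have e5 : ((P:ℝ) + Real.sqrt (2 * n) + 1) * Real.log (2 * n) ≤
      (3 * x ^ (1 - ε)) * (2 * (1 / 40 * x ^ ε)) := by
    apply mul_le_mul
    · linarith
    · linarith
    · exact Real.log_nonneg (by linarith)
    · positivity
  nlinarith

end

section

lemma alg_step (k : ℕ) (hk : 0 < k) (K T L X q : ℝ) (hK : 0 < K) (hT : 0 < T) (hL : 0 < L)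
    (hX : 0 ≤ X) (hq : 0 ≤ q) (hTq : q ≤ T ^ k)
    (h : (K * T * L ^ 3) ^ (2 * k) ≤
      4 ^ (2 * k) * ((2 * X * K * L) ^ (2 * k - 1) *
        ((k : ℝ) ^ (2 * k) * T ^ k * q ^ 2 + T ^ (2 * k) * ((30 * k + 17) ^ 2 * q)))) :
    K * L ^ (4 * k + 1) ≤
      4 ^ (2 * k) * (2 * X) ^ (2 * k - 1) * (((k : ℝ) ^ (2 * k) + (30 * k + 17) ^ 2) * q) := by
  have hbr : (k : ℝ) ^ (2 * k) * T ^ k * q ^ 2 + T ^ (2 * k) * ((30 * k + 17) ^ 2 * q) ≤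
      T ^ (2 * k) * (((k : ℝ) ^ (2 * k) + (30 * k + 17) ^ 2) * q) := by
    have : (k : ℝ) ^ (2 * k) * T ^ k * q ^ 2 ≤ (k : ℝ) ^ (2 * k) * T ^ k * (T ^ k * q) := by
      rw [sq]; gcongr
    have e : T ^ (2 * k) = T ^ k * T ^ k := by rw [two_mul, pow_add]
    calc _ ≤ (k : ℝ) ^ (2 * k) * T ^ k * (T ^ k * q) + T ^ (2 * k) * ((30 * k + 17) ^ 2 * q) := by
          gcongr
      _ = _ := by rw [e]; ring
  have h2 := h.trans (mul_le_mul_of_nonneg_left (mul_le_mul_of_nonneg_left hbr (by positivity))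
    (by positivity))
  obtain ⟨j, rfl⟩ : ∃ j, k = j + 1 := ⟨k - 1, by omega⟩
  set A := (((j + 1 : ℕ) : ℝ) ^ (2 * (j + 1)) + (30 * ((j + 1 : ℕ) : ℝ) + 17) ^ 2) * q
  have e1 : 2 * (j + 1) - 1 = 2 * j + 1 := by omega
  rw [e1] at h2 ⊢
  have hpos : 0 < T ^ (2 * (j + 1)) * (K ^ (2 * j + 1) * L ^ (2 * j + 1)) := by positivity
  refine le_of_mul_le_mul_left ?_ hpos
  calc _ = (K * T * L ^ 3) ^ (2 * (j + 1)) := by ring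
    _ ≤ _ := h2
    _ = _ := by rw [mul_pow (2 * X * K), mul_pow (2 * X)]; ring

lemma pow_step (k : ℕ) (hk : 0 < k) (K L N t q D ε : ℝ) (hN : 1 ≤ N) (ht : 1 ≤ t)
    (hε : 0 ≤ ε) (hK : (N ^ 2 / (16 * t)) ^ (1 - ε) ≤ K)
    (hL : N ^ (1 - ε) ≤ L) 
    (h : K * L ^ (4 * k + 1) ≤ D * N ^ (4 * k - 2) * q) :
    N ^ 5 ≤ 16 * D * t * q * N ^ ((4 * k + 3) * ε) := by
  have hN0 : 0 < N := by linarith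
  have ht0 : 0 < t := by linarith
  set z := N ^ 2 / (16 * t) with hz
  have hz0 : 0 < z := by positivity
  set u := N ^ ε with hu
  have hu0 : 0 < u := by positivity
  have hzN : z ≤ N ^ 2 := by
    apply div_le_self (by positivity); linarith
  have hze : z ^ ε ≤ u ^ 2 := by
    calc z ^ ε ≤ (N ^ 2) ^ ε := by gcongr
      _ = u ^ 2 := by
        rw [hu, ← Real.rpow_natCast, ← Real.rpow_natCast, ← Real.rpow_mul hN0.le,
          ← Real.rpow_mul hN0.le, mul_comm]
  have hK2 : z ≤ K * u ^ 2 := by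
    calc z = z ^ (1 - ε) * z ^ ε := by rw [← Real.rpow_add hz0]; simp
      _ ≤ K * u ^ 2 := by
        apply mul_le_mul hK hze (by positivity)
        exact le_trans (by positivity) hK
  have hL2 : N ≤ L * u := by
    calc N = N ^ (1 - ε) * N ^ ε := by rw [← Real.rpow_add hN0]; simp
      _ ≤ L * u := by gcongr
  have hL0 : 0 ≤ L := le_trans (by positivity) hL
  have hK0 : 0 ≤ K := le_trans (by positivity) hK
  have hue : N ^ ((4 * k + 3) * ε) = u ^ (4 * k + 3) := by
    rw [hu, ← Real.rpow_natCast, ← Real.rpow_mul hN0.le]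
    push_cast; ring_nf
  rw [hue]
  obtain ⟨j, hj⟩ : ∃ j, 4 * k = j + 2 := ⟨4 * k - 2, by omega⟩
  rw [hj] at h ⊢
  have h3 : z * N ^ (j + 2 + 1) ≤ (K * u ^ 2) * (L * u) ^ (j + 2 + 1) := by gcongr
  have h4 : (K * u ^ 2) * (L * u) ^ (j + 2 + 1) = K * L ^ (j + 2 + 1) * u ^ (j + 2 + 3) := by ring
  have h5 : z * N ^ (j + 2 + 1) ≤ D * N ^ j * q * u ^ (j + 2 + 3) := by
    rw [h4] at h3
    exact h3.trans (mul_le_mul_of_nonneg_right h (by positivity))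
  have h6 : z * (16 * t) = N ^ 2 := by rw [hz]; field_simp
  have h7 := mul_le_mul_of_nonneg_right h5 (by positivity : 0 ≤ 16 * t)
  have hNj : 0 < N ^ j := by positivity
  refine le_of_mul_le_mul_left ?_ hNj
  calc N ^ j * N ^ 5 = N ^ 2 * N ^ (j + 2 + 1) := by ring
    _ = z * N ^ (j + 2 + 1) * (16 * t) := by rw [← h6]; ring
    _ ≤ _ := h7
    _ = _ := by ring

end

set_option maxHeartbeats 1600000 in
lemma main_contra (η : ℝ) (hη : 0 < η) (hη' : η < 1 / 20) :
    ∃ p₀ : ℕ, ∀ (p : ℕ), p.Prime → p₀ ≤ p →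
      (1 ≤ (p : ℝ) ^ ((1 : ℝ) / 5 + η)) ∧ (8 * ((p : ℝ) ^ ((1 : ℝ) / 5 + η)) ^ 2 < p) ∧
      ¬ (∀ b₁ b₂ b₃ : ℕ, b₁.Prime → b₂.Prime → b₃.Prime →
        (p : ℝ) ^ ((1 : ℝ) / 5 + η) < (b₁ : ℝ) → (b₁ : ℝ) ≤ 2 * (p : ℝ) ^ ((1 : ℝ) / 5 + η) →
        (p : ℝ) ^ ((1 : ℝ) / 5 + η) < (b₂ : ℝ) → (b₂ : ℝ) ≤ 2 * (p : ℝ) ^ ((1 : ℝ) / 5 + η) →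
        (p : ℝ) ^ ((1 : ℝ) / 5 + η) < (b₃ : ℝ) → (b₃ : ℝ) ≤ 2 * (p : ℝ) ^ ((1 : ℝ) / 5 + η) →
        ∀ _ : Fact p.Prime, quadraticChar (ZMod p) ((b₁ * b₂ + b₃ : ℕ) : ZMod p) = 1) := by
  set k : ℕ := ⌈1 / η⌉₊ with hkdef
  have hk1 : 1 / η ≤ k := Nat.le_ceil _
  have hk : 0 < k := Nat.ceil_pos.mpr (by positivity)
  have hkη : 1 ≤ η * k := by
    rw [div_le_iff₀ hη] at hk1; linarith
  set ε : ℝ := η / (4 * k + 3) with hεdef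
  have hε0 : 0 < ε := by positivity
  have hεη : ε ≤ η := div_le_self hη.le (by linarith [(Nat.cast_nonneg k : (0:ℝ) ≤ k)])
  have hεk : (4 * k + 3) * ε = η := by rw [hεdef]; field_simp
  obtain ⟨x0, hx0⟩ := Filter.eventually_atTop.mp (prime_count ε hε0 (by linarith))
  set A : ℝ := (k : ℝ) ^ (2 * k) + (30 * k + 17) ^ 2 with hA
  set D : ℝ := 4 ^ (2 * k) * 8 ^ (2 * k - 1) * A with hD
  have hcast : Filter.Tendsto (fun p : ℕ => (p : ℝ)) Filter.atTop Filter.atTop :=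
    tendsto_natCast_atTop_atTop
  have ev : ∀ a : ℝ, 0 < a → ∀ c : ℝ, ∀ᶠ p : ℕ in Filter.atTop, c ≤ (p : ℝ) ^ a :=
    fun a ha c => ((tendsto_rpow_atTop ha).comp hcast).eventually_ge_atTop c
  have e1 := ev η hη 2
  have e2 := ev (1 / 5 + η) (by linarith) (max x0 1024)
  have e3 := ev (1 / 5) (by norm_num) 32
  have e4 := ev (3 * η) (by linarith) (16 * D + 1)
  have e5 := ev (1 / 4) (by norm_num) 17
  have e6 := ev 1 (by norm_num) ((4 * k + 6) ^ 2)
  obtain ⟨p₀, hp₀⟩ := Filter.eventually_atTop.mp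
    (e1.and (e2.and (e3.and (e4.and (e5.and e6)))))
  refine ⟨p₀, fun p hp hpp => ?_⟩
  obtain ⟨f1, f2, f3, f4, f5, f6⟩ := hp₀ p hpp
  have hfact : Fact p.Prime := ⟨hp⟩
  set q : ℝ := (p : ℝ) with hq
  have hq1 : 1 < q := by rw [hq]; exact_mod_cast hp.one_lt
  have hq0 : 0 < q := by linarith
  set N : ℝ := q ^ ((1:ℝ) / 5 + η) with hN
  set t : ℝ := q ^ η with ht
  rw [Real.rpow_one] at f6
  have hNx : x0 ≤ N := le_trans (le_max_left _ _) f2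
  have hN1 : 1024 ≤ N := le_trans (le_max_right _ _) f2
  have hN4 : N ≤ q ^ ((1:ℝ) / 4) := by
    apply Real.rpow_le_rpow_of_exponent_le hq1.le; linarith
  have hNt : 32 * t ≤ N := by
    rw [hN, Real.rpow_add hq0]; gcongr
  set r : ℝ := q ^ ((1:ℝ) / 4) with hr
  have hr4 : r ^ 4 = q := by
    rw [hr, ← Real.rpow_natCast, ← Real.rpow_mul hq0.le]; norm_num
  have hr0 : 0 < r := by positivity
  have hN0 : 0 < N := by linarith
  have ht0 : 0 < t := by linarith
  have hq16 : 16 * N ^ 3 < q := by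
    have : N ^ 3 ≤ r ^ 3 := by gcongr
    have h3 : 0 < r ^ 3 := by positivity
    have h4 : 17 * r ^ 3 ≤ r * r ^ 3 := mul_le_mul_of_nonneg_right f5 h3.le
    have h5 : r * r ^ 3 = q := by rw [← hr4]; ring
    linarith
  have hNN : N * 1 ≤ N * N := mul_le_mul_of_nonneg_left (by linarith) hN0.le
  have hq8 : 8 * N ^ 2 < q := by
    have h1 : N ^ 2 * 1 ≤ N ^ 2 * N := mul_le_mul_of_nonneg_left (by linarith) (by positivity)
    have h2 : N ^ 2 * N = N ^ 3 := by ring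
    have h3 : 0 < N ^ 2 := by positivity
    linarith
  refine ⟨by linarith, hq8, fun hall => ?_⟩
  -- parameters
  set T : ℕ := ⌈t⌉₊ with hT
  set H : ℕ := ⌊2 * N⌋₊ with hH
  have hT1 : t ≤ T := Nat.le_ceil _
  have hT2 : (T : ℝ) ≤ 2 * t := by
    have := Nat.ceil_lt_add_one ht0.le
    linarith
  have hH1 : (H : ℝ) ≤ 2 * N := Nat.floor_le (by positivity)
  have hH2 : N ≤ H := by
    have := Nat.lt_floor_add_one (2 * N)
    linarith
  have hT0 : 0 < T := by
    have : (0:ℝ) < T := by linarith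
    exact_mod_cast this
  set M : ℕ := H * H / T with hM
  have hMT : M * T ≤ H * H := Nat.div_mul_le_self _ _
  have hMT' : H * H < (M + 1) * T := by
    have := Nat.lt_div_mul_add hT0 (a := H * H)
    rw [add_mul, one_mul]; exact this
  have hMTr : (M : ℝ) * T ≤ H * H := by exact_mod_cast hMT
  have hMTr' : (H : ℝ) * H < (M + 1) * T := by exact_mod_cast hMT'
  set m0 : ℕ := M / 2 with hm0
  have hm1 : (M : ℝ) ≤ 2 * m0 + 1 := by
    have : M ≤ 2 * m0 + 1 := by omega
    exact_mod_cast this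
  have hXN : N ^ 2 ≤ (H : ℝ) * H := by
    rw [sq]; exact mul_le_mul hH2 hH2 hN0.le (by positivity)
  have hXN' : (H : ℝ) * H ≤ 4 * N ^ 2 := by
    calc (H : ℝ) * H ≤ (2 * N) * (2 * N) := mul_le_mul hH1 hH1 (by positivity) (by positivity)
      _ = 4 * N ^ 2 := by ring
  -- lower bound for m0
  have hz : N ^ 2 / (16 * t) ≤ m0 := by
    rw [div_le_iff₀ (by positivity)]
    have a1 : N ^ 2 ≤ (2 * m0 + 2) * (2 * t) := by
      calc N ^ 2 ≤ (M + 1) * T := by linarith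
        _ ≤ (2 * m0 + 2) * (2 * t) := by
          apply mul_le_mul _ hT2 (by positivity) (by positivity)
          linarith
    have a2 : 32 * t ≤ N ^ 2 := by rw [sq]; linarith
    linarith
  have hz2 : 2 * N ≤ N ^ 2 / (16 * t) := by
    rw [le_div_iff₀ (by positivity)]
    have h1 := mul_le_mul_of_nonneg_left hNt hN0.le
    calc 2 * N * (16 * t) = N * (32 * t) := by ring
      _ ≤ N * N := h1
      _ = N ^ 2 := by ring
  have hHm : H ≤ m0 := by
    have : (H : ℝ) ≤ m0 := by linarith
    exact_mod_cast this
  set B : Finset ℕ := (Finset.Ioc ⌊N⌋₊ (2 * ⌊N⌋₊)).filter Nat.Prime with hB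
  set Ms : Finset ℕ := (Finset.Ioc m0 (2 * m0)).filter Nat.Prime with hMs
  have hLc : N ^ (1 - ε) ≤ (B.card : ℝ) := hx0 N hNx
  have hKc : (N ^ 2 / (16 * t)) ^ (1 - ε) ≤ (Ms.card : ℝ) := by
    have := hx0 (m0 : ℝ) (by linarith)
    rw [Nat.floor_natCast] at this
    refine le_trans ?_ this
    apply Real.rpow_le_rpow (by positivity) hz (by linarith)
  have hL0 : (0:ℝ) < B.card := lt_of_lt_of_le (by positivity) hLc
  have hK0 : (0:ℝ) < Ms.card := lt_of_lt_of_le (by positivity) hKc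
  have hBprop : ∀ b ∈ B, b.Prime ∧ N < b ∧ (b : ℝ) ≤ 2 * N := by
    intro b hb
    simp only [hB, Finset.mem_filter, Finset.mem_Ioc] at hb
    refine ⟨hb.2, (Nat.floor_lt hN0.le).mp hb.1.1, ?_⟩
    have h1 : (b : ℝ) ≤ 2 * (⌊N⌋₊ : ℝ) := by exact_mod_cast hb.1.2
    have h2 := Nat.floor_le hN0.le
    linarith
  have hLX : 8 * (H * H) ≤ B.card ^ 3 := by
    have h1 : (N ^ (1 - ε)) ^ 3 ≤ (B.card : ℝ) ^ 3 := by gcongr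
    have h2 : N ^ ((5:ℝ) / 2) ≤ (N ^ (1 - ε)) ^ 3 := by
      rw [← Real.rpow_natCast, ← Real.rpow_mul hN0.le]
      apply Real.rpow_le_rpow_of_exponent_le (by linarith)
      push_cast; linarith
    have h3 : N ^ ((5:ℝ) / 2) = N ^ 2 * N ^ ((1:ℝ) / 2) := by
      rw [← Real.rpow_natCast, ← Real.rpow_add hN0]; norm_num
    have h4 : 32 ≤ N ^ ((1:ℝ) / 2) := by
      rw [← Real.sqrt_eq_rpow]
      apply Real.le_sqrt_of_sq_le; linarith
    have h5 : (8 * (H * H) : ℝ) ≤ (B.card : ℝ) ^ 3 := by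
      have h6 : 0 < N ^ 2 := by positivity
      have h7 := mul_le_mul_of_nonneg_left h4 h6.le
      linarith
    exact_mod_cast h5
  have c1 : (4 * k + 6) ^ 2 ≤ p := by
    have : ((4 * k + 6) ^ 2 : ℝ) ≤ (p : ℝ) := f6
    exact_mod_cast this
  have c2 : T < p := by
    have : (T : ℝ) < (p : ℝ) := by
      have h1 : t ≤ N := by linarith
      have h2 : N * N = N ^ 2 := by ring
      linarith
    exact_mod_cast this
  have c3 : 2 * (H * M) < p := by
    have h1 : (M : ℝ) * 2 ≤ M * T := by
      have : (2:ℝ) ≤ T := by linarith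
      gcongr
    have h2 : (2 * (H * M) : ℝ) < (p : ℝ) := by
      calc (2 * (H * M) : ℝ) = H * (M * 2) := by ring
        _ ≤ (2 * N) * (4 * N ^ 2) := by
          apply mul_le_mul hH1 _ (by positivity) (by positivity)
          linarith
        _ < p := by linarith [pow_pos hN0 3]
    exact_mod_cast h2
  have c4 : 2 * (H * H) < p := by
    have h2 : (2 * (H * H) : ℝ) < (p : ℝ) := by linarith
    exact_mod_cast h2
  have key := final_ineq p B Ms H (H * H) M T k hk c1 (fun b hb => (hBprop b hb).1)
    (fun b hb => Nat.le_floor (hBprop b hb).2.2) le_rfl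
    (by
      intro m hm
      simp only [hMs, Finset.mem_filter, Finset.mem_Ioc] at hm
      exact ⟨hm.2, by omega, by omega⟩)
    hMT c2 c3 c4
    (by
      intro b₁ h₁ b₂ h₂ b₃ h₃
      have g1 := hBprop b₁ h₁
      have g2 := hBprop b₂ h₂
      have g3 := hBprop b₃ h₃
      exact hall b₁ b₂ b₃ g1.1 g2.1 g3.1 g1.2.1 g1.2.2 g2.2.1 g2.2.2 g3.2.1 g3.2.2 hfact)
    (Finset.card_pos.mp (by exact_mod_cast hL0)) hLX
  have hTk : q ≤ (T : ℝ) ^ k := by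
    calc q = q ^ (1:ℝ) := (Real.rpow_one q).symm
      _ ≤ q ^ (η * k) := Real.rpow_le_rpow_of_exponent_le hq1.le hkη
      _ = t ^ k := by rw [ht, Real.rpow_mul hq0.le, Real.rpow_natCast]
      _ ≤ (T : ℝ) ^ k := by gcongr
  have s1 := alg_step k hk Ms.card T B.card ((H * H : ℕ) : ℝ) q hK0 (by linarith) hL0
    (by positivity) hq0.le hTk key
  have hA0 : 0 ≤ A := by positivity
  have s2 : (Ms.card : ℝ) * (B.card : ℝ) ^ (4 * k + 1) ≤ D * N ^ (4 * k - 2) * q := by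
    refine s1.trans ?_
    have hx : (2 * ((H * H : ℕ) : ℝ)) ≤ 8 * N ^ 2 := by push_cast; linarith
    have hx2 : (2 * ((H * H : ℕ) : ℝ)) ^ (2 * k - 1) ≤ (8 * N ^ 2) ^ (2 * k - 1) := by gcongr
    have hx3 : (8 * N ^ 2) ^ (2 * k - 1) = 8 ^ (2 * k - 1) * N ^ (4 * k - 2) := by
      rw [mul_pow, ← pow_mul]
      congr 2; omega
    rw [hx3] at hx2
    calc _ ≤ 4 ^ (2 * k) * (8 ^ (2 * k - 1) * N ^ (4 * k - 2)) * (A * q) := by gcongr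
      _ = _ := by rw [hD]; ring
  have s3 := pow_step k hk _ _ N t q D ε (by linarith) (by linarith) hε0.le hKc hLc s2
  rw [hεk] at s3
  have hD0 : 0 ≤ D := by positivity
  have hNη : N ^ η ≤ t := by
    apply Real.rpow_le_rpow hN0.le _ hη.le
    calc N ≤ r := hN4
      _ ≤ q ^ (1:ℝ) := Real.rpow_le_rpow_of_exponent_le hq1.le (by norm_num)
      _ = q := Real.rpow_one q
  have hN5 : N ^ 5 = q * t ^ 2 * q ^ (3 * η) := by
    have h1 : N ^ 5 = q ^ (1 + (η * 2 + 3 * η)) := by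
      rw [hN, ← Real.rpow_natCast, ← Real.rpow_mul hq0.le]
      congr 1; push_cast; ring
    rw [h1, Real.rpow_add hq0, Real.rpow_add hq0, Real.rpow_one, Real.rpow_mul hq0.le, ← ht]
    norm_cast
    ring
  have s4 : q * t ^ 2 * q ^ (3 * η) ≤ q * t ^ 2 * (16 * D) := by
    rw [← hN5]
    refine s3.trans ?_
    calc 16 * D * t * q * N ^ η ≤ 16 * D * t * q * t := by gcongr
      _ = _ := by ring
  have s5 := le_of_mul_le_mul_left s4 (by positivity)
  linarith

/-- Corollary 2.12: for large primes `p` there are primes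
`p₁, p₂, p₃ ∼ p^{1/5+η}` with `p₁·p₂ + p₃` a quadratic non-residue mod `p`. -/
theorem primes_product_plus_prime_nonresidue (η : ℝ) (hη : 0 < η) (hη' : η < 1 / 20) :
    ∃ p₀ : ℕ, ∀ (p : ℕ), p.Prime → p₀ ≤ p →
      ∃ p₁ p₂ p₃ : ℕ, p₁.Prime ∧ p₂.Prime ∧ p₃.Prime ∧
        (p : ℝ) ^ ((1 : ℝ) / 5 + η) < (p₁ : ℝ) ∧ (p₁ : ℝ) ≤ 2 * (p : ℝ) ^ ((1 : ℝ) / 5 + η) ∧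
        (p : ℝ) ^ ((1 : ℝ) / 5 + η) < (p₂ : ℝ) ∧ (p₂ : ℝ) ≤ 2 * (p : ℝ) ^ ((1 : ℝ) / 5 + η) ∧
        (p : ℝ) ^ ((1 : ℝ) / 5 + η) < (p₃ : ℝ) ∧ (p₃ : ℝ) ≤ 2 * (p : ℝ) ^ ((1 : ℝ) / 5 + η) ∧
        IsQuadNonRes p ((p₁ : ℤ) * p₂ + p₃) := by
  obtain ⟨p₀, hp₀⟩ := main_contra η hη hη'
  refine ⟨p₀, fun p hp hpp => ?_⟩
  obtain ⟨hN1, hN2, hno⟩ := hp₀ p hp hpp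
  by_contra hcon
  apply hno
  intro b₁ b₂ b₃ h₁ h₂ h₃ l₁ u₁ l₂ u₂ l₃ u₃ hf
  have hres : ¬ IsQuadNonRes p ((b₁ : ℤ) * b₂ + b₃) := fun h =>
    hcon ⟨b₁, b₂, b₃, h₁, h₂, h₃, l₁, u₁, l₂, u₂, l₃, u₃, h⟩
  have hlt : b₁ * b₂ + b₃ < p := by
    have : ((b₁ : ℝ) * b₂ + b₃) < p := by nlinarith
    exact_mod_cast this
  have hpos : 0 < b₁ * b₂ + b₃ := by have := h₃.pos; omega
  have hnd : ¬ p ∣ b₁ * b₂ + b₃ := Nat.not_dvd_of_pos_of_lt hpos hlt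
  have hne : ((b₁ * b₂ + b₃ : ℕ) : ZMod p) ≠ 0 := by
    rwa [Ne, ZMod.natCast_eq_zero_iff]
  rw [quadraticChar_one_iff_isSquare hne]
  unfold IsQuadNonRes at hres
  rw [not_and, not_not] at hres
  obtain ⟨y, hy⟩ := hres (by
    intro h
    apply hnd
    exact_mod_cast h)
  refine ⟨(y : ZMod p), ?_⟩
  have := (ZMod.intCast_eq_intCast_iff (y ^ 2) ((b₁ : ℤ) * b₂ + b₃) p).mpr hy
  push_cast at this ⊢
  rw [← this]; ring
end
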